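/- arXiv:2110.03077 — 2 statements merged into one kernel-verified Lean document; each statement's English description precedes it below -/
import Mathlib

section
/- Let n be an odd positive integer. Then the complex dimension of the diagonal coinvariant ring R_W of the Weyl group W(B_n) satisfies dim_ℂ R_W ≥ (2n+1)^n + (n-1)(n-3)/4 (note (n-1)(n-3) is divisible by 4 when n is odd). -/
open MvPolynomial

/-- The action of the signed permutation `(ε, σ) ∈ W(Bₙ)` on the polynomial ring
`ℂ[x₁,…,xₙ,y₁,…,yₙ]`, sending `xᵢ ↦ εᵢ x_{σ(i)}` and `yᵢ ↦ εᵢ y_{σ(i)}`. -/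
noncomputable def bAct (n : ℕ) (ε : Fin n → ℤˣ) (σ : Equiv.Perm (Fin n)) :
    MvPolynomial (Fin n ⊕ Fin n) ℂ →ₐ[ℂ] MvPolynomial (Fin n ⊕ Fin n) ℂ :=
  aeval (Sum.elim
    (fun i => (((ε i : ℤ) : ℂ)) • X (Sum.inl (σ i)))
    (fun i => (((ε i : ℤ) : ℂ)) • X (Sum.inr (σ i))))

/-- The ideal `I_W` generated by the `W(Bₙ)`-invariant polynomials of positive degree
(equivalently, by the invariant polynomials with zero constant term). -/
noncomputable def diagIdeal (n : ℕ) : Ideal (MvPolynomial (Fin n ⊕ Fin n) ℂ) :=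
  Ideal.span {f | (∀ ε σ, bAct n ε σ f = f) ∧ constantCoeff f = 0}

/-!
The lower bound `(2n+1)^n` comes from a representation. For the parameter `-(2n+1)/2`, the rank-one
Dunkl operator `y` on `K[x]` maps `x^(2n+1)` to zero, so that `x` and `y` act on the space with
basis `e₀, …, e₂ₙ`, with commutator `1 - (2n+1) S` for the parity operator `S`. On the `n`-fold
tensor power `L` act the coordinate operators `xᵢ`, `yᵢ`. Let `δ ∈ L` be the Slater determinant of
the `n` odd vectors `e₁, e₃, …, e₂ₙ₋₁`. Since `L` is irreducible, `ψ : f ↦ f(x, y) δ`, with the `y`s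
acting first, is onto. The odd vectors span an eigenspace of `S`, which is stable under operators of
even degree, so the polarized power sums generating `I_W` act on `δ` by scalars. The leading terms
of the elements of `ker ψ` therefore span a subspace of codimension `(2n+1)^n` containing `I_W`.

The improvement replaces the isotypic part of the character `χ(ε, σ) = ∏ εᵢ` in this count. In `L`
it consists of the alternating functions of `n` even indices among `n + 1`, and has dimension at
most `n + 1`. In the dual of `R_W` it contains the polynomials `φ` of degree `n` in variables
`z_{(a, b)}` with `a + b` odd, paired with `R` by
`⟨φ, ∏ xᵢ^aᵢ yᵢ^bᵢ⟩ = (∏ ∂/∂z_{(aᵢ, bᵢ)}) φ (0)`, that are killed by all derivations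
`D_g : z_p ↦ z_{p - g}` for even `g ≠ 0`. These form a graded ring. On the generating series
`∑ z_{(i, j)} u^i v^j` the derivation `D_g` is multiplication by `u^g₁ v^g₂`, so it kills the value
of the cubic form at the zero `(z₀₁, -z₁₀)` of the linear form. Together with the linear variables
and two corrections of the quintic form, in degree seven, this value produces
`n + 1 + (n-1)(n-3)/4` independent elements of degree `n`.
-/

namespace DiagonalCoinvariants

section Filtration

variable {σ K M Q : Type*} [Field K] [AddCommGroup M] [Module K M] [AddCommGroup Q] [Module K Q]

variable (σ K) in
/-- The space of polynomials of total degree `< d`: the (strict) degree filtration of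
`MvPolynomial σ K`, with `degreeLT σ K 0 = ⊥`. -/
noncomputable def degreeLT (d : ℕ) : Submodule K (MvPolynomial σ K) :=
  restrictSupport K {s | s.degree < d}

/-- The polynomials whose leading forms vanish in the graded space associated with the image under
`ψ` of the degree filtration: every homogeneous component of degree `d` is sent by `ψ` into the
image of the polynomials of degree `< d`. -/
noncomputable def grKer (ψ : MvPolynomial σ K →ₗ[K] M) : Submodule K (MvPolynomial σ K) :=
  ⨅ d, ((degreeLT σ K d).map ψ).comap (ψ ∘ₗ homogeneousComponent d)

theorem mem_grKer {ψ : MvPolynomial σ K →ₗ[K] M} {f : MvPolynomial σ K} :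
    f ∈ grKer ψ ↔ ∀ d, ψ (homogeneousComponent d f) ∈ (degreeLT σ K d).map ψ := by
  simp only [grKer, Submodule.mem_iInf, Submodule.mem_comap, LinearMap.comp_apply]

theorem degreeLT_eq_span (d : ℕ) :
    degreeLT σ K d = Submodule.span K ((monomial · 1) '' {s | s.degree < d}) :=
  restrictSupport_eq_span K _

theorem monomial_mem_degreeLT {s : σ →₀ ℕ} {d : ℕ} (hs : s.degree < d) (c : K) :
    monomial s c ∈ degreeLT σ K d := by
  classical
  exact (monomial_mem_restrictSupport K).2 (Or.inl hs)

theorem degreeLT_mono {d e : ℕ} (h : d ≤ e) : degreeLT σ K d ≤ degreeLT σ K e :=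
  restrictSupport_mono K fun _ hs => lt_of_lt_of_le hs h

theorem exists_mem_degreeLT (f : MvPolynomial σ K) : ∃ d, f ∈ degreeLT σ K d :=
  ⟨f.totalDegree + 1, (mem_restrictSupport_iff K).2 fun _ hs =>
    Nat.lt_succ_of_le (le_totalDegree hs)⟩

theorem homogeneousComponent_mem_degreeLT (d : ℕ) (f : MvPolynomial σ K) :
    homogeneousComponent d f ∈ degreeLT σ K (d + 1) := by
  classical
  refine (mem_restrictSupport_iff K).2 fun s hs => Nat.lt_succ_of_le ?_
  rw [Finset.mem_coe, mem_support_iff, coeff_homogeneousComponent, Ne, ite_eq_right_iff,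
    Classical.not_imp] at hs
  exact hs.1.le

theorem sub_homogeneousComponent_mem_degreeLT {d : ℕ} {f : MvPolynomial σ K}
    (hf : f ∈ degreeLT σ K (d + 1)) : f - homogeneousComponent d f ∈ degreeLT σ K d := by
  classical
  refine (mem_restrictSupport_iff K).2 fun s hs => ?_
  rw [Finset.mem_coe, mem_support_iff, coeff_sub, coeff_homogeneousComponent] at hs
  have hsf : coeff s f ≠ 0 := fun h => hs (by simp [h])
  have hlt : s.degree < d + 1 := (mem_restrictSupport_iff K).1 hf (mem_support_iff.2 hsf)
  exact lt_of_le_of_ne (Nat.le_of_lt_succ hlt) fun h => hs (by simp [h])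

/-- A complement of `I` spanned by homogeneous elements already has the whole image of `ψ`, since
modulo terms of lower degree every form is congruent to one in the complement. -/
theorem map_degreeLT_le_map {ψ : MvPolynomial σ K →ₗ[K] M} {B I : Submodule K (MvPolynomial σ K)}
    (hB : ∀ f ∈ B, ∀ d, homogeneousComponent d f ∈ B) (hBI : B ⊔ I = ⊤) (hI : I ≤ grKer ψ) (d : ℕ) :
    (degreeLT σ K d).map ψ ≤ B.map ψ := by
  induction d with
  | zero =>
    rw [degreeLT_eq_span]
    simp
  | succ d ih =>
    rintro _ ⟨f, hf, rfl⟩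
    obtain ⟨a, ha, b, hb, rfl⟩ := Submodule.mem_sup.1 (hBI.ge (Submodule.mem_top (x := f)))
    have hlow := ih ⟨_, sub_homogeneousComponent_mem_degreeLT hf, rfl⟩
    have hlead : ψ (homogeneousComponent d (a + b)) ∈ B.map ψ := by
      rw [map_add, map_add]
      exact add_mem ⟨_, hB a ha d, rfl⟩ (ih (mem_grKer.1 (hI hb) d))
    simpa using add_mem hlow hlead

theorem homogeneousComponent_mem_span {s : Set (MvPolynomial σ K)}
    (hs : ∀ f ∈ s, ∃ d, f.IsHomogeneous d) {f : MvPolynomial σ K} (hf : f ∈ Submodule.span K s)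
    (d : ℕ) : homogeneousComponent d f ∈ Submodule.span K s := by
  induction hf using Submodule.span_induction with
  | mem f hf =>
    obtain ⟨e, he⟩ := hs f hf
    rw [homogeneousComponent_of_mem he]
    split_ifs with h
    exacts [Submodule.subset_span hf, zero_mem _]
  | zero => simp
  | add f g _ _ hf hg => simpa using add_mem hf hg
  | smul c f _ hf => simpa using Submodule.smul_mem _ c hf

theorem exists_graded_sup_eq_top (I : Submodule K (MvPolynomial σ K))
    [Module.Finite K (MvPolynomial σ K ⧸ I)] :
    ∃ B : Submodule K (MvPolynomial σ K), (∀ f ∈ B, ∀ d, homogeneousComponent d f ∈ B) ∧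
      B ⊔ I = ⊤ ∧ Module.Finite K B ∧
      Module.finrank K B ≤ Module.finrank K (MvPolynomial σ K ⧸ I) := by
  have hspan : Submodule.span K (I.mkQ '' {f | ∃ d, f.IsHomogeneous d}) = ⊤ := by
    rw [Submodule.span_image, eq_top_iff, ← Submodule.range_mkQ I, ← Submodule.map_top]
    refine Submodule.map_mono fun f _ => ?_
    rw [← sum_homogeneousComponent f]
    exact sum_mem fun d _ => Submodule.subset_span ⟨d, homogeneousComponent_isHomogeneous d f⟩
  obtain ⟨v, hv, hvspan, -⟩ := Submodule.exists_fun_fin_finrank_span_eq K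
    (I.mkQ '' {f : MvPolynomial σ K | ∃ d, f.IsHomogeneous d})
  choose b hbhom hbv using hv
  have hbspan : (Submodule.span K (Set.range b)).map I.mkQ = ⊤ := by
    rw [← Submodule.span_image, ← Set.range_comp, show I.mkQ ∘ b = v from funext hbv, hvspan, hspan]
  refine ⟨Submodule.span K (Set.range b), fun f hf => homogeneousComponent_mem_span ?_ hf, ?_,
    Module.Finite.span_of_finite K (Set.finite_range b), ?_⟩
  · rintro _ ⟨i, rfl⟩
    exact hbhom i
  · have := Submodule.comap_map_eq I.mkQ (Submodule.span K (Set.range b))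
    rwa [hbspan, Submodule.comap_top, Submodule.ker_mkQ, eq_comm] at this
  · exact (finrank_range_le_card (R := K) b).trans (by rw [Fintype.card_fin, hspan, finrank_top])

theorem finrank_le_finrank_quotient {ψ : MvPolynomial σ K →ₗ[K] M} (hψ : Function.Surjective ψ)
    {I : Submodule K (MvPolynomial σ K)} [Module.Finite K (MvPolynomial σ K ⧸ I)]
    (hI : I ≤ grKer ψ) : Module.finrank K M ≤ Module.finrank K (MvPolynomial σ K ⧸ I) := by
  obtain ⟨B, hB, hBI, _, hrank⟩ := exists_graded_sup_eq_top I
  have htop : B.map ψ = ⊤ := by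
    refine eq_top_iff.2 fun m _ => ?_
    obtain ⟨f, rfl⟩ := hψ m
    obtain ⟨d, hd⟩ := exists_mem_degreeLT f
    exact map_degreeLT_le_map hB hBI hI d ⟨f, hd, rfl⟩
  calc Module.finrank K M = Module.finrank K (B.map ψ) := by rw [htop, finrank_top]
    _ ≤ Module.finrank K B := Submodule.finrank_map_le ψ B
    _ ≤ Module.finrank K (MvPolynomial σ K ⧸ I) := hrank

/-- If `e` maps onto the part of `M` inside `U`, without changing `Λ`, then the quotient `M ⧸ U` can
be detected on polynomials killed by `Λ`, so that `M ⧸ U` and `Q` are counted independently. -/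
theorem finrank_add_finrank_le {ψ : MvPolynomial σ K →ₗ[K] M} (hψ : Function.Surjective ψ)
    {I : Submodule K (MvPolynomial σ K)} [Module.Finite K (MvPolynomial σ K ⧸ I)]
    (hIψ : I ≤ grKer ψ) (hI : ∀ f ∈ I, ∀ d, homogeneousComponent d f ∈ I) [Module.Finite K M]
    [Module.Finite K Q] {U : Submodule K M} {e : MvPolynomial σ K →ₗ[K] MvPolynomial σ K}
    (he : ∀ d, ∀ f ∈ degreeLT σ K d, e f ∈ degreeLT σ K d) (heU : ∀ f, ψ (e f) ∈ U)
    {Λ : MvPolynomial σ K →ₗ[K] Q} (hΛ : Function.Surjective Λ) (hΛe : ∀ f, Λ (e f) = Λ f)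
    (hΛI : ∀ f ∈ I, Λ f = 0) :
    Module.finrank K M + Module.finrank K Q ≤
      Module.finrank K (MvPolynomial σ K ⧸ I) + Module.finrank K U := by
  let S : MvPolynomial σ K →ₗ[K] (M ⧸ U) × Q := (U.mkQ ∘ₗ ψ).prod Λ
  have hmkQ_e (f) : U.mkQ (ψ (e f)) = 0 := (Submodule.Quotient.mk_eq_zero U).2 (heU f)
  have hS : Function.Surjective S := by
    rintro ⟨m, q⟩
    obtain ⟨f, hf⟩ := (U.mkQ_surjective.comp hψ) m
    obtain ⟨g, rfl⟩ := hΛ q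
    exact ⟨f - e f + e g, Prod.ext (by simpa [S, -Submodule.mkQ_apply, hmkQ_e] using hf)
      (by simp [S, hΛe])⟩
  have hIS : I ≤ grKer S := fun f hf => mem_grKer.2 fun d => by
    obtain ⟨g, hg, hgf⟩ := mem_grKer.1 (hIψ hf) d
    exact ⟨g - e g, sub_mem hg (he d g hg),
      Prod.ext (by simp [S, -Submodule.mkQ_apply, hmkQ_e, hgf])
        (by simp [S, hΛe, hΛI _ (hI f hf d)])⟩
  have hle := finrank_le_finrank_quotient hS hIS
  rw [Module.finrank_prod] at hle
  have := U.finrank_quotient_add_finrank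
  omega

end Filtration

section EmbeddingSum

variable {A ι : Type*} [CommRing A]

theorem prod_update_mul {r : ℕ} (f : Fin r → ι → A) (g : ι → A) (s : Fin r → ι) (j : Fin r) :
    ∏ l, Function.update f j (f j * g) l (s l) = g (s j) * ∏ l, f l (s l) := by
  rw [← Finset.mul_prod_erase _ _ (Finset.mem_univ j),
    ← Finset.mul_prod_erase _ (fun l => f l (s l)) (Finset.mem_univ j), Function.update_self,
    Pi.mul_apply, ← mul_assoc, mul_comm (g _)]
  congr 1
  exact Finset.prod_congr rfl fun l hl => by rw [Function.update_of_ne (Finset.ne_of_mem_erase hl)]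

variable [Fintype ι]

/-- The sum of `∏ j, f j (s j)` over all injective choices `s` of indices: the unnormalised
monomial symmetric function attached to the families `f j`. -/
noncomputable def embeddingSum {r : ℕ} (f : Fin r → ι → A) : A :=
  ∑ s : Fin r ↪ ι, ∏ j, f j (s j)

theorem embeddingSum_eq_sum_compl_range [DecidableEq ι] {r : ℕ} (f : Fin (r + 1) → ι → A) :
    embeddingSum f = ∑ s : Fin r ↪ ι, ∑ i : {i // i ∉ Set.range s},
      f 0 i * ∏ j, Fin.tail f j (s j) := by
  rw [← Fintype.sum_sigma' (f := fun (s : Fin r ↪ ι) (i : {i // i ∉ Set.range s}) =>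
    f 0 i * ∏ j, Fin.tail f j (s j))]
  refine Fintype.sum_equiv (Equiv.embeddingFinSucc r ι) _ _ fun s => ?_
  rw [Fin.prod_univ_succ]
  simp [Equiv.embeddingFinSucc_fst, Equiv.embeddingFinSucc_snd, Fin.tail]

theorem embeddingSum_succ {r : ℕ} (f : Fin (r + 1) → ι → A) :
    embeddingSum f = (∑ i, f 0 i) * embeddingSum (Fin.tail f) -
      ∑ j, embeddingSum (Function.update (Fin.tail f) j (Fin.tail f j * f 0)) := by
  classical
  rw [embeddingSum_eq_sum_compl_range, eq_sub_iff_add_eq]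
  simp only [embeddingSum, prod_update_mul]
  rw [Finset.sum_mul_sum, Finset.sum_comm, Finset.sum_comm (s := Finset.univ (α := ι)),
    ← Finset.sum_add_distrib]
  refine Finset.sum_congr rfl fun s _ => ?_
  rw [← Fintype.sum_subtype_add_sum_subtype (· ∈ Set.range s), add_comm]
  refine congrArg₂ (· + ·) ?_ (Finset.sum_congr (by ext; simp) fun _ _ => rfl)
  exact ((Equiv.ofInjective s s.injective).sum_comp
    fun i => f 0 i * ∏ j, Fin.tail f j (s j)).trans (Finset.sum_congr (by ext; simp) fun _ _ => rfl)

theorem embeddingSum_mem {I : Ideal A} {S T : Set (ι → A)} (hS : ∀ s ∈ S, ∀ t ∈ S, s * t ∈ S)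
    (hST : ∀ s ∈ S, ∀ t ∈ T, s * t ∈ T) (hT : ∀ t ∈ T, ∑ i, t i ∈ I) {r : ℕ} (f : Fin r → ι → A)
    (hf : ∀ j, f j ∈ S) {j : Fin r} (hj : f j ∈ T) : embeddingSum f ∈ I := by
  induction r with
  | zero => exact j.elim0
  | succ r ih =>
    have hupd (l k) : Function.update (Fin.tail f) l (Fin.tail f l * f 0) k ∈ S := by
      obtain rfl | hkl := eq_or_ne k l
      · simpa [Fin.tail] using hS _ (hf _) _ (hf _)
      · simpa [Fin.tail, hkl] using hf _
    rw [embeddingSum_succ]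
    refine sub_mem ?_ (sum_mem fun l _ => ?_)
    · induction j using Fin.cases with
      | zero => exact I.mul_mem_right _ (hT _ hj)
      | succ j => exact I.mul_mem_left _ (ih (Fin.tail f) (fun k => hf _) hj)
    · induction j using Fin.cases with
      | zero => exact ih _ (hupd l) (j := l) (by simpa [Fin.tail] using hST _ (hf l.succ) _ hj)
      | succ j =>
        refine ih _ (hupd l) (j := j) ?_
        obtain rfl | hjl := eq_or_ne j l
        · simpa [Fin.tail, mul_comm] using hST _ (hf 0) _ hj
        · simpa [Fin.tail, hjl] using hj

end EmbeddingSum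

section EvenPowerSums

attribute [local instance] MvPolynomial.gradedAlgebra

variable {K : Type*} [Field K] {n : ℕ}

/-- The exponents of `x i` and `y i` in a monomial, where `x i = X (Sum.inl i)` and
`y i = X (Sum.inr i)`. -/
def bidegree (s : Fin n ⊕ Fin n →₀ ℕ) (i : Fin n) : ℕ × ℕ := (s (Sum.inl i), s (Sum.inr i))

/-- The monomial `x i ^ a * y i ^ b`, where `g = (a, b)`. -/
noncomputable def pairMonomial (K : Type*) [Field K] (g : ℕ × ℕ) (i : Fin n) :
    MvPolynomial (Fin n ⊕ Fin n) K :=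
  X (Sum.inl i) ^ g.1 * X (Sum.inr i) ^ g.2

/-- The polarized power sum `∑ i, x i ^ a * y i ^ b`, where `g = (a, b)`. -/
noncomputable def polarizedPowerSum (K : Type*) [Field K] (n : ℕ) (g : ℕ × ℕ) :
    MvPolynomial (Fin n ⊕ Fin n) K :=
  ∑ i, pairMonomial K g i

/-- The bidegrees of the nonconstant polarized power sums that are invariant under sign changes. -/
def evenBidegrees : Set (ℕ × ℕ) := {g | Even (g.1 + g.2) ∧ g ≠ 0}

/-- The ideal generated by the nonconstant polarized power sums of even degree. -/
noncomputable def evenPowerSumIdeal (K : Type*) [Field K] (n : ℕ) :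
    Ideal (MvPolynomial (Fin n ⊕ Fin n) K) :=
  Ideal.span (polarizedPowerSum K n '' evenBidegrees)

theorem pairMonomial_add (g h : ℕ × ℕ) :
    (pairMonomial K (g + h) : Fin n → _) = pairMonomial K g * pairMonomial K h := by
  ext1 i
  simp only [pairMonomial, Prod.fst_add, Prod.snd_add, pow_add, Pi.mul_apply]
  ring

theorem monomial_eq_prod_pairMonomial (s : Fin n ⊕ Fin n →₀ ℕ) :
    monomial s (1 : K) = ∏ i, pairMonomial K (bidegree s i) i := by
  rw [monomial_eq, Finsupp.prod_fintype _ _ (by simp), Fintype.prod_sum_type]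
  simp [pairMonomial, bidegree, Finset.prod_mul_distrib]

theorem pairMonomial_eq_monomial (g : ℕ × ℕ) (i : Fin n) : pairMonomial K g i =
    monomial (Finsupp.single (Sum.inl i) g.1 + Finsupp.single (Sum.inr i) g.2) 1 := by
  simp [pairMonomial, X_pow_eq_monomial, monomial_mul]

theorem isHomogeneous_polarizedPowerSum (g : ℕ × ℕ) :
    (polarizedPowerSum K n g).IsHomogeneous (g.1 + g.2) :=
  IsHomogeneous.sum _ _ _ fun _ _ => (isHomogeneous_X_pow _ _).mul (isHomogeneous_X_pow _ _)

theorem homogeneousComponent_mem_evenPowerSumIdeal {f : MvPolynomial (Fin n ⊕ Fin n) K}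
    (hf : f ∈ evenPowerSumIdeal K n) (d : ℕ) :
    homogeneousComponent d f ∈ evenPowerSumIdeal K n := by
  have hhom : (evenPowerSumIdeal K n).IsHomogeneous (homogeneousSubmodule (Fin n ⊕ Fin n) K) :=
    Ideal.homogeneous_span _ _ <| by
      rintro _ ⟨g, -, rfl⟩
      exact ⟨_, isHomogeneous_polarizedPowerSum g⟩
  exact homogeneousComponent_mem_of_mem hhom hf d

theorem sum_rename_monomial (s : Fin n ⊕ Fin n →₀ ℕ) :
    ∑ σ : Equiv.Perm (Fin n), rename (Sum.map σ σ) (monomial s (1 : K)) =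
      embeddingSum fun i => pairMonomial K (bidegree s i) := by
  refine Fintype.sum_equiv (Equiv.embeddingEquivOfFinite (Fin n)).symm _ _ fun σ => ?_
  rw [monomial_eq_prod_pairMonomial, map_prod]
  refine Finset.prod_congr rfl fun i _ => ?_
  simp only [pairMonomial, map_mul, map_pow, rename_X]
  rfl

theorem sum_rename_monomial_mem {s : Fin n ⊕ Fin n →₀ ℕ} (hs : s ≠ 0)
    (heven : ∀ i, Even (s (Sum.inl i) + s (Sum.inr i))) :
    ∑ σ : Equiv.Perm (Fin n), rename (Sum.map σ σ) (monomial s (1 : K)) ∈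
      evenPowerSumIdeal K n := by
  have hadd (g h : ℕ × ℕ) (hg : Even (g.1 + g.2)) (hh : Even (h.1 + h.2)) :
      Even ((g + h).1 + (g + h).2) := by
    simpa [add_add_add_comm] using hg.add hh
  obtain ⟨i, hi⟩ : ∃ i, bidegree s i ≠ 0 := by
    by_contra! h
    exact hs (Finsupp.ext (Sum.rec (fun i => congrArg Prod.fst (h i))
      fun i => congrArg Prod.snd (h i)))
  rw [sum_rename_monomial]
  refine embeddingSum_mem (S := pairMonomial K '' {g | Even (g.1 + g.2)})
    (T := pairMonomial K '' evenBidegrees) ?_ ?_ ?_ _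
    (fun i => Set.mem_image_of_mem _ (heven i)) (Set.mem_image_of_mem _ ⟨heven i, hi⟩)
  · rintro _ ⟨g, hg, rfl⟩ _ ⟨h, hh, rfl⟩
    exact ⟨g + h, hadd g h hg hh, pairMonomial_add g h⟩
  · rintro _ ⟨g, hg, rfl⟩ _ ⟨h, ⟨hh, h0⟩, rfl⟩
    exact ⟨g + h, ⟨hadd g h hg hh, fun h' => h0 (add_eq_zero.1 h').2⟩, pairMonomial_add g h⟩
  · rintro _ ⟨g, hg, rfl⟩
    exact Ideal.subset_span ⟨g, hg, rfl⟩

/-- An invariant is its own average over the symmetric group, and the orbit sums of monomials are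
polynomials in the power sums. -/
theorem mem_evenPowerSumIdeal_of_rename_eq [CharZero K] {h : MvPolynomial (Fin n ⊕ Fin n) K}
    (hsymm : ∀ σ : Equiv.Perm (Fin n), rename (Sum.map σ σ) h = h)
    (heven : ∀ s ∈ h.support, ∀ i, Even (s (Sum.inl i) + s (Sum.inr i)))
    (h0 : constantCoeff h = 0) : h ∈ evenPowerSumIdeal K n := by
  have hn : (n.factorial : K) ≠ 0 := Nat.cast_ne_zero.2 n.factorial_ne_zero
  have havg : h = C (n.factorial : K)⁻¹ * ∑ σ : Equiv.Perm (Fin n), rename (Sum.map σ σ) h := by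
    simp_rw [hsymm]
    rw [Finset.sum_const, Finset.card_univ, Fintype.card_perm, Fintype.card_fin,
      ← Nat.cast_smul_eq_nsmul K, ← smul_eq_C_mul, smul_smul, inv_mul_cancel₀ hn, one_smul]
  rw [havg, h.as_sum]
  simp_rw [map_sum]
  rw [Finset.sum_comm]
  refine Ideal.mul_mem_left _ _ (sum_mem fun s hs => ?_)
  have hs0 : s ≠ 0 := by
    rintro rfl
    exact mem_support_iff.1 hs h0
  have hC : monomial s (coeff s h) = C (coeff s h) * monomial s 1 := by simp [C_mul_monomial]
  simp_rw [hC, map_mul, ← algebraMap_eq, AlgHom.commutes]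
  rw [← Finset.mul_sum]
  exact Ideal.mul_mem_left _ _ (sum_rename_monomial_mem hs0 (heven s hs))

end EvenPowerSums

section DiagIdeal

variable {n : ℕ}

theorem coeff_aeval_smul_X {σ R : Type*} [CommSemiring R] (c : σ → R) (f : MvPolynomial σ R)
    (s : σ →₀ ℕ) : coeff s (aeval (fun j => c j • (X j : MvPolynomial σ R)) f) =
      (s.prod fun j k => c j ^ k) * coeff s f := by
  classical
  induction f using MvPolynomial.induction_on' with
  | monomial u a =>
    have hmon : aeval (fun j => c j • (X j : MvPolynomial σ R)) (monomial u a) =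
        monomial u ((u.prod fun j k => c j ^ k) * a) := by
      rw [aeval_monomial, monomial_eq (s := u)]
      simp only [algebraMap_eq, smul_eq_C_mul, mul_pow, map_mul, map_finsuppProd, map_pow,
        Finsupp.prod_mul]
      ring
    rw [hmon, coeff_monomial, coeff_monomial]
    split_ifs with h
    · rw [h]
    · rw [mul_zero]
  | add p q hp hq => rw [map_add, coeff_add, coeff_add, hp, hq, mul_add]

theorem bAct_one (σ : Equiv.Perm (Fin n)) : bAct n 1 σ = rename (Sum.map σ σ) :=
  algHom_ext <| by rintro (i | i) <;> simp [bAct]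

theorem bAct_perm_one (ε : Fin n → ℤˣ) : bAct n ε 1 =
    aeval fun j => Sum.elim (fun i => ((ε i : ℤ) : ℂ)) (fun i => ((ε i : ℤ) : ℂ)) j • X j :=
  algHom_ext <| by rintro (i | i) <;> simp [bAct]

theorem even_of_bAct_eq {h : MvPolynomial (Fin n ⊕ Fin n) ℂ} (hh : ∀ ε, bAct n ε 1 h = h)
    {s : Fin n ⊕ Fin n →₀ ℕ} (hs : s ∈ h.support) (i : Fin n) :
    Even (s (Sum.inl i) + s (Sum.inr i)) := by
  let ε : Fin n → ℤˣ := Function.update 1 i (-1)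
  have hcoeff := congrArg (coeff s) (hh ε)
  have hsign : (s.prod fun j k =>
      Sum.elim (fun i => ((ε i : ℤ) : ℂ)) (fun i => ((ε i : ℤ) : ℂ)) j ^ k) =
        (-1) ^ (s (Sum.inl i) + s (Sum.inr i)) := by
    rw [Finsupp.prod_fintype _ _ (by simp), Fintype.prod_sum_type, Finset.prod_eq_single i,
      Finset.prod_eq_single i]
    · simp [ε, pow_add]
    all_goals simp +contextual [ε]
  rw [bAct_perm_one, coeff_aeval_smul_X, hsign] at hcoeff
  by_contra hodd
  rw [(Nat.not_even_iff_odd.1 hodd).neg_one_pow, neg_one_mul, neg_eq_self] at hcoeff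
  exact mem_support_iff.1 hs hcoeff

theorem bAct_pairMonomial (ε : Fin n → ℤˣ) (σ : Equiv.Perm (Fin n)) {g : ℕ × ℕ}
    (hg : Even (g.1 + g.2)) (i : Fin n) :
    bAct n ε σ (pairMonomial ℂ g i) = pairMonomial ℂ g (σ i) := by
  have hε : ((ε i : ℤ) : ℂ) ^ g.1 * ((ε i : ℤ) : ℂ) ^ g.2 = 1 := by
    rw [← pow_add]
    obtain h | h := Int.units_eq_one_or (ε i) <;> simp [h, hg.neg_one_pow]
  simp only [pairMonomial, bAct, map_mul, map_pow, aeval_X, Sum.elim_inl, Sum.elim_inr, smul_pow,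
    smul_mul_smul_comm, hε, one_smul]

theorem diagIdeal_eq_evenPowerSumIdeal (n : ℕ) : diagIdeal n = evenPowerSumIdeal ℂ n := by
  refine le_antisymm (Ideal.span_le.2 ?_) (Ideal.span_le.2 ?_)
  · rintro h ⟨hinv, h0⟩
    exact mem_evenPowerSumIdeal_of_rename_eq (fun σ => by rw [← bAct_one, hinv])
      (fun s hs => even_of_bAct_eq (fun ε => hinv ε 1) hs) h0
  · rintro _ ⟨g, ⟨hg, h0⟩, rfl⟩
    refine Ideal.subset_span ⟨fun ε σ => ?_, ?_⟩
    · rw [polarizedPowerSum, map_sum]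
      simp_rw [bAct_pairMonomial ε σ hg]
      exact Equiv.sum_comp σ _
    · refine (isHomogeneous_polarizedPowerSum g).coeff_eq_zero fun h => h0 ?_
      rw [map_zero, eq_comm, add_eq_zero] at h
      exact Prod.ext h.1 h.2

/-- The coefficients of `∏ i, (T - v i ^ 2)` other than the leading one lie in the ideal, where `v`
is one of the two families of variables. -/
theorem X_pow_mem_diagIdeal {v : Fin n → Fin n ⊕ Fin n}
    (hv : ∀ ε σ i, bAct n ε σ (X (v i)) = ((ε i : ℤ) : ℂ) • X (v (σ i))) (i : Fin n) :
    X (v i) ^ (2 * n) ∈ diagIdeal n := by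
  let z (i : Fin n) : MvPolynomial (Fin n ⊕ Fin n) ℂ := X (v i) ^ 2
  let P : Polynomial (MvPolynomial (Fin n ⊕ Fin n) ℂ) :=
    ∏ i, (Polynomial.X - Polynomial.C (z i))
  have hz (ε σ i) : bAct n ε σ (z i) = z (σ i) := by
    obtain h | h := Int.units_eq_one_or (ε i) <;> simp [z, hv, h]
  have hinv (ε σ) : P.map (bAct n ε σ : _ →+* MvPolynomial (Fin n ⊕ Fin n) ℂ) = P := by
    simp only [P, Polynomial.map_prod, Polynomial.map_sub, Polynomial.map_X, Polynomial.map_C,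
      RingHom.coe_coe, hz]
    exact Equiv.prod_comp σ (fun i => Polynomial.X - Polynomial.C (z i))
  have hconst : P.map constantCoeff = Polynomial.X ^ n := by
    simp [P, z, Polynomial.map_prod]
  have hmod : P.map (Ideal.Quotient.mk (diagIdeal n)) = Polynomial.X ^ n := by
    rw [← Polynomial.map_X (algebraMap ℂ (MvPolynomial (Fin n ⊕ Fin n) ℂ ⧸ diagIdeal n)),
      ← Polynomial.map_pow, ← hconst, Polynomial.map_map]
    ext k
    rw [Polynomial.coeff_map, Polynomial.coeff_map, RingHom.comp_apply]
    refine Ideal.Quotient.eq.2 (Ideal.subset_span ⟨fun ε σ => ?_, ?_⟩)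
    · rw [map_sub]
      refine congrArg₂ _ ?_ ((bAct n ε σ).commutes _)
      simpa [Polynomial.coeff_map] using congrArg (Polynomial.coeff · k) (hinv ε σ)
    · exact (map_sub _ _ _).trans (sub_eq_zero.2 (constantCoeff_C _ _).symm)
  have hroot : P.eval (z i) = 0 := by
    rw [Polynomial.eval_prod]
    exact Finset.prod_eq_zero (Finset.mem_univ i) (by simp)
  have heval := congrArg (Ideal.Quotient.mk (diagIdeal n)) hroot
  rw [← Polynomial.eval_map_apply, hmod] at heval
  rw [← Ideal.Quotient.eq_zero_iff_mem]
  simpa [z, pow_mul] using heval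

theorem finite_quotient_of_X_pow_mem {σ K : Type*} [Finite σ] [Field K]
    {I : Ideal (MvPolynomial σ K)} {d : ℕ} (hI : ∀ j, X j ^ d ∈ I) :
    Module.Finite K (MvPolynomial σ K ⧸ I) := by
  have hX (j) : IsIntegral K (Ideal.Quotient.mk I (X j)) :=
    ⟨Polynomial.X ^ d, Polynomial.monic_X_pow d, by
      simpa [← map_pow] using Ideal.Quotient.eq_zero_iff_mem.2 (hI j)⟩
  have : Algebra.IsIntegral K (MvPolynomial σ K ⧸ I) := ⟨fun x => by
    obtain ⟨f, rfl⟩ := Ideal.Quotient.mk_surjective x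
    induction f using MvPolynomial.induction_on with
    | C a => exact isIntegral_algebraMap (R := K) (x := a)
    | add p q hp hq => exact (map_add (Ideal.Quotient.mk I) p q) ▸ hp.add hq
    | mul_X p j hp => exact (map_mul (Ideal.Quotient.mk I) p (X j)) ▸ hp.mul (hX j)⟩
  exact Algebra.IsIntegral.finite

instance finite_quotient_diagIdeal (n : ℕ) :
    Module.Finite ℂ (MvPolynomial (Fin n ⊕ Fin n) ℂ ⧸ diagIdeal n) :=
  finite_quotient_of_X_pow_mem <| Sum.rec
    (X_pow_mem_diagIdeal fun ε σ i => by simp [bAct])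
    (X_pow_mem_diagIdeal fun ε σ i => by simp [bAct])

end DiagIdeal

section Slater

variable {K ι α : Type*} [Field K] [DecidableEq ι]

/-- The operator `T` acting on the `i`-th variable of functions of several variables. -/
def onCoord (i : ι) (T : Module.End K (α → K)) : Module.End K ((ι → α) → K) where
  toFun v k := T (fun a => v (Function.update k i a)) (k i)
  map_add' u _ := funext fun k => congrFun (map_add T (fun a => u (Function.update k i a)) _) (k i)
  map_smul' c _ := funext fun k => congrFun (map_smul T c _) (k i)

theorem onCoord_apply (i : ι) (T : Module.End K (α → K)) (v : (ι → α) → K) (k : ι → α) :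
    onCoord i T v k = T (fun a => v (Function.update k i a)) (k i) := rfl

variable [Fintype ι]

/-- The Slater determinant `det (w i j (k i))` as a function of the positions `k`, where the `i`-th
particle has the orbitals `w i j`. -/
def slater (w : ι → ι → α → K) (k : ι → α) : K := (Matrix.of fun i j => w i j (k i)).det

theorem slater_update (w : ι → ι → α → K) (i : ι) (u : ι → α → K) (k : ι → α) :
    slater (Function.update w i u) k =
      ((Matrix.of fun i j => w i j (k i)).updateRow i fun j => u j (k i)).det := by
  refine congrArg Matrix.det (Matrix.ext fun a b => ?_)
  obtain rfl | h := eq_or_ne a i <;> simp [*]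

theorem slater_update_add (w : ι → ι → α → K) (i : ι) (u v : ι → α → K) :
    slater (Function.update w i (u + v)) =
      slater (Function.update w i u) + slater (Function.update w i v) := by
  ext k
  simp only [slater_update, Pi.add_apply]
  exact Matrix.det_updateRow_add _ _ _ _

theorem slater_update_smul (w : ι → ι → α → K) (i : ι) (c : K) (u : ι → α → K) :
    slater (Function.update w i (c • u)) = c • slater (Function.update w i u) := by
  ext k
  simp only [slater_update, Pi.smul_apply]
  exact Matrix.det_updateRow_smul _ _ _ _

theorem onCoord_slater (i : ι) (T : Module.End K (α → K)) (w : ι → ι → α → K) :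
    onCoord i T (slater w) = slater (Function.update w i fun j => T (w i j)) := by
  ext k
  let row : (ι → K) →ₗ[K] K :=
    (Matrix.detRowAlternating (R := K) (n := ι)).toMultilinearMap.toLinearMap
      (Matrix.of fun i j => w i j (k i)) i
  have hrow (r : ι → K) : ((Matrix.of fun i j => w i j (k i)).updateRow i r).det =
      ∑ j, r j • row fun l => if j = l then 1 else 0 :=
    row.pi_apply_eq_sum_univ r
  have hslice : (fun a => slater w (Function.update k i a)) =
      ∑ j, (row fun l => if j = l then 1 else 0) • w i j := by
    ext a
    have hmat : (Matrix.of fun l j => w l j (Function.update k i a l)) =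
        (Matrix.of fun l j => w l j (k l)).updateRow i fun j => w i j a := by
      ext l
      obtain rfl | h := eq_or_ne l i <;> simp [*]
    rw [slater, hmat, hrow]
    simp [mul_comm]
  rw [onCoord_apply, hslice, slater_update, hrow]
  simp [mul_comm]

theorem sum_det_updateRow_mul (A t : Matrix ι ι K) :
    ∑ i, (A.updateRow i ((A * t) i)).det = t.trace * A.det := by
  have h (i) : (A.updateRow i ((A * t) i)).det = (A * t * A.adjugate) i i := by
    rw [← Matrix.cramer_transpose_apply, Matrix.cramer_eq_adjugate_mulVec,
      ← Matrix.adjugate_transpose, Matrix.mulVec_transpose]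
    rfl
  calc ∑ i, (A.updateRow i ((A * t) i)).det = (A * t * A.adjugate).trace :=
        Finset.sum_congr rfl fun i _ => h i
    _ = t.trace * A.det := by
        rw [Matrix.mul_assoc, Matrix.trace_mul_comm, Matrix.mul_assoc, Matrix.adjugate_mul,
          Matrix.mul_smul, Matrix.mul_one, Matrix.trace_smul, smul_eq_mul, mul_comm]

theorem sum_onCoord_slater {T : Module.End K (α → K)} {o : ι → α → K} {t : Matrix ι ι K}
    (hT : ∀ j, T (o j) = ∑ l, t l j • o l) :
    ∑ i, onCoord i T (slater fun _ => o) = t.trace • slater fun _ => o := by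
  ext k
  simp only [onCoord_slater, Finset.sum_apply, slater_update, Pi.smul_apply]
  rw [slater, smul_eq_mul, ← sum_det_updateRow_mul]
  refine Finset.sum_congr rfl fun i _ => congrArg (fun r => (Matrix.updateRow _ i r).det) ?_
  ext j
  simp [hT, Matrix.mul_apply, mul_comm]

end Slater

section Ladder

variable {K : Type*} [Field K] {N : ℕ}

/-- The shift `e k ↦ e (k + 1)` on the coordinate vectors, killing the last one: multiplication by
`x` on `K[x] / (x ^ (N + 1))`. -/
def raise (K : Type*) [Field K] (N : ℕ) : Module.End K (Fin (N + 1) → K) where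
  toFun v k := if k = 0 then 0 else v (k - 1)
  map_add' u v := by
    ext k
    by_cases h : k = 0 <;> simp [h]
  map_smul' c v := by
    ext k
    by_cases h : k = 0 <;> simp [h]

/-- The weighted shift `e k ↦ q k • e (k - 1)`. The indices are cyclic, so that it is a lowering
operator only when `q 0 = 0`. -/
def lower (q : Fin (N + 1) → K) : Module.End K (Fin (N + 1) → K) where
  toFun v k := q (k + 1) * v (k + 1)
  map_add' _ _ := funext fun _ => mul_add _ _ _
  map_smul' _ _ := funext fun _ => mul_left_comm _ _ _

/-- The operator `e k ↦ (-1) ^ k • e k`. -/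
def parity (K : Type*) [Field K] (N : ℕ) : Module.End K (Fin (N + 1) → K) where
  toFun v k := (-1) ^ (k : ℕ) * v k
  map_add' _ _ := funext fun _ => mul_add _ _ _
  map_smul' _ _ := funext fun _ => mul_left_comm _ _ _

theorem raise_apply (v : Fin (N + 1) → K) (k : Fin (N + 1)) :
    raise K N v k = if k = 0 then 0 else v (k - 1) := rfl

theorem lower_apply (q v : Fin (N + 1) → K) (k : Fin (N + 1)) :
    lower q v k = q (k + 1) * v (k + 1) := rfl

theorem parity_apply (v : Fin (N + 1) → K) (k : Fin (N + 1)) :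
    parity K N v k = (-1) ^ (k : ℕ) * v k := rfl

theorem val_add_one_of_ne_zero {k : Fin (N + 1)} (hk : k + 1 ≠ 0) :
    ((k + 1 : Fin (N + 1)) : ℕ) = k + 1 :=
  Fin.val_add_one_of_lt (Fin.lt_last_iff_ne_last.2 fun h => hk (by rw [h, Fin.last_add_one]))

theorem parity_mul_raise : parity K N * raise K N = -(raise K N * parity K N) := by
  refine LinearMap.ext fun v => funext fun k => ?_
  simp only [Module.End.mul_apply, LinearMap.neg_apply, Pi.neg_apply, parity_apply, raise_apply]
  split_ifs with hk
  · simp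
  · have hval := val_add_one_of_ne_zero (k := k - 1) (by simpa using hk)
    rw [sub_add_cancel] at hval
    rw [hval, pow_succ]
    ring

theorem parity_mul_lower {q : Fin (N + 1) → K} (hq : q 0 = 0) :
    parity K N * lower q = -(lower q * parity K N) := by
  refine LinearMap.ext fun v => funext fun k => ?_
  simp only [Module.End.mul_apply, LinearMap.neg_apply, Pi.neg_apply, parity_apply, lower_apply]
  by_cases hk : k + 1 = 0
  · simp [hk, hq]
  · rw [val_add_one_of_ne_zero hk, pow_succ]
    ring

variable {ι : Type*} [Fintype ι] [DecidableEq ι]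

theorem sum_update_add_one {k : ι → Fin (N + 1)} {i : ι}
    (hk : k i + 1 ≠ 0) :
    ∑ l, (Function.update k i (k i + 1) l : ℕ) = (∑ l, (k l : ℕ)) + 1 := by
  rw [← Finset.add_sum_erase _ _ (Finset.mem_univ i),
    ← Finset.add_sum_erase _ (fun l => (k l : ℕ)) (Finset.mem_univ i), Function.update_self,
    val_add_one_of_ne_zero hk, add_right_comm]
  refine congrArg (_ + · + 1) (Finset.sum_congr rfl fun l hl => ?_)
  rw [Function.update_of_ne (Finset.ne_of_mem_erase hl)]

theorem onCoord_raise_single {k : ι → Fin (N + 1)} {i : ι} (hk : k i + 1 ≠ 0) :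
    onCoord i (raise K N) (Pi.single k 1) = Pi.single (Function.update k i (k i + 1)) 1 := by
  ext l
  simp only [onCoord_apply, raise_apply, Pi.single_apply, Function.update_eq_iff,
    Function.eq_update_iff]
  by_cases hl : l i = 0
  · simp [hl, hk.symm]
  · simp [hl, sub_eq_iff_eq_add]

variable {q : Fin (N + 1) → K} {U : Submodule K ((ι → Fin (N + 1)) → K)}

theorem single_mem_of_raise_mem (hraise : ∀ i, ∀ v ∈ U, onCoord i (raise K N) v ∈ U)
    (h0 : Pi.single 0 1 ∈ U) (k : ι → Fin (N + 1)) : Pi.single k 1 ∈ U := by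
  induction hd : ∑ l, (k l : ℕ) generalizing k with
  | zero =>
    have hk : k = 0 := funext fun l => Fin.ext (Finset.sum_eq_zero_iff.1 hd l (Finset.mem_univ l))
    rwa [hk]
  | succ d ih =>
    obtain ⟨i, hi⟩ : ∃ i, k i ≠ 0 := by
      by_contra! h
      simp [h] at hd
    let k' := Function.update k i (k i - 1)
    have hk'i : k' i + 1 = k i := by simp [k']
    have hk' : k' i + 1 ≠ 0 := hk'i ▸ hi
    have hkk' : Function.update k' i (k' i + 1) = k := by simp [k']
    have hsum := sum_update_add_one hk'
    rw [hkk', hd] at hsum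
    have := hraise i _ (ih k' (Nat.succ_injective hsum).symm)
    rwa [onCoord_raise_single hk', hkk'] at this

theorem single_zero_mem_of_lower_mem (hq : ∀ k, q k = 0 ↔ k = 0)
    (hlower : ∀ i, ∀ v ∈ U, onCoord i (lower q) v ∈ U) (hU : U ≠ ⊥) : Pi.single 0 1 ∈ U := by
  suffices h : ∀ D, ∀ v ∈ U, v ≠ 0 → (∀ k, v k ≠ 0 → ∑ l, (k l : ℕ) < D) → Pi.single 0 1 ∈ U by
    obtain ⟨v, hv, hv0⟩ := Submodule.exists_mem_ne_zero_of_ne_bot hU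
    refine h (Fintype.card ι * N + 1) v hv hv0 fun k _ => Nat.lt_succ_of_le ?_
    exact Finset.sum_le_card_nsmul _ _ N fun l _ => Fin.is_le (k l)
  intro D
  induction D with
  | zero => exact fun v _ hv0 hD => absurd (funext fun k => by simpa using hD k) hv0
  | succ D ih =>
    intro v hv hv0 hD
    by_cases hsupp : ∃ k, v k ≠ 0 ∧ k ≠ 0
    · obtain ⟨k, hvk, hk⟩ := hsupp
      obtain ⟨i, hi⟩ := Function.ne_iff.1 hk
      refine ih _ (hlower i v hv) (fun h => ?_) fun l hl => ?_
      · have := congrFun h (Function.update k i (k i - 1))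
        simp only [onCoord_apply, lower_apply, Function.update_self, sub_add_cancel,
          Function.update_idem, Function.update_eq_self, Pi.zero_apply, mul_eq_zero, hq] at this
        exact this.elim hi hvk
      · rw [onCoord_apply, lower_apply, mul_ne_zero_iff, Ne, hq] at hl
        have := hD _ hl.2
        rwa [sum_update_add_one hl.1, Nat.succ_lt_succ_iff] at this
    · push Not at hsupp
      have hv_eq : v = v 0 • Pi.single 0 1 := by
        ext k
        by_cases hk : k = 0
        · simp [hk]
        · simp [hk, not_imp_comm.1 (hsupp k) hk]
      have hv00 : v 0 ≠ 0 := fun h => hv0 (by rw [hv_eq, h, zero_smul])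
      rw [hv_eq] at hv
      exact (Submodule.smul_mem_iff _ hv00).1 hv

theorem eq_top_of_raise_mem_of_lower_mem {κ : Type*} [Finite κ] [DecidableEq κ]
    {U : Submodule K ((κ → Fin (N + 1)) → K)} (hq : ∀ k, q k = 0 ↔ k = 0)
    (hraise : ∀ i, ∀ v ∈ U, onCoord i (raise K N) v ∈ U)
    (hlower : ∀ i, ∀ v ∈ U, onCoord i (lower q) v ∈ U) (hU : U ≠ ⊥) : U = ⊤ := by
  cases nonempty_fintype κ
  refine eq_top_iff.2 fun v _ => ?_
  rw [← Finset.univ_sum_single v]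
  refine sum_mem fun k _ => ?_
  rw [← mul_one (v k), ← smul_eq_mul, Pi.single_smul]
  exact U.smul_mem _
    (single_mem_of_raise_mem hraise (single_zero_mem_of_lower_mem hq hlower hU) k)

end Ladder

section Dunkl

variable {K : Type*} [Field K] {m : ℕ}

/-- The scalars by which the rank-one Dunkl operator lowers the monomials `x ^ k`, for the parameter
at which `x ^ (2 * m + 1)` is killed. -/
def dunklWeight (K : Type*) [Field K] (m : ℕ) (k : Fin (2 * m + 1)) : K :=
  if Even (k : ℕ) then k else k - (2 * m + 1)

theorem dunklWeight_eq_zero_iff [CharZero K] (k : Fin (2 * m + 1)) :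
    dunklWeight K m k = 0 ↔ k = 0 := by
  rw [dunklWeight]
  split_ifs with hk
  · exact Nat.cast_eq_zero.trans Fin.val_eq_zero_iff
  · refine iff_of_false (fun h => ?_) fun h => hk (by simp [h])
    exact k.isLt.ne (by exact_mod_cast sub_eq_zero.1 h)

theorem lower_mul_raise [CharZero K] :
    lower (dunklWeight K m) * raise K (2 * m) =
      raise K (2 * m) * lower (dunklWeight K m) + 1 + (-(2 * m + 1) : K) • parity K (2 * m) := by
  have hstep (k : Fin (2 * m + 1)) :
      dunklWeight K m (k + 1) = dunklWeight K m k + 1 - (2 * m + 1) * (-1) ^ (k : ℕ) := by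
    by_cases hk : k + 1 = 0
    · have hlast : (k : ℕ) = 2 * m := by
        rw [← Fin.last_add_one, add_left_inj] at hk
        rw [hk, Fin.val_last]
      rw [hk]
      simp [dunklWeight, hlast]
    · simp only [dunklWeight, val_add_one_of_ne_zero hk, Nat.even_add_one]
      obtain h | h := Nat.even_or_odd (k : ℕ)
      · simp [h, h.neg_one_pow]
      · simp [Nat.not_even_iff_odd.2 h, h.neg_one_pow]
        ring
  refine LinearMap.ext fun v => funext fun k => ?_
  have h0 : dunklWeight K m 0 = 0 := (dunklWeight_eq_zero_iff 0).2 rfl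
  have hup : (raise K (2 * m) (lower (dunklWeight K m) v)) k = dunklWeight K m k * v k := by
    rw [raise_apply, lower_apply]
    split_ifs with hk <;> simp [hk, h0]
  have hdown : (lower (dunklWeight K m) (raise K (2 * m) v)) k = dunklWeight K m (k + 1) * v k := by
    rw [lower_apply, raise_apply, add_sub_cancel_right]
    split_ifs with hk <;> simp [hk, h0]
  simp only [Module.End.mul_apply, LinearMap.add_apply, Pi.add_apply, hup, hdown, hstep,
    Module.End.one_apply, LinearMap.smul_apply, Pi.smul_apply, parity_apply, smul_eq_mul]
  ring

/-- The operator `x ^ a * y ^ b`, where `g = (a, b)`. -/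
def normalOrder {V : Type*} [AddCommGroup V] [Module K V] (x y : Module.End K V) (g : ℕ × ℕ) :
    Module.End K V :=
  x ^ g.1 * y ^ g.2

section Commutation

variable {V : Type*} [AddCommGroup V] [Module K V] {x y s : Module.End K V}

theorem mul_normalOrder_eq_smul (hsx : s * x = -(x * s)) (hsy : s * y = -(y * s)) (a b : ℕ) :
    s * normalOrder x y (a, b) = (-1 : K) ^ (a + b) • (normalOrder x y (a, b) * s) := by
  have hpow {z : Module.End K V} (hz : s * z = -(z * s)) (k : ℕ) :
      s * z ^ k = (-1 : K) ^ k • (z ^ k * s) := by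
    induction k with
    | zero => simp
    | succ k ih =>
      rw [pow_succ z, ← mul_assoc, ih, smul_mul_assoc, mul_assoc, hz, pow_succ (-1 : K)]
      simp [mul_assoc]
  rw [normalOrder, ← mul_assoc, hpow hsx, smul_mul_assoc, mul_assoc, hpow hsy, mul_smul_comm,
    smul_smul, pow_add, mul_assoc]

theorem exists_mul_normalOrder_apply {c : K} (hyx : y * x = x * y + 1 + c • s)
    (hsx : s * x = -(x * s)) (hsy : s * y = -(y * s)) (a b : ℕ) :
    ∃ κ : K, ∀ v, s v = -v → y (normalOrder x y (a + 1, b) v) =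
      normalOrder x y (a + 1, b + 1) v + κ • normalOrder x y (a, b) v := by
  have hs (a : ℕ) {v : V} (hv : s v = -v) :
      s (normalOrder x y (a, b) v) = (-1 : K) ^ (a + b + 1) • normalOrder x y (a, b) v := by
    simpa [hv, pow_succ] using LinearMap.congr_fun (mul_normalOrder_eq_smul hsx hsy a b) v
  have hx (a b : ℕ) (v : V) : normalOrder x y (a + 1, b) v = x (normalOrder x y (a, b) v) := by
    simp [normalOrder, pow_succ']
  have hyx' (v : V) : y (x v) = x (y v) + v + c • s v := LinearMap.congr_fun hyx v
  induction a with
  | zero =>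
    refine ⟨1 + c * (-1) ^ (0 + b + 1), fun v hv => ?_⟩
    have hy : y (normalOrder x y (0, b) v) = normalOrder x y (0, b + 1) v := by
      simp [normalOrder, pow_succ']
    rw [hx, hyx', hs 0 hv, hy, hx]
    module
  | succ a ih =>
    obtain ⟨κ, hκ⟩ := ih
    refine ⟨κ + 1 + c * (-1) ^ (a + 1 + b + 1), fun v hv => ?_⟩
    rw [hx, hyx', hs _ hv, hκ v hv, map_add, map_smul, ← hx, ← hx]
    module

end Commutation

/-- The `j`-th odd index `2 * j + 1`. -/
def oddIndex (j : Fin m) : Fin (2 * m + 1) := ⟨2 * j + 1, by lia⟩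

/-- The vector `e (2 * j + 1)`; these span the `-1`-eigenspace of the parity operator. -/
def oddVector (K : Type*) [Field K] (m : ℕ) (j : Fin m) : Fin (2 * m + 1) → K :=
  Pi.single (oddIndex j) 1

theorem parity_oddVector (j : Fin m) : parity K (2 * m) (oddVector K m j) = -oddVector K m j := by
  ext k
  rw [parity_apply, oddVector, Pi.neg_apply]
  obtain rfl | hk := eq_or_ne k (oddIndex j)
  · simp [oddIndex, pow_succ]
  · simp [hk]

theorem oddVector_apply (i j : Fin m) :
    oddVector K m j (oddIndex i) = (1 : Matrix (Fin m) (Fin m) K) i j := by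
  simp [oddVector, Pi.single_apply, Matrix.one_apply, oddIndex, Fin.ext_iff]

theorem eq_sum_oddVector [CharZero K] {v : Fin (2 * m + 1) → K} (hv : parity K (2 * m) v = -v) :
    v = ∑ j, v (oddIndex j) • oddVector K m j := by
  ext k
  rw [Finset.sum_apply]
  obtain hk | ⟨l, hl⟩ := Nat.even_or_odd (k : ℕ)
  · have hvk : v k = 0 := by
      have := congrFun hv k
      rwa [parity_apply, hk.neg_one_pow, one_mul, Pi.neg_apply, self_eq_neg] at this
    refine hvk.trans (Finset.sum_eq_zero fun j _ => ?_).symm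
    have hkj : k ≠ oddIndex j := by
      rintro rfl
      simp [oddIndex] at hk
    simp [oddVector, hkj]
  · have hk : k = oddIndex ⟨l, by lia⟩ := Fin.ext hl
    rw [hk]
    simp [oddVector_apply, Matrix.one_apply]

end Dunkl

section SlaterMap

variable {K α : Type*} [Field K] {n : ℕ}

theorem degree_sub_single_add_one {σ : Type*} {s : σ →₀ ℕ} {j : σ} (hj : j ∈ s.support) :
    (s - Finsupp.single j 1).degree + 1 = s.degree := by
  conv_rhs => rw [← tsub_add_cancel_of_le (Finsupp.single_le_iff.2
    (Nat.one_le_iff_ne_zero.2 (Finsupp.mem_support_iff.1 hj))), map_add, Finsupp.degree_single]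

theorem homogeneousComponent_X_mul {σ : Type*} (j : σ) (f : MvPolynomial σ K) (d : ℕ) :
    homogeneousComponent (d + 1) (X j * f) = X j * homogeneousComponent d f := by
  classical
  ext s
  rw [coeff_homogeneousComponent, coeff_X_mul', coeff_X_mul', coeff_homogeneousComponent]
  by_cases hj : j ∈ s.support
  · simp [hj, ← degree_sub_single_add_one hj]
  · simp [hj]

theorem X_mul_mem_degreeLT {σ : Type*} {d : ℕ} {f : MvPolynomial σ K} (hf : f ∈ degreeLT σ K d)
    (j : σ) : X j * f ∈ degreeLT σ K (d + 1) := by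
  classical
  refine (mem_restrictSupport_iff K).2 fun s hs => ?_
  rw [Finset.mem_coe, mem_support_iff, coeff_X_mul', Ne, ite_eq_right_iff, Classical.not_imp] at hs
  rw [Set.mem_ofPred_eq, ← degree_sub_single_add_one hs.1]
  exact Nat.succ_lt_succ ((mem_restrictSupport_iff K).1 hf (mem_support_iff.2 hs.2))

theorem span_le_of_X_mul_mem {σ : Type*} {P : Submodule K (MvPolynomial σ K)}
    (hP : ∀ j, ∀ f ∈ P, X j * f ∈ P) {s : Set (MvPolynomial σ K)} (hs : s ⊆ P) :
    (Ideal.span s).restrictScalars K ≤ P := by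
  let J : Ideal (MvPolynomial σ K) :=
    { P with
      smul_mem' := fun f g hg => by
        induction f using MvPolynomial.induction_on generalizing g with
        | C a => simpa [C_mul'] using P.smul_mem a hg
        | add p q hp hq => simpa [add_mul] using P.add_mem (hp g hg) (hq g hg)
        | mul_X p j hp => simpa [mul_assoc] using hp _ (hP j g hg) }
  exact fun f hf => (Ideal.span_le (I := J)).2 hs hf

/-- The linear map sending a monomial `∏ i, x i ^ a i * y i ^ b i` to the Slater determinant of the
orbitals `o j`, to which the operators `x ^ a i * y ^ b i` have been applied in the `i`-th
variable. -/
noncomputable def slaterMap (x y : Module.End K (α → K)) (o : Fin n → α → K) :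
    MvPolynomial (Fin n ⊕ Fin n) K →ₗ[K] (Fin n → α) → K :=
  (basisMonomials _ K).constr K fun s => slater fun i j => normalOrder x y (bidegree s i) (o j)

variable {x y : Module.End K (α → K)} {o : Fin n → α → K}

theorem slaterMap_monomial (s : Fin n ⊕ Fin n →₀ ℕ) : slaterMap x y o (monomial s 1) =
    slater fun i j => normalOrder x y (bidegree s i) (o j) :=
  (basisMonomials _ K).constr_basis _ _ s

theorem slaterMap_one : slaterMap x y o 1 = slater fun _ => o := by
  rw [← C_1, C_apply, slaterMap_monomial]
  simp [bidegree, normalOrder]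

theorem slaterMap_monomial_eq_slater_update {s t : Fin n ⊕ Fin n →₀ ℕ} {i : Fin n}
    (hst : ∀ l ≠ i, bidegree t l = bidegree s l) : slaterMap x y o (monomial t 1) =
      slater (Function.update (fun l j => normalOrder x y (bidegree s l) (o j)) i
        fun j => normalOrder x y (bidegree t i) (o j)) := by
  rw [slaterMap_monomial]
  congr 1
  ext1 l
  obtain rfl | hl := eq_or_ne l i
  · rw [Function.update_self]
  · rw [Function.update_of_ne hl, hst l hl]

theorem bidegree_single_inl_add (s : Fin n ⊕ Fin n →₀ ℕ) (i l : Fin n) :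
    bidegree (Finsupp.single (Sum.inl i) 1 + s) l = bidegree s l + if l = i then (1, 0) else 0 := by
  obtain rfl | hl := eq_or_ne l i <;> simp [bidegree, *, add_comm]

theorem bidegree_single_inr_add (s : Fin n ⊕ Fin n →₀ ℕ) (i l : Fin n) :
    bidegree (Finsupp.single (Sum.inr i) 1 + s) l = bidegree s l + if l = i then (0, 1) else 0 := by
  obtain rfl | hl := eq_or_ne l i <;> simp [bidegree, *, add_comm]

theorem slaterMap_X_inl_mul (i : Fin n) (f : MvPolynomial (Fin n ⊕ Fin n) K) :
    slaterMap x y o (X (Sum.inl i) * f) = onCoord i x (slaterMap x y o f) := by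
  suffices h : slaterMap x y o ∘ₗ LinearMap.mulLeft K (X (Sum.inl i)) =
      onCoord i x ∘ₗ slaterMap x y o from LinearMap.congr_fun h f
  refine (basisMonomials _ K).ext fun s => ?_
  simp only [coe_basisMonomials, LinearMap.comp_apply, LinearMap.mulLeft_apply, X, monomial_mul,
    one_mul]
  rw [slaterMap_monomial_eq_slater_update (s := s) (i := i) fun l hl => by
    simp [bidegree_single_inl_add, hl], slaterMap_monomial, onCoord_slater]
  congr 2
  simp [bidegree_single_inl_add, normalOrder, pow_succ']

/-- The relation moving `y` past a positive power of `x` on the orbitals `o`, up to a multiple of a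
normally ordered term with one less `x` and one less `y`. -/
def NormallyOrders (x y : Module.End K (α → K)) (o : Fin n → α → K) : Prop :=
  ∀ a b, ∃ κ : K, ∀ j, y (normalOrder x y (a + 1, b) (o j)) =
    normalOrder x y (a + 1, b + 1) (o j) + κ • normalOrder x y (a, b) (o j)

theorem onCoord_slaterMap_monomial_sub_mem (hxy : NormallyOrders x y o) (i : Fin n)
    (s : Fin n ⊕ Fin n →₀ ℕ) :
    onCoord i y (slaterMap x y o (monomial s 1)) -
        slaterMap x y o (X (Sum.inr i) * monomial s 1) ∈
      (degreeLT (Fin n ⊕ Fin n) K s.degree).map (slaterMap x y o) := by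
  rw [X, monomial_mul, one_mul, slaterMap_monomial_eq_slater_update (s := s) (i := i)
    (t := _ + s) fun l hl => by simp [bidegree_single_inr_add, hl], slaterMap_monomial,
    onCoord_slater, bidegree_single_inr_add, if_pos rfl]
  obtain h0 | hpos := Nat.eq_zero_or_pos (s (Sum.inl i))
  · simp [bidegree, h0, normalOrder, pow_succ']
  obtain ⟨a, ha⟩ := Nat.exists_eq_add_one.2 hpos
  let t := s - Finsupp.single (Sum.inl i) 1
  have hi : Sum.inl i ∈ s.support := Finsupp.mem_support_iff.2 (ha ▸ Nat.succ_ne_zero a)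
  have hti : bidegree t i = (a, s (Sum.inr i)) := by simp [bidegree, t, ha]
  have htl : ∀ l ≠ i, bidegree t l = bidegree s l := fun l hl => by simp [bidegree, t, hl.symm]
  have hsi : bidegree s i = (a + 1, s (Sum.inr i)) := by simp [bidegree, ha]
  obtain ⟨κ, hκ⟩ := hxy a (s (Sum.inr i))
  refine ⟨κ • monomial t 1, Submodule.smul_mem _ _ (monomial_mem_degreeLT ?_ _), ?_⟩
  · exact Nat.lt_of_succ_le (degree_sub_single_add_one hi).le
  rw [map_smul, slaterMap_monomial_eq_slater_update htl, hti, eq_sub_iff_add_eq,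
    ← slater_update_smul, ← slater_update_add]
  congr 2
  ext1 j
  simp [hsi, hκ, add_comm]

theorem onCoord_slaterMap_sub_mem (hxy : NormallyOrders x y o) (i : Fin n) {d : ℕ}
    {f : MvPolynomial (Fin n ⊕ Fin n) K} (hf : f ∈ degreeLT (Fin n ⊕ Fin n) K (d + 1)) :
    onCoord i y (slaterMap x y o f) - slaterMap x y o (X (Sum.inr i) * f) ∈
      (degreeLT (Fin n ⊕ Fin n) K d).map (slaterMap x y o) := by
  let D := onCoord i y ∘ₗ slaterMap x y o -
    slaterMap x y o ∘ₗ LinearMap.mulLeft K (X (Sum.inr i))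
  suffices h : degreeLT (Fin n ⊕ Fin n) K (d + 1) ≤
      ((degreeLT (Fin n ⊕ Fin n) K d).map (slaterMap x y o)).comap D from h hf
  rw [degreeLT_eq_span, Submodule.span_le]
  rintro _ ⟨s, hs, rfl⟩
  exact Submodule.map_mono (degreeLT_mono (Nat.le_of_lt_succ hs))
    (onCoord_slaterMap_monomial_sub_mem hxy i s)

theorem X_mul_mem_grKer_slaterMap (hxy : NormallyOrders x y o) (j : Fin n ⊕ Fin n)
    {f : MvPolynomial (Fin n ⊕ Fin n) K} (hf : f ∈ grKer (slaterMap x y o)) :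
    X j * f ∈ grKer (slaterMap x y o) := by
  rw [mem_grKer] at hf ⊢
  rintro (_ | d)
  · simp [homogeneousComponent_zero, coeff_X_mul']
  rw [homogeneousComponent_X_mul]
  obtain ⟨g, hg, hgf⟩ := hf d
  obtain i | i := j
  · rw [slaterMap_X_inl_mul, ← hgf, ← slaterMap_X_inl_mul]
    exact Submodule.mem_map_of_mem (X_mul_mem_degreeLT hg _)
  · have hsub := onCoord_slaterMap_sub_mem hxy i (sub_mem (degreeLT_mono d.le_succ hg)
      (homogeneousComponent_mem_degreeLT d f))
    rw [map_sub, hgf, sub_self, map_zero, zero_sub, mul_sub, map_sub, neg_sub] at hsub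
    have hX := Submodule.mem_map_of_mem (f := slaterMap x y o) (X_mul_mem_degreeLT hg (Sum.inr i))
    simpa using add_mem (Submodule.map_mono (degreeLT_mono d.le_succ) hsub) hX

theorem evenPowerSumIdeal_le_grKer_slaterMap (hxy : NormallyOrders x y o)
    (hpow : ∀ g ∈ evenBidegrees, ∃ t : Matrix (Fin n) (Fin n) K,
      ∀ j, normalOrder x y g (o j) = ∑ l, t l j • o l) :
    (evenPowerSumIdeal K n).restrictScalars K ≤ grKer (slaterMap x y o) := by
  refine span_le_of_X_mul_mem (fun j f => X_mul_mem_grKer_slaterMap hxy j) ?_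
  rintro _ ⟨g, hg, rfl⟩
  obtain ⟨t, ht⟩ := hpow g hg
  have hψ : slaterMap x y o (polarizedPowerSum K n g) = slaterMap x y o (C t.trace) := by
    rw [← mul_one (C t.trace), C_mul', map_smul, slaterMap_one, ← sum_onCoord_slater ht,
      polarizedPowerSum, map_sum]
    refine Finset.sum_congr rfl fun i _ => ?_
    rw [onCoord_slater, pairMonomial_eq_monomial, slaterMap_monomial_eq_slater_update (s := 0)
      (i := i) fun l hl => by simp [bidegree, hl.symm]]
    simp [bidegree, normalOrder]
  refine mem_grKer.2 fun d => ?_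
  rw [homogeneousComponent_of_mem (isHomogeneous_polarizedPowerSum g)]
  split_ifs with hd
  · have hd0 : 0 < d := Nat.pos_of_ne_zero fun h0 => hg.2 (by simpa [hd, Prod.ext_iff] using h0)
    exact hψ ▸ Submodule.mem_map_of_mem (monomial_mem_degreeLT (by simpa using hd0) _)
  · simp

theorem onCoord_mem_range_slaterMap (hxy : NormallyOrders x y o) (i : Fin n)
    {v : (Fin n → α) → K} (hv : v ∈ (slaterMap x y o).range) :
    onCoord i y v ∈ (slaterMap x y o).range := by
  obtain ⟨f, rfl⟩ := hv
  obtain ⟨d, hd⟩ := exists_mem_degreeLT f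
  have h := LinearMap.map_le_range
    (onCoord_slaterMap_sub_mem hxy i (degreeLT_mono d.le_succ hd))
  rw [← sub_add_cancel (onCoord i y _)]
  exact add_mem h (LinearMap.mem_range_self _ (X (Sum.inr i) * f))

end SlaterMap

section DunklMap

variable {K : Type*} [Field K] [CharZero K] {n : ℕ}

/-- The Slater determinant map of the rank-one Dunkl operators and the odd coordinate vectors. -/
noncomputable abbrev dunklMap (K : Type*) [Field K] (n : ℕ) :
    MvPolynomial (Fin n ⊕ Fin n) K →ₗ[K] (Fin n → Fin (2 * n + 1)) → K :=
  slaterMap (raise K (2 * n)) (lower (dunklWeight K n)) (oddVector K n)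

theorem parity_mul_lower_dunklWeight : parity K (2 * n) * lower (dunklWeight K n) =
    -(lower (dunklWeight K n) * parity K (2 * n)) :=
  parity_mul_lower ((dunklWeight_eq_zero_iff 0).2 rfl)

theorem normallyOrders_dunkl :
    NormallyOrders (raise K (2 * n)) (lower (dunklWeight K n)) (oddVector K n) := fun a b =>
  (exists_mul_normalOrder_apply lower_mul_raise parity_mul_raise parity_mul_lower_dunklWeight
    a b).imp fun _ hκ j => hκ _ (parity_oddVector j)

theorem parity_normalOrder_oddVector (g : ℕ × ℕ) (j : Fin n) : parity K (2 * n)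
    (normalOrder (raise K (2 * n)) (lower (dunklWeight K n)) g (oddVector K n j)) =
      (-1 : K) ^ (g.1 + g.2 + 1) •
        normalOrder (raise K (2 * n)) (lower (dunklWeight K n)) g (oddVector K n j) := by
  simpa [parity_oddVector, pow_succ] using LinearMap.congr_fun (mul_normalOrder_eq_smul
    parity_mul_raise parity_mul_lower_dunklWeight g.1 g.2) (oddVector K n j)

theorem evenPowerSumIdeal_le_grKer_dunklMap :
    (evenPowerSumIdeal K n).restrictScalars K ≤ grKer (dunklMap K n) :=
  evenPowerSumIdeal_le_grKer_slaterMap normallyOrders_dunkl fun g hg =>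
    ⟨.of fun l j => _, fun j => eq_sum_oddVector <| by
      simpa [pow_succ, hg.1.neg_one_pow] using parity_normalOrder_oddVector (K := K) g j⟩

theorem dunklMap_surjective : Function.Surjective (dunklMap K n) := by
  have hraise (i) (v) (hv : v ∈ (dunklMap K n).range) :
      onCoord i (raise K (2 * n)) v ∈ (dunklMap K n).range := by
    obtain ⟨f, rfl⟩ := hv
    exact ⟨_, slaterMap_X_inl_mul i f⟩
  have hone : dunklMap K n 1 oddIndex = 1 := by
    rw [slaterMap_one, slater]
    simp only [oddVector_apply]
    exact Matrix.det_one
  have hne : (dunklMap K n).range ≠ ⊥ := fun h => by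
    rw [LinearMap.range_eq_bot.1 h] at hone
    exact zero_ne_one hone
  exact LinearMap.range_eq_top.1 <| eq_top_of_raise_mem_of_lower_mem dunklWeight_eq_zero_iff hraise
    (fun i _ => onCoord_mem_range_slaterMap normallyOrders_dunkl i) hne

end DunklMap

section AlternatingFunctions

variable {K α : Type*} [Field K] {n : ℕ}

/-- The functions of `n` positions that change by the sign under permutations of the positions and
vanish unless all positions lie in `P`. -/
def alternatingOn (K : Type*) [Field K] (n : ℕ) (P : Finset α) :
    Submodule K ((Fin n → α) → K) where
  carrier := {v | (∀ (τ : Equiv.Perm (Fin n)) k, v (k ∘ τ) = (Equiv.Perm.sign τ : ℤ) * v k) ∧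
    ∀ k i, k i ∉ P → v k = 0}
  add_mem' hu hv := ⟨fun τ k => by simp only [Pi.add_apply, hu.1, hv.1, mul_add],
    fun k i hi => by simp only [Pi.add_apply, hu.2 k i hi, hv.2 k i hi, add_zero]⟩
  zero_mem' := ⟨fun _ _ => (mul_zero _).symm, fun _ _ _ => rfl⟩
  smul_mem' c _ hv := ⟨fun τ k => by
      simp only [Pi.smul_apply, hv.1, smul_eq_mul, mul_left_comm c],
    fun k i hi => by simp only [Pi.smul_apply, hv.2 k i hi, smul_zero]⟩

theorem sum_sign_mul_comp_mem_alternatingOn {P : Finset α} {u : (Fin n → α) → K}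
    (hu : ∀ k i, k i ∉ P → u k = 0) :
    (fun k => ∑ σ : Equiv.Perm (Fin n), (Equiv.Perm.sign σ : ℤ) * u (k ∘ σ)) ∈
      alternatingOn K n P := by
  refine ⟨fun τ k => ?_, fun k i hi => Finset.sum_eq_zero fun σ _ => ?_⟩
  · rw [Finset.mul_sum, ← Equiv.sum_comp (Equiv.mulLeft τ)]
    refine Finset.sum_congr rfl fun σ _ => ?_
    obtain h | h := Int.units_eq_one_or (Equiv.Perm.sign τ) <;> simp [h, Function.comp_assoc]
  · rw [hu _ (σ⁻¹ i) (by simpa using hi), mul_zero]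

theorem eq_zero_of_not_injective [CharZero K] {P : Finset α} {v : (Fin n → α) → K}
    (hv : v ∈ alternatingOn K n P) {k : Fin n → α} (hk : ¬ Function.Injective k) : v k = 0 := by
  obtain ⟨i, j, hkij, hij⟩ := Function.not_injective_iff.1 hk
  have hswap : k ∘ Equiv.swap i j = k := Equiv.comp_swap_eq_update i j k ▸ by simp [hkij]
  have := hv.1 (Equiv.swap i j) k
  rwa [hswap, Equiv.Perm.sign_swap hij, Units.val_neg, Units.val_one, Int.cast_neg, Int.cast_one,
    neg_one_mul, self_eq_neg] at this

theorem exists_perm_comp_eq_of_range_eq {k l : Fin n → α} (hk : Function.Injective k)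
    (hl : Function.Injective l) (hkl : Set.range k = Set.range l) :
    ∃ σ : Equiv.Perm (Fin n), k ∘ σ = l :=
  ⟨(Equiv.ofInjective l hl).trans ((Equiv.setCongr hkl.symm).trans (Equiv.ofInjective k hk).symm),
    funext fun i => by simp [Equiv.apply_ofInjective_symm]⟩

theorem finrank_alternatingOn_le [CharZero K] (P : Finset α) :
    Module.finrank K (alternatingOn K n P) ≤ P.card.choose n := by
  let enum (s : P.powersetCard n) (i : Fin n) : α :=
    (s.1.equivFinOfCardEq (Finset.mem_powersetCard.1 s.2).2).symm i
  let ev : alternatingOn K n P →ₗ[K] P.powersetCard n → K :=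
    (LinearMap.funLeft K K enum).comp (alternatingOn K n P).subtype
  have hev : Function.Injective ev := by
    refine (injective_iff_map_eq_zero _).2 fun ⟨v, hv⟩ h0 => Subtype.ext <| funext fun k => ?_
    change v k = 0
    by_contra hvk
    have hk : Function.Injective k := by_contra fun h => hvk (eq_zero_of_not_injective hv h)
    have hkP (i) : k i ∈ P := by_contra fun h => hvk (hv.2 k i h)
    let s : P.powersetCard n := ⟨Finset.univ.map ⟨k, hk⟩, Finset.mem_powersetCard.2
      ⟨fun _ hx => by obtain ⟨i, -, rfl⟩ := Finset.mem_map.1 hx; exact hkP i, by simp⟩⟩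
    have hrange : Set.range (enum s) = Set.range k := by
      rw [Set.range_comp' Subtype.val, EquivLike.range_eq_univ, Set.image_univ,
        Subtype.range_coe_subtype]
      simp [s, Set.range]
    obtain ⟨σ, hσ⟩ := exists_perm_comp_eq_of_range_eq (k := enum s)
      (Subtype.val_injective.comp (Equiv.injective _)) hk hrange
    have h0s : v (enum s) = 0 := congrFun h0 s
    exact hvk (by rw [← hσ, hv.1, h0s, mul_zero])
  simpa using LinearMap.finrank_le_finrank_of_injective hev

end AlternatingFunctions

section OddSymmetrization

variable {K α : Type*} [Field K] {n : ℕ}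

/-- The projection of the polynomials onto the isotypic part of the character `(ε, σ) ↦ ∏ i, ε i`
of the group of signed permutations. -/
noncomputable def oddSymmetrization (K : Type*) [Field K] (n : ℕ) :
    MvPolynomial (Fin n ⊕ Fin n) K →ₗ[K] MvPolynomial (Fin n ⊕ Fin n) K :=
  open Classical in
  (basisMonomials _ K).constr K fun s =>
    if ∀ i, Odd (s (Sum.inl i) + s (Sum.inr i)) then
      (n.factorial : K)⁻¹ • ∑ σ : Equiv.Perm (Fin n), rename (Sum.map σ σ) (monomial s 1)
    else 0

theorem oddSymmetrization_monomial {s : Fin n ⊕ Fin n →₀ ℕ}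
    (hs : ∀ i, Odd (s (Sum.inl i) + s (Sum.inr i))) : oddSymmetrization K n (monomial s 1) =
      (n.factorial : K)⁻¹ • ∑ σ : Equiv.Perm (Fin n), rename (Sum.map σ σ) (monomial s 1) :=
  ((basisMonomials _ K).constr_basis _ _ s).trans (if_pos hs)

theorem oddSymmetrization_monomial_eq_zero {s : Fin n ⊕ Fin n →₀ ℕ}
    (hs : ¬ ∀ i, Odd (s (Sum.inl i) + s (Sum.inr i))) :
    oddSymmetrization K n (monomial s 1) = 0 :=
  ((basisMonomials _ K).constr_basis _ _ s).trans (if_neg hs)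

theorem oddSymmetrization_mem_degreeLT {d : ℕ} {f : MvPolynomial (Fin n ⊕ Fin n) K}
    (hf : f ∈ degreeLT (Fin n ⊕ Fin n) K d) :
    oddSymmetrization K n f ∈ degreeLT (Fin n ⊕ Fin n) K d := by
  suffices h : degreeLT (Fin n ⊕ Fin n) K d ≤ (degreeLT _ K d).comap (oddSymmetrization K n) from
    h hf
  rw [degreeLT_eq_span, Submodule.span_le]
  rintro _ ⟨s, hs, rfl⟩
  rw [← degreeLT_eq_span]
  by_cases hodd : ∀ i, Odd (s (Sum.inl i) + s (Sum.inr i))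
  · simp only [Submodule.comap_coe, Set.mem_preimage, oddSymmetrization_monomial hodd,
      SetLike.mem_coe, rename_monomial]
    refine Submodule.smul_mem _ _ (sum_mem fun σ _ => monomial_mem_degreeLT ?_ _)
    rwa [Finsupp.degree_mapDomain]
  · simp [oddSymmetrization_monomial_eq_zero hodd]

theorem bidegree_mapDomain_comp (σ : Equiv.Perm (Fin n)) (s : Fin n ⊕ Fin n →₀ ℕ) :
    bidegree (Finsupp.mapDomain (Sum.map σ σ) s) ∘ σ = bidegree s := by
  have hinj : Function.Injective (Sum.map σ σ) := σ.injective.sumMap σ.injective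
  exact funext fun i => Prod.ext (Finsupp.mapDomain_apply hinj s (Sum.inl i))
    (Finsupp.mapDomain_apply hinj s (Sum.inr i))

variable {x y : Module.End K (α → K)} {o : Fin n → α → K}

theorem slaterMap_rename_monomial_apply (σ : Equiv.Perm (Fin n)) (s : Fin n ⊕ Fin n →₀ ℕ)
    (k : Fin n → α) : slaterMap x y o (rename (Sum.map σ σ) (monomial s 1)) k =
      (Equiv.Perm.sign σ : ℤ) * slaterMap x y o (monomial s 1) (k ∘ σ) := by
  rw [rename_monomial, slaterMap_monomial, slaterMap_monomial, slater, slater]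
  set M := Matrix.of fun i j =>
    normalOrder x y (bidegree (Finsupp.mapDomain (Sum.map σ σ) s) i) (o j) (k i) with hM
  have hsub : (Matrix.of fun i j => normalOrder x y (bidegree s i) (o j) ((k ∘ σ) i)) =
      M.submatrix σ id := by
    ext i j
    simp [hM, ← bidegree_mapDomain_comp σ s]
  rw [hsub, Matrix.det_permute, ← mul_assoc, ← Int.cast_mul, ← Units.val_mul, Int.units_mul_self,
    Units.val_one, Int.cast_one, one_mul]

end OddSymmetrization

section DunklMapSymmetry

variable {K : Type*} [Field K] [CharZero K] {n : ℕ}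

/-- The even elements of `Fin (2 * n + 1)`. -/
def evenIndices (n : ℕ) : Finset (Fin (2 * n + 1)) := {k | Even (k : ℕ)}

theorem card_evenIndices (n : ℕ) : (evenIndices n).card = n + 1 := by
  have himage : evenIndices n = Finset.univ.image fun j : Fin (n + 1) => ⟨2 * j, by lia⟩ := by
    ext k
    simp only [evenIndices, Finset.mem_filter_univ, even_iff_exists_two_mul, Finset.mem_image,
      Finset.mem_univ, true_and, Fin.ext_iff, Fin.exists_iff, exists_prop]
    exact ⟨fun ⟨c, hc⟩ => ⟨c, by lia, hc.symm⟩, fun ⟨c, _, hc⟩ => ⟨c, hc.symm⟩⟩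
  rw [himage, Finset.card_image_of_injective, Finset.card_univ, Fintype.card_fin]
  intro i j hij
  simpa [Fin.ext_iff] using hij

theorem dunklMap_monomial_apply_eq_zero {s : Fin n ⊕ Fin n →₀ ℕ}
    {i : Fin n} (hs : Odd (s (Sum.inl i) + s (Sum.inr i))) {k : Fin n → Fin (2 * n + 1)}
    (hk : k i ∉ evenIndices n) : dunklMap K n (monomial s 1) k = 0 := by
  rw [slaterMap_monomial, slater]
  refine Matrix.det_eq_zero_of_row_eq_zero i fun j => ?_
  have hodd : Odd (k i : ℕ) := by simpa [evenIndices] using hk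
  have := congrFun (parity_normalOrder_oddVector (K := K) (bidegree s i) j) (k i)
  have hs' : Odd ((bidegree s i).1 + (bidegree s i).2) := hs
  rw [parity_apply, hodd.neg_one_pow, Pi.smul_apply, hs'.add_one.neg_one_pow, neg_one_mul,
    one_smul, neg_eq_self] at this
  exact this

theorem dunklMap_oddSymmetrization_mem (f : MvPolynomial (Fin n ⊕ Fin n) K) :
    dunklMap K n (oddSymmetrization K n f) ∈ alternatingOn K n (evenIndices n) := by
  suffices h : (⊤ : Submodule K (MvPolynomial (Fin n ⊕ Fin n) K)) ≤
      (alternatingOn K n (evenIndices n)).comap (dunklMap K n ∘ₗ oddSymmetrization K n) from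
    h Submodule.mem_top
  rw [← (basisMonomials (Fin n ⊕ Fin n) K).span_eq, Submodule.span_le]
  rintro _ ⟨s, rfl⟩
  rw [coe_basisMonomials, SetLike.mem_coe, Submodule.mem_comap, LinearMap.comp_apply]
  by_cases hs : ∀ i, Odd (s (Sum.inl i) + s (Sum.inr i))
  · rw [oddSymmetrization_monomial hs, map_smul, map_sum]
    refine Submodule.smul_mem _ _ ?_
    convert sum_sign_mul_comp_mem_alternatingOn (u := dunklMap K n (monomial s 1))
      fun k i => dunklMap_monomial_apply_eq_zero (hs i)
    rw [Finset.sum_apply]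
    exact Finset.sum_congr rfl fun σ _ => slaterMap_rename_monomial_apply σ s _
  · simp [oddSymmetrization_monomial_eq_zero hs]

theorem finrank_alternatingOn_evenIndices_le :
    Module.finrank K (alternatingOn K n (evenIndices n)) ≤ n + 1 := by
  simpa [card_evenIndices] using finrank_alternatingOn_le (K := K) (n := n) (evenIndices n)

end DunklMapSymmetry

section IteratedPDeriv

variable {K τ : Type*} [CommRing K] {r : ℕ}

theorem commute_pderiv (i j : τ) :
    Commute (pderiv (R := K) i).toLinearMap (pderiv j).toLinearMap := by
  classical
  have h : ⁅(pderiv i : Derivation K (MvPolynomial τ K) _), pderiv j⁆ = 0 :=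
    derivation_ext fun k => by
      rw [Derivation.commutator_apply, pderiv_X, pderiv_X, Pi.single_apply, Pi.single_apply]
      split_ifs <;> simp
  exact LinearMap.ext fun f => sub_eq_zero.1 (DFunLike.congr_fun h f)

/-- The iterated partial derivative with respect to the variables `m 0, …, m (r - 1)`. -/
noncomputable def iterPderiv (m : Fin r → τ) : Module.End K (MvPolynomial τ K) :=
  (List.ofFn fun i => (pderiv (m i)).toLinearMap).prod

theorem iterPderiv_zero (m : Fin 0 → τ) : iterPderiv (K := K) m = 1 := by
  simp [iterPderiv]

theorem iterPderiv_succ (m : Fin (r + 1) → τ) (f : MvPolynomial τ K) :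
    iterPderiv m f = iterPderiv (Fin.init m) (pderiv (m (Fin.last r)) f) := by
  rw [iterPderiv, List.ofFn_succ', List.prod_concat]
  rfl

theorem iterPderiv_comp_perm (σ : Equiv.Perm (Fin r)) (m : Fin r → τ) :
    iterPderiv (K := K) (m ∘ σ) = iterPderiv m :=
  (Equiv.Perm.ofFn_comp_perm σ fun i => (pderiv (m i)).toLinearMap).prod_eq'
    (List.pairwise_ofFn.2 fun _ _ _ => commute_pderiv _ _)

theorem iterPderiv_eq_zero_of_notMem_vars {m : Fin r → τ} {f : MvPolynomial τ K} {i : Fin r}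
    (hi : m i ∉ f.vars) : iterPderiv m f = 0 := by
  cases r with
  | zero => exact i.elim0
  | succ r =>
    rw [← iterPderiv_comp_perm (Equiv.swap i (Fin.last r)), iterPderiv_succ, Function.comp_apply,
      Equiv.swap_apply_right, pderiv_eq_zero_of_notMem_vars hi, map_zero]

theorem eq_zero_of_pderiv_eq_zero [IsDomain K] [CharZero K] {f : MvPolynomial τ K}
    (h0 : constantCoeff f = 0) (h : ∀ i, pderiv i f = 0) : f = 0 := by
  ext s
  obtain rfl | hs := eq_or_ne s 0
  · exact h0
  obtain ⟨i, hi⟩ := Finsupp.ne_iff.1 hs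
  have hle : Finsupp.single i 1 ≤ s := by simpa [Nat.one_le_iff_ne_zero] using hi
  have hcoeff := coeff_pderiv (i := i) f (s - Finsupp.single i 1)
  rw [h i, coeff_zero, tsub_add_cancel_of_le hle, zero_eq_mul] at hcoeff
  exact hcoeff.resolve_right (Nat.cast_add_one_ne_zero _)

theorem eq_zero_of_constantCoeff_iterPderiv_eq_zero [IsDomain K] [CharZero K]
    {f : MvPolynomial τ K} (hf : f.IsHomogeneous r)
    (h0 : ∀ m : Fin r → τ, constantCoeff (iterPderiv m f) = 0) : f = 0 := by
  induction r generalizing f with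
  | zero =>
    have hC := totalDegree_eq_zero_iff_eq_C.1 (Nat.le_zero.1 hf.totalDegree_le)
    have h0' : coeff 0 f = 0 := by simpa [iterPderiv_zero, ← constantCoeff_eq] using h0 Fin.elim0
    rw [hC, h0', C_0]
  | succ r ih =>
    refine eq_zero_of_pderiv_eq_zero (hf.coeff_eq_zero (by simp)) fun i =>
      ih hf.pderiv fun m => ?_
    simpa [iterPderiv_succ] using h0 (Fin.snoc m i)

/-- The derivation of `K[z_p : p ∈ ℕ × ℕ]` mapping `z_p` to `z_{p - g}` if `g ≤ p` and to `0`
otherwise. -/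
noncomputable def shiftDerivation (K : Type*) [CommRing K] (g : ℕ × ℕ) :
    Derivation K (MvPolynomial (ℕ × ℕ) K) (MvPolynomial (ℕ × ℕ) K) :=
  mkDerivation K fun p => if g ≤ p then X (p - g) else 0

theorem shiftDerivation_X (g p : ℕ × ℕ) :
    shiftDerivation K g (X p) = if g ≤ p then X (p - g) else 0 :=
  mkDerivation_X _ _ _

theorem constantCoeff_shiftDerivation (g : ℕ × ℕ) (f : MvPolynomial (ℕ × ℕ) K) :
    constantCoeff (shiftDerivation K g f) = 0 := by
  induction f using MvPolynomial.induction_on with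
  | C a => simp [shiftDerivation]
  | add p q hp hq => simp [hp, hq]
  | mul_X p i hp => by_cases h : g ≤ i <;> simp [hp, h, shiftDerivation_X]

theorem pderiv_shiftDerivation (m g : ℕ × ℕ) (f : MvPolynomial (ℕ × ℕ) K) :
    pderiv m (shiftDerivation K g f) = shiftDerivation K g (pderiv m f) + pderiv (m + g) f := by
  have h : ⁅pderiv m, shiftDerivation K g⁆ = pderiv (m + g) := derivation_ext fun p => by
    have hsub : p = m + g ↔ g ≤ p ∧ p - g = m :=
      ⟨fun h => by simp [h], fun h => (tsub_eq_iff_eq_add_of_le h.1).1 h.2⟩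
    rw [Derivation.commutator_apply, shiftDerivation_X, pderiv_X, pderiv_X]
    by_cases h : g ≤ p <;> by_cases h' : p - g = m <;>
      simp [h, h', pderiv_X, Pi.single_apply, hsub, apply_ite (shiftDerivation K g)]
  rw [← h, Derivation.commutator_apply, add_sub_cancel]

theorem iterPderiv_shiftDerivation (m : Fin r → ℕ × ℕ) (g : ℕ × ℕ) (f : MvPolynomial (ℕ × ℕ) K) :
    iterPderiv m (shiftDerivation K g f) = shiftDerivation K g (iterPderiv m f) +
      ∑ i, iterPderiv (Function.update m i (m i + g)) f := by
  induction r generalizing f with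
  | zero => simp [iterPderiv_zero]
  | succ r ih =>
    simp only [Fin.sum_univ_castSucc, iterPderiv_succ, Fin.init_update_castSucc,
      Fin.init_update_last, Function.update_self, pderiv_shiftDerivation, map_add, ih]
    simp [Fin.init, add_assoc, Function.update_of_ne (Fin.castSucc_ne_last _).symm]

end IteratedPDeriv

section DerivativePairing

variable {K : Type*} [Field K] {n : ℕ}

/-- The solutions `φ ∈ K[z_p : p ∈ ℕ × ℕ]` of degree `r`, in variables with `p.1 + p.2` odd, of the
equations that make the functional `derivativePairing K r φ` vanish on `evenPowerSumIdeal K r`. -/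
noncomputable def oddInvariants (K : Type*) [Field K] (r : ℕ) :
    Submodule K (MvPolynomial (ℕ × ℕ) K) :=
  homogeneousSubmodule (ℕ × ℕ) K r ⊓ (supported K {p : ℕ × ℕ | Odd (p.1 + p.2)}).toSubmodule ⊓
    ⨅ g ∈ evenBidegrees, (shiftDerivation K g).toLinearMap.ker

theorem mem_oddInvariants {r : ℕ} {φ : MvPolynomial (ℕ × ℕ) K} :
    φ ∈ oddInvariants K r ↔ φ.IsHomogeneous r ∧ φ ∈ supported K {p : ℕ × ℕ | Odd (p.1 + p.2)} ∧
      ∀ g ∈ evenBidegrees, shiftDerivation K g φ = 0 := by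
  simp [oddInvariants, and_assoc]

/-- The bilinear form `⟨φ, ∏ i, x i ^ a i * y i ^ b i⟩ = (∏ i, ∂ / ∂z_{(a i, b i)}) φ (0)`. -/
noncomputable def derivativePairing (K : Type*) [Field K] (n : ℕ) :
    MvPolynomial (ℕ × ℕ) K →ₗ[K] MvPolynomial (Fin n ⊕ Fin n) K →ₗ[K] K :=
  ((basisMonomials (Fin n ⊕ Fin n) K).constr K fun s => lcoeff K 0 ∘ₗ iterPderiv (bidegree s)).flip

theorem derivativePairing_monomial (φ : MvPolynomial (ℕ × ℕ) K) (s : Fin n ⊕ Fin n →₀ ℕ) :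
    derivativePairing K n φ (monomial s 1) = constantCoeff (iterPderiv (bidegree s) φ) :=
  LinearMap.congr_fun ((basisMonomials _ K).constr_basis K _ s) φ

theorem eq_zero_of_derivativePairing_eq_zero [CharZero K] {φ : MvPolynomial (ℕ × ℕ) K}
    (hφ : φ.IsHomogeneous n) (h : derivativePairing K n φ = 0) : φ = 0 :=
  eq_zero_of_constantCoeff_iterPderiv_eq_zero hφ fun m => by
    have := derivativePairing_monomial φ
      (Finsupp.equivFunOnFinite.symm (Sum.elim (Prod.fst ∘ m) (Prod.snd ∘ m)))
    rw [h] at this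
    exact this.symm

theorem surjective_flip_domRestrict_derivativePairing [CharZero K]
    {V : Submodule K (MvPolynomial (ℕ × ℕ) K)} [Module.Finite K V]
    (hV : V ≤ homogeneousSubmodule (ℕ × ℕ) K n) :
    Function.Surjective ((derivativePairing K n).domRestrict V).flip :=
  LinearMap.flip_surjective_iff₁.2 <| (injective_iff_map_eq_zero _).2 fun φ h =>
    Subtype.ext (eq_zero_of_derivativePairing_eq_zero (hV φ.2) h)

theorem derivativePairing_monomial_mul_polarizedPowerSum {g : ℕ × ℕ} {φ : MvPolynomial (ℕ × ℕ) K}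
    (hφ : shiftDerivation K g φ = 0) (s : Fin n ⊕ Fin n →₀ ℕ) :
    derivativePairing K n φ (monomial s 1 * polarizedPowerSum K n g) = 0 := by
  have hupdate (i) : bidegree (s + (Finsupp.single (Sum.inl i) g.1 +
      Finsupp.single (Sum.inr i) g.2)) = Function.update (bidegree s) i (bidegree s i + g) := by
    ext1 j
    obtain rfl | hj := eq_or_ne j i
    · simp [bidegree, Prod.ext_iff]
    · simp [bidegree, hj]
  have hshift := congrArg constantCoeff (iterPderiv_shiftDerivation (bidegree s) g φ)
  rw [hφ, map_zero, map_zero, map_add, constantCoeff_shiftDerivation, zero_add, map_sum] at hshift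
  rw [hshift, polarizedPowerSum, Finset.mul_sum, map_sum]
  refine Finset.sum_congr rfl fun i _ => ?_
  rw [pairMonomial_eq_monomial, monomial_mul, one_mul, derivativePairing_monomial, hupdate]

theorem derivativePairing_eq_zero_of_mem_evenPowerSumIdeal {φ : MvPolynomial (ℕ × ℕ) K}
    (hφ : ∀ g ∈ evenBidegrees, shiftDerivation K g φ = 0) {f : MvPolynomial (Fin n ⊕ Fin n) K}
    (hf : f ∈ evenPowerSumIdeal K n) : derivativePairing K n φ f = 0 := by
  suffices ∀ h, derivativePairing K n φ (h * f) = 0 by simpa using this 1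
  induction hf using Submodule.span_induction with
  | mem f hf =>
    obtain ⟨g, hg, rfl⟩ := hf
    suffices derivativePairing K n φ ∘ₗ LinearMap.mulRight K (polarizedPowerSum K n g) = 0 from
      LinearMap.congr_fun this
    refine (basisMonomials _ K).ext fun s => ?_
    rw [coe_basisMonomials]
    exact derivativePairing_monomial_mul_polarizedPowerSum (hφ g hg) s
  | zero => simp
  | add f g _ _ hf hg => intro h; rw [mul_add, map_add, hf, hg, add_zero]
  | smul a f _ hf => intro h; rw [smul_eq_mul, ← mul_assoc, hf]

theorem derivativePairing_oddSymmetrization [CharZero K] {φ : MvPolynomial (ℕ × ℕ) K}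
    (hφ : φ ∈ supported K {p : ℕ × ℕ | Odd (p.1 + p.2)}) (f : MvPolynomial (Fin n ⊕ Fin n) K) :
    derivativePairing K n φ (oddSymmetrization K n f) = derivativePairing K n φ f := by
  suffices derivativePairing K n φ ∘ₗ oddSymmetrization K n = derivativePairing K n φ from
    LinearMap.congr_fun this f
  refine (basisMonomials _ K).ext fun s => ?_
  rw [coe_basisMonomials, LinearMap.comp_apply]
  by_cases hs : ∀ i, Odd (s (Sum.inl i) + s (Sum.inr i))
  · have hperm (σ : Equiv.Perm (Fin n)) : derivativePairing K n φ
        (rename (Sum.map σ σ) (monomial s 1)) = derivativePairing K n φ (monomial s 1) := by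
      rw [rename_monomial, derivativePairing_monomial, derivativePairing_monomial,
        ← iterPderiv_comp_perm σ, bidegree_mapDomain_comp]
    rw [oddSymmetrization_monomial hs, map_smul, map_sum, Finset.sum_congr rfl fun σ _ => hperm σ]
    simp [Fintype.card_perm, n.factorial_ne_zero]
  · obtain ⟨i, hi⟩ := not_forall.1 hs
    rw [oddSymmetrization_monomial_eq_zero hs, map_zero, derivativePairing_monomial,
      iterPderiv_eq_zero_of_notMem_vars (i := i) fun h => hi (mem_supported.1 hφ h), map_zero]

end DerivativePairing

section DimensionBound

variable {K : Type*} [Field K] [CharZero K] {n : ℕ}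

theorem pow_add_finrank_le {V : Submodule K (MvPolynomial (ℕ × ℕ) K)} (hV : V ≤ oddInvariants K n)
    [Module.Finite K V] [Module.Finite K (MvPolynomial (Fin n ⊕ Fin n) K ⧸ evenPowerSumIdeal K n)] :
    (2 * n + 1) ^ n + Module.finrank K V ≤
      Module.finrank K (MvPolynomial (Fin n ⊕ Fin n) K ⧸ evenPowerSumIdeal K n) + (n + 1) := by
  let J := (evenPowerSumIdeal K n).restrictScalars K
  let equivJ : (MvPolynomial (Fin n ⊕ Fin n) K ⧸ J) ≃ₗ[K] _ :=
    Submodule.Quotient.restrictScalarsEquiv K (evenPowerSumIdeal K n)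
  have : Module.Finite K (MvPolynomial (Fin n ⊕ Fin n) K ⧸ J) := Module.Finite.equiv equivJ.symm
  have hV' (φ : V) := mem_oddInvariants.1 (hV φ.2)
  have hle := finrank_add_finrank_le dunklMap_surjective evenPowerSumIdeal_le_grKer_dunklMap
    (fun f hf d => homogeneousComponent_mem_evenPowerSumIdeal hf d)
    (fun d f => oddSymmetrization_mem_degreeLT) dunklMap_oddSymmetrization_mem
    (surjective_flip_domRestrict_derivativePairing fun φ hφ => (hV' ⟨φ, hφ⟩).1)
    (fun f => LinearMap.ext fun φ => derivativePairing_oddSymmetrization (hV' φ).2.1 f)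
    fun f hf => LinearMap.ext fun φ =>
      derivativePairing_eq_zero_of_mem_evenPowerSumIdeal (hV' φ).2.2 hf
  rw [equivJ.finrank_eq, Subspace.dual_finrank_eq, Module.finrank_fintype_fun_eq_card,
    Fintype.card_fun, Fintype.card_fin, Fintype.card_fin] at hle
  exact hle.trans (Nat.add_le_add_left finrank_alternatingOn_evenIndices_le _)

end DimensionBound

section GradedInvariants

variable {K : Type*} [Field K]

instance gradedMonoid_oddInvariants : SetLike.GradedMonoid (oddInvariants K) where
  one_mem := mem_oddInvariants.2
    ⟨isHomogeneous_one _ _, one_mem _, fun g _ => (shiftDerivation K g).map_one_eq_zero⟩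
  mul_mem r s φ χ hφ hχ := by
    rw [mem_oddInvariants] at hφ hχ ⊢
    refine ⟨hφ.1.mul hχ.1, mul_mem hφ.2.1 hχ.2.1, fun g hg => ?_⟩
    rw [Derivation.leibniz, hφ.2.2 g hg, hχ.2.2 g hg, smul_zero, smul_zero, add_zero]

theorem two_le_of_mem_evenBidegrees {g : ℕ × ℕ} (hg : g ∈ evenBidegrees) : 2 ≤ g.1 + g.2 := by
  obtain ⟨⟨c, hc⟩, h0⟩ := hg
  have : g.1 + g.2 ≠ 0 := fun h => h0 (Prod.ext (by simp; lia) (by simp; lia))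
  lia

theorem shiftDerivation_X_eq_zero {g p : ℕ × ℕ} (h : p.1 + p.2 < g.1 + g.2) :
    shiftDerivation K g (X p) = 0 := by
  rw [shiftDerivation_X, if_neg]
  rintro ⟨h1, h2⟩
  lia

theorem X_mem_oddInvariants {p : ℕ × ℕ} (hp : p.1 + p.2 = 1) : X p ∈ oddInvariants K 1 :=
  mem_oddInvariants.2 ⟨isHomogeneous_X _ _, X_mem_supported.2 (by simp [hp]), fun _ hg =>
    shiftDerivation_X_eq_zero (hp ▸ two_le_of_mem_evenBidegrees hg)⟩

theorem pderiv_mem_supported {R τ : Type*} [CommSemiring R] {s : Set τ} {f : MvPolynomial τ R}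
    (hf : f ∈ supported R s) (i : τ) : pderiv i f ∈ supported R s := by
  classical
  rw [supported] at hf
  induction hf using Algebra.adjoin_induction with
  | mem f hf =>
    obtain ⟨j, -, rfl⟩ := hf
    rw [pderiv_X, Pi.single_apply]
    split_ifs
    exacts [one_mem _, zero_mem _]
  | algebraMap r => simp [algebraMap_eq]
  | add f g _ _ hf hg => simpa using add_mem hf hg
  | mul f g hfs hgs hf hg =>
    rw [pderiv_mul]
    exact add_mem (mul_mem hf hgs) (mul_mem hfs hg)

end GradedInvariants

section BinaryForms

open Finset.HasAntidiagonal (antidiagonal mem_antidiagonal)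

variable {K : Type*} [Field K]

/-- The value of the monomial `u ^ i * v ^ j`, for `p = (i, j)`, at the zero
`(u, v) = (z₀₁, -z₁₀)` of the linear form `z₁₀ u + z₀₁ v`. -/
noncomputable def rootMonomial (K : Type*) [Field K] (p : ℕ × ℕ) : MvPolynomial (ℕ × ℕ) K :=
  (-1) ^ p.2 * (X (0, 1) ^ p.1 * X (1, 0) ^ p.2)

theorem rootMonomial_add (p q : ℕ × ℕ) :
    rootMonomial K (p + q) = rootMonomial K p * rootMonomial K q := by
  simp only [rootMonomial, Prod.fst_add, Prod.snd_add, pow_add]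
  ring

theorem isHomogeneous_rootMonomial (p : ℕ × ℕ) :
    (rootMonomial K p).IsHomogeneous (p.1 + p.2) := by
  have h : (-1 : MvPolynomial (ℕ × ℕ) K) ^ p.2 = C ((-1) ^ p.2) := by simp
  rw [rootMonomial, h, ← smul_eq_C_mul]
  exact Submodule.smul_mem (homogeneousSubmodule _ K _) _
    ((isHomogeneous_X_pow _ _).mul (isHomogeneous_X_pow _ _))

theorem rootMonomial_mem_supported (p : ℕ × ℕ) :
    rootMonomial K p ∈ supported K {p : ℕ × ℕ | Odd (p.1 + p.2)} :=
  mul_mem (pow_mem (neg_mem (one_mem _)) _) (mul_mem (pow_mem (X_mem_supported.2 (by simp)) _)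
    (pow_mem (X_mem_supported.2 (by simp)) _))

theorem derivation_rootMonomial_eq_zero
    {D : Derivation K (MvPolynomial (ℕ × ℕ) K) (MvPolynomial (ℕ × ℕ) K)}
    (h01 : D (X (0, 1)) = 0) (h10 : D (X (1, 0)) = 0) (p : ℕ × ℕ) : D (rootMonomial K p) = 0 := by
  simp [rootMonomial, Derivation.leibniz_pow, h01, h10]

theorem shiftDerivation_rootMonomial {g : ℕ × ℕ} (hg : g ∈ evenBidegrees) (p : ℕ × ℕ) :
    shiftDerivation K g (rootMonomial K p) = 0 :=
  derivation_rootMonomial_eq_zero (shiftDerivation_X_eq_zero (two_le_of_mem_evenBidegrees hg))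
    (shiftDerivation_X_eq_zero (two_le_of_mem_evenBidegrees hg)) p

theorem pderiv_rootMonomial {m : ℕ × ℕ} (hm : 1 < m.1 + m.2) (p : ℕ × ℕ) :
    pderiv m (rootMonomial K p) = 0 :=
  derivation_rootMonomial_eq_zero (pderiv_X_of_ne (by rintro rfl; simp at hm))
    (pderiv_X_of_ne (by rintro rfl; simp at hm)) p

/-- The value of the form `∑ z_{(i, j)} u ^ i * v ^ j` of degree `d` at the zero
`(u, v) = (z₀₁, -z₁₀)` of the linear form. -/
noncomputable def binaryForm (K : Type*) [Field K] (d : ℕ) : MvPolynomial (ℕ × ℕ) K :=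
  ∑ p ∈ antidiagonal d, X p * rootMonomial K p

theorem binaryForm_one : binaryForm K 1 = 0 := by
  simp [binaryForm, rootMonomial, Finset.Nat.antidiagonal_succ, mul_comm]

theorem isHomogeneous_binaryForm (d : ℕ) : (binaryForm K d).IsHomogeneous (d + 1) := by
  refine IsHomogeneous.sum _ _ _ fun p hp => ?_
  rw [← mem_antidiagonal.1 hp, add_comm]
  exact (isHomogeneous_X _ _).mul (isHomogeneous_rootMonomial p)

theorem binaryForm_mem_supported {d : ℕ} (hd : Odd d) :
    binaryForm K d ∈ supported K {p : ℕ × ℕ | Odd (p.1 + p.2)} := by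
  refine sum_mem fun p hp => mul_mem (X_mem_supported.2 ?_) (rootMonomial_mem_supported p)
  rwa [← mem_antidiagonal.1 hp] at hd

theorem shiftDerivation_binaryForm {g : ℕ × ℕ} (hg : g ∈ evenBidegrees) (d : ℕ) :
    shiftDerivation K g (binaryForm K d) =
      if g.1 + g.2 ≤ d then rootMonomial K g * binaryForm K (d - (g.1 + g.2)) else 0 := by
  have hterm (p : ℕ × ℕ) : shiftDerivation K g (X p * rootMonomial K p) =
      shiftDerivation K g (X p) * rootMonomial K p := by
    simp [shiftDerivation_rootMonomial hg, mul_comm]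
  rw [binaryForm, map_sum, Finset.sum_congr rfl fun p _ => hterm p]
  split_ifs with h
  · rw [binaryForm, Finset.mul_sum]
    refine (Finset.sum_of_injOn (· + g) (add_left_injective g).injOn ?_ ?_ ?_).symm
    · intro p hp
      simp only [Finset.mem_coe, mem_antidiagonal, Prod.fst_add, Prod.snd_add] at hp ⊢
      lia
    · intro p hp hpg
      rw [shiftDerivation_X, if_neg, zero_mul]
      refine fun hle => hpg ⟨p - g, ?_, tsub_add_cancel_of_le hle⟩
      simp only [Finset.mem_coe, mem_antidiagonal, Prod.fst_sub, Prod.snd_sub] at hp ⊢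
      have := hle.1
      have := hle.2
      lia
    · intro p _
      rw [shiftDerivation_X, if_pos le_add_self, add_tsub_cancel_right, rootMonomial_add]
      ring
  · refine Finset.sum_eq_zero fun p hp => ?_
    have hlt : p.1 + p.2 < g.1 + g.2 := by rwa [mem_antidiagonal.1 hp, ← not_le]
    rw [shiftDerivation_X_eq_zero hlt, zero_mul]

theorem pderiv_binaryForm {m : ℕ × ℕ} (hm : 1 < m.1 + m.2) (d : ℕ) :
    pderiv m (binaryForm K d) = if m.1 + m.2 = d then rootMonomial K m else 0 := by
  simp [binaryForm, pderiv_rootMonomial hm, pderiv_X, Pi.single_apply]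

end BinaryForms

section SepticForms

variable {K : Type*} [Field K]

theorem shiftDerivation_binaryForm_three {g : ℕ × ℕ} (hg : g ∈ evenBidegrees) :
    shiftDerivation K g (binaryForm K 3) = 0 := by
  have h2 := two_le_of_mem_evenBidegrees hg
  rw [shiftDerivation_binaryForm hg]
  split_ifs with h
  · have : g.1 + g.2 = 2 := by obtain ⟨⟨c, hc⟩, -⟩ := hg; lia
    rw [this, binaryForm_one, mul_zero]
  · rfl

theorem shiftDerivation_binaryForm_five {g : ℕ × ℕ} (hg : g ∈ evenBidegrees) :
    shiftDerivation K g (binaryForm K 5) =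
      if g.1 + g.2 = 2 then rootMonomial K g * binaryForm K 3 else 0 := by
  have h2 := two_le_of_mem_evenBidegrees hg
  rw [shiftDerivation_binaryForm hg]
  split_ifs with h5 h h
  · rw [h]
  · have : g.1 + g.2 = 4 := by obtain ⟨⟨c, hc⟩, -⟩ := hg; lia
    rw [this, binaryForm_one, mul_zero]
  · lia
  · rfl

theorem binaryForm_three_mem_oddInvariants : binaryForm K 3 ∈ oddInvariants K 4 :=
  mem_oddInvariants.2 ⟨isHomogeneous_binaryForm 3, binaryForm_mem_supported (by decide),
    fun _ => shiftDerivation_binaryForm_three⟩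

/-- For `e = (1, 0)` and `e = (0, 1)`, the two invariants of degree seven: the quintic form times
the value of `u` or `v`, corrected by a multiple of the cubic form. -/
noncomputable def septicForm (K : Type*) [Field K] (e : ℕ × ℕ) : MvPolynomial (ℕ × ℕ) K :=
  rootMonomial K e * binaryForm K 5 + binaryForm K 3 * pderiv e (binaryForm K 3)

theorem shiftDerivation_septicForm {g e : ℕ × ℕ} (hg : g ∈ evenBidegrees) (he : e.1 + e.2 = 1) :
    shiftDerivation K g (septicForm K e) = 0 := by
  have hcubic : shiftDerivation K g (pderiv e (binaryForm K 3)) =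
      -if g.1 + g.2 = 2 then rootMonomial K e * rootMonomial K g else 0 := by
    have h := pderiv_shiftDerivation e g (binaryForm K 3)
    have h2 := two_le_of_mem_evenBidegrees hg
    have hm : (e + g).1 + (e + g).2 = 3 ↔ g.1 + g.2 = 2 := by
      rw [Prod.fst_add, Prod.snd_add]
      lia
    rw [shiftDerivation_binaryForm_three hg, map_zero,
      pderiv_binaryForm (m := e + g) (by rw [Prod.fst_add, Prod.snd_add]; lia),
      rootMonomial_add] at h
    simp only [hm] at h
    exact eq_neg_of_add_eq_zero_left h.symm
  simp only [septicForm, map_add, Derivation.leibniz, smul_eq_mul, shiftDerivation_rootMonomial hg,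
    shiftDerivation_binaryForm_three hg, shiftDerivation_binaryForm_five hg, hcubic]
  split_ifs <;> ring

theorem septicForm_mem_oddInvariants {e : ℕ × ℕ} (he : e.1 + e.2 = 1) :
    septicForm K e ∈ oddInvariants K 7 := by
  have h3 := binaryForm_mem_supported (K := K) (d := 3) (by decide)
  have hdeg : (rootMonomial K e).IsHomogeneous 1 := he ▸ isHomogeneous_rootMonomial e
  refine mem_oddInvariants.2 ⟨?_, ?_, fun _ hg => shiftDerivation_septicForm hg he⟩
  · exact (hdeg.mul (isHomogeneous_binaryForm 5)).add
      ((isHomogeneous_binaryForm 3).mul (isHomogeneous_binaryForm 3).pderiv)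
  · exact add_mem (mul_mem (rootMonomial_mem_supported e) (binaryForm_mem_supported (by decide)))
      (mul_mem h3 (pderiv_mem_supported h3 e))

end SepticForms

section LinearIndependence

theorem linearIndependent_of_triangular {R M ι : Type*} [CommRing R] [IsDomain R] [AddCommGroup M]
    [Module R M] {v : ι → M} (ℓ : ι → Module.Dual R M) (r : ι → ℕ) (hdiag : ∀ i, ℓ i (v i) ≠ 0)
    (htri : ∀ i j, i ≠ j → ℓ i (v j) ≠ 0 → r j < r i) : LinearIndependent R v := by
  refine linearIndependent_iff'.2 fun s g hg i => ?_
  induction hr : r i using Nat.strong_induction_on generalizing i with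
  | _ _ ih =>
    subst hr
    intro hi
    have hsum : ∑ j ∈ s, g j * ℓ i (v j) = 0 := by simpa using congrArg (ℓ i) hg
    rw [Finset.sum_eq_single_of_mem i hi fun j hj hji => ?_] at hsum
    · exact (mul_eq_zero.1 hsum).resolve_right (hdiag i)
    · by_contra hne
      exact left_ne_zero_of_mul hne
        (ih _ (htri i j hji.symm (right_ne_zero_of_mul hne)) j rfl hj)

end LinearIndependence

section InvariantFamily

variable (K : Type*) [Field K]

/-- A family of invariants of degree `n`, for `v ≠ 1` and `α ≤ n - 2 * v`; it is built so that
`specialization` sends the member indexed by `v` and `α` to a polynomial with leading monomial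
`a ^ α * c ^ s * q ^ t`, where `v = 2 * s + 3 * t` and `t ≤ 1`. -/
noncomputable def invariantFamily (n v α : ℕ) : MvPolynomial (ℕ × ℕ) K :=
  if Even v then X (1, 0) ^ α * X (0, 1) ^ (n - 2 * v - α) * binaryForm K 3 ^ (v / 2)
  else if α < n - 2 * v then X (1, 0) ^ α * X (0, 1) ^ (n - 2 * v - 1 - α) *
    septicForm K (1, 0) * binaryForm K 3 ^ ((v - 3) / 2)
  else X (1, 0) ^ (α - 1) * septicForm K (0, 1) * binaryForm K 3 ^ ((v - 3) / 2)

/-- Specializes `z₁₀`, `z₀₁`, `z₃₀`, `z₅₀` to `a`, `1`, `c`, `q`, and all other variables to zero;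
here `a`, `c`, `q` are the three variables of the target. -/
noncomputable def specialization : MvPolynomial (ℕ × ℕ) K →ₐ[K] MvPolynomial (Fin 3) K :=
  aeval fun p => if p = (1, 0) then X 0 else if p = (0, 1) then 1 else
    if p = (3, 0) then X 1 else if p = (5, 0) then X 2 else 0

/-- The exponent of the monomial `a ^ α * c ^ s * q ^ t`. -/
noncomputable def exponent (α s t : ℕ) : Fin 3 →₀ ℕ := Finsupp.equivFunOnFinite.symm ![α, s, t]

variable {K}

theorem exponent_inj {α β s s' t t' : ℕ} :
    exponent α s t = exponent β s' t' ↔ α = β ∧ s = s' ∧ t = t' := by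
  simp [exponent]

theorem monomial_exponent (α s t : ℕ) :
    monomial (exponent α s t) (1 : K) = X 0 ^ α * X 1 ^ s * X 2 ^ t := by
  rw [monomial_eq, Finsupp.prod_fintype _ _ fun _ => pow_zero _, Fin.prod_univ_three]
  simp [exponent]

theorem specialization_X (p : ℕ × ℕ) :
    specialization K (X p) = if p = (1, 0) then X 0 else if p = (0, 1) then 1 else
      if p = (3, 0) then X 1 else if p = (5, 0) then X 2 else 0 :=
  aeval_X _ _

theorem specialization_binaryForm_three : specialization K (binaryForm K 3) = X 1 := by
  simp [binaryForm, rootMonomial, specialization_X, Finset.Nat.antidiagonal_succ]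

theorem specialization_septicForm_one_zero : specialization K (septicForm K (1, 0)) = X 2 := by
  simp [septicForm, binaryForm, rootMonomial, specialization_X, Finset.Nat.antidiagonal_succ,
    pderiv_X]

theorem specialization_septicForm_zero_one :
    specialization K (septicForm K (0, 1)) = 3 * X 1 ^ 2 - X 0 * X 2 := by
  simp [septicForm, binaryForm, rootMonomial, specialization_X, Finset.Nat.antidiagonal_succ,
    pderiv_X, map_ofNat (specialization K) 3]
  ring

theorem specialization_invariantFamily_of_even {n v α : ℕ} (hv : Even v) :
    specialization K (invariantFamily K n v α) = monomial (exponent α (v / 2) 0) 1 := by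
  simp [invariantFamily, hv, specialization_X, specialization_binaryForm_three, monomial_exponent]

theorem specialization_invariantFamily_of_odd_of_lt {n v α : ℕ} (hv : Odd v)
    (hα : α < n - 2 * v) :
    specialization K (invariantFamily K n v α) = monomial (exponent α ((v - 3) / 2) 1) 1 := by
  simp [invariantFamily, Nat.not_even_iff_odd.2 hv, hα, specialization_X,
    specialization_binaryForm_three, specialization_septicForm_one_zero, monomial_exponent]
  ring

theorem specialization_invariantFamily_of_odd_of_not_lt {n v α : ℕ} (hv : Odd v)
    (hα : ¬ α < n - 2 * v) (h0 : α ≠ 0) :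
    specialization K (invariantFamily K n v α) =
      monomial (exponent (α - 1) ((v - 3) / 2 + 2) 0) 3 -
        monomial (exponent α ((v - 3) / 2) 1) 1 := by
  obtain ⟨β, rfl⟩ := Nat.exists_eq_succ_of_ne_zero h0
  have h3 (e : Fin 3 →₀ ℕ) : monomial e (3 : K) = 3 * monomial e 1 := by
    rw [← mul_one (3 : K), ← C_mul_monomial, map_ofNat]
  simp [invariantFamily, Nat.not_even_iff_odd.2 hv, hα, specialization_X, h3,
    specialization_binaryForm_three, specialization_septicForm_zero_one, monomial_exponent]
  ring

theorem invariantFamily_mem_oddInvariants {k v α : ℕ} (hv : v ≤ k) (hv1 : v ≠ 1)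
    (hα : α < 2 * (k + 1 - v)) :
    invariantFamily K (2 * k + 1) v α ∈ oddInvariants K (2 * k + 1) := by
  have ha (e : ℕ) : X (1, 0) ^ e ∈ oddInvariants K e := by
    simpa using SetLike.pow_mem_graded e (X_mem_oddInvariants (K := K) (p := (1, 0)) rfl)
  have hb (e : ℕ) : X (0, 1) ^ e ∈ oddInvariants K e := by
    simpa using SetLike.pow_mem_graded e (X_mem_oddInvariants (K := K) (p := (0, 1)) rfl)
  have hc (e : ℕ) : binaryForm K 3 ^ e ∈ oddInvariants K (e * 4) :=
    SetLike.pow_mem_graded e binaryForm_three_mem_oddInvariants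
  have hp := septicForm_mem_oddInvariants (K := K) (e := (0, 1)) rfl
  have hq := septicForm_mem_oddInvariants (K := K) (e := (1, 0)) rfl
  rw [invariantFamily]
  split_ifs with heven hlt
  · convert SetLike.mul_mem_graded (SetLike.mul_mem_graded (ha _) (hb _)) (hc _) using 2
    obtain ⟨j, rfl⟩ := heven
    lia
  all_goals obtain ⟨j, rfl⟩ := Nat.not_even_iff_odd.1 heven
  · convert SetLike.mul_mem_graded (SetLike.mul_mem_graded (SetLike.mul_mem_graded (ha _) (hb _))
      hq) (hc _) using 2
    lia
  · convert SetLike.mul_mem_graded (SetLike.mul_mem_graded (ha _) hp) (hc _) using 2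
    lia

/-- The indices `⟨v, α⟩` of the members of `invariantFamily` in degree `2 * k + 1`. -/
def familyIndices (k : ℕ) : Finset (Σ _ : ℕ, ℕ) :=
  ((Finset.range (k + 1)).erase 1).sigma fun v => Finset.range (2 * (k + 1 - v))

theorem mem_familyIndices {k : ℕ} {i : Σ _ : ℕ, ℕ} :
    i ∈ familyIndices k ↔ i.1 ≤ k ∧ i.1 ≠ 1 ∧ i.2 < 2 * (k + 1 - i.1) := by
  simp [familyIndices]
  tauto

theorem card_familyIndices (k : ℕ) : (familyIndices k).card + 2 * k = (k + 1) * (k + 2) := by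
  have hsum : ∑ v ∈ Finset.range (k + 1), 2 * (k + 1 - v) = (k + 1) * (k + 2) := by
    induction k with
    | zero => rfl
    | succ k ih =>
      simp only [Finset.sum_range_succ' _ (k + 1), Nat.add_sub_add_right, ih, Nat.sub_zero]
      ring
  rw [familyIndices, Finset.card_sigma, ← hsum]
  simp only [Finset.card_range]
  cases k with
  | zero => rfl
  | succ k =>
    rw [add_comm, ← Finset.add_sum_erase (Finset.range (k + 1 + 1)) _ (a := 1) (by simp)]
    rfl

/-- The exponent `(α, s, t)` for which `v = 2 * s + 3 * t` and `t ≤ 1`. -/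
noncomputable def leadingExponent (v α : ℕ) : Fin 3 →₀ ℕ :=
  exponent α ((v - 3 * (v % 2)) / 2) (v % 2)

theorem leadingExponent_of_even {v : ℕ} (hv : Even v) (α : ℕ) :
    leadingExponent v α = exponent α (v / 2) 0 := by
  rw [leadingExponent, Nat.even_iff.1 hv, mul_zero, tsub_zero]

theorem leadingExponent_of_odd {v : ℕ} (hv : Odd v) (α : ℕ) :
    leadingExponent v α = exponent α ((v - 3) / 2) 1 := by
  rw [leadingExponent, Nat.odd_iff.1 hv, mul_one]

theorem leadingExponent_inj {v w α β : ℕ} (hv : v ≠ 1) (hw : w ≠ 1) :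
    leadingExponent v α = leadingExponent w β ↔ v = w ∧ α = β := by
  rw [leadingExponent, leadingExponent, exponent_inj]
  lia

theorem coeff_leadingExponent_self_ne_zero {n v α : ℕ} (hn : 2 * v < n) :
    coeff (leadingExponent v α) (specialization K (invariantFamily K n v α)) ≠ 0 := by
  rcases Nat.even_or_odd v with hv | hv
  · simp [specialization_invariantFamily_of_even, leadingExponent_of_even, hv]
  · by_cases hα : α < n - 2 * v
    · simp [specialization_invariantFamily_of_odd_of_lt hv hα, leadingExponent_of_odd hv]
    · have h0 : α ≠ 0 := by lia
      simp [specialization_invariantFamily_of_odd_of_not_lt hv hα h0, leadingExponent_of_odd hv,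
        coeff_monomial, exponent_inj]

theorem even_and_odd_of_coeff_leadingExponent_ne_zero {n v w α β : ℕ} (hv : v ≠ 1) (hw : w ≠ 1)
    (hn : 2 * w < n) (hne : (v, α) ≠ (w, β))
    (h : coeff (leadingExponent v α) (specialization K (invariantFamily K n w β)) ≠ 0) :
    Even v ∧ Odd w := by
  have hne' : leadingExponent w β ≠ leadingExponent v α := by
    rw [Ne, leadingExponent_inj hw hv]
    rintro ⟨rfl, rfl⟩
    exact hne rfl
  have hodd : Odd w := by
    by_contra hw'
    rw [Nat.not_odd_iff_even] at hw'
    rw [specialization_invariantFamily_of_even hw', ← leadingExponent_of_even hw',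
      coeff_monomial, if_neg hne'] at h
    exact h rfl
  refine ⟨?_, hodd⟩
  by_contra hv'
  rw [Nat.not_even_iff_odd] at hv'
  refine h ?_
  by_cases hβ : β < n - 2 * w
  · rw [specialization_invariantFamily_of_odd_of_lt hodd hβ, ← leadingExponent_of_odd hodd,
      coeff_monomial, if_neg hne']
  · rw [specialization_invariantFamily_of_odd_of_not_lt hodd hβ (by lia),
      ← leadingExponent_of_odd hodd, coeff_sub, coeff_monomial, coeff_monomial, if_neg hne',
      leadingExponent_of_odd hv', if_neg (by simp [exponent_inj]), sub_zero]

theorem linearIndependent_invariantFamily (k : ℕ) :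
    LinearIndependent K fun i : familyIndices k => invariantFamily K (2 * k + 1) i.1.1 i.1.2 := by
  have hmem (i : familyIndices k) := mem_familyIndices.1 i.2
  refine linearIndependent_of_triangular
    (fun i => lcoeff K (leadingExponent i.1.1 i.1.2) ∘ₗ (specialization K).toLinearMap)
    (fun i => if Even i.1.1 then 1 else 0)
    (fun i => coeff_leadingExponent_self_ne_zero (by have := (hmem i).1; lia)) ?_
  intro i j hij h
  obtain ⟨hi, hj⟩ := even_and_odd_of_coeff_leadingExponent_ne_zero (hmem i).2.1 (hmem j).2.1
    (by have := (hmem j).1; lia)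
    (fun h => hij (Subtype.ext (Sigma.ext (Prod.ext_iff.1 h).1 (heq_of_eq (Prod.ext_iff.1 h).2)))) h
  simp [hi, Nat.not_even_iff_odd.2 hj]

/-- The span of the invariants `invariantFamily` of degree `2 * k + 1`. -/
noncomputable def invariantSpan (K : Type*) [Field K] (k : ℕ) :
    Submodule K (MvPolynomial (ℕ × ℕ) K) :=
  Submodule.span K
    (Set.range fun i : familyIndices k => invariantFamily K (2 * k + 1) i.1.1 i.1.2)

instance finite_invariantSpan (k : ℕ) : Module.Finite K (invariantSpan K k) :=
  Module.Finite.span_of_finite K (Set.finite_range _)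

theorem invariantSpan_le_oddInvariants (k : ℕ) :
    invariantSpan K k ≤ oddInvariants K (2 * k + 1) := by
  refine Submodule.span_le.2 (Set.range_subset_iff.2 fun i => ?_)
  obtain ⟨hv, hv1, hα⟩ := mem_familyIndices.1 i.2
  exact invariantFamily_mem_oddInvariants hv hv1 hα

theorem finrank_invariantSpan (k : ℕ) :
    Module.finrank K (invariantSpan K k) + 2 * k = (k + 1) * (k + 2) := by
  rw [← card_familyIndices, invariantSpan,
    finrank_span_eq_card (linearIndependent_invariantFamily k), Fintype.card_coe]

end InvariantFamily

end DiagonalCoinvariants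

open DiagonalCoinvariants

/-- If `n` is an odd positive integer, then
`dim_ℂ R_W ≥ (2n+1)^n + (n-1)(n-3)/4` for the diagonal coinvariant ring of `W(Bₙ)`. -/
theorem dim_diag_coinv_ge_of_odd (n : ℕ) (hn : 0 < n) (hodd : Odd n) :
    ((2 * n + 1 : ℤ)) ^ n + ((n : ℤ) - 1) * ((n : ℤ) - 3) / 4 ≤
      (Module.finrank ℂ (MvPolynomial (Fin n ⊕ Fin n) ℂ ⧸ diagIdeal n) : ℤ) := by
  obtain ⟨k, rfl⟩ := hodd
  have hfin := finite_quotient_diagIdeal (2 * k + 1)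
  rw [diagIdeal_eq_evenPowerSumIdeal] at hfin ⊢
  have hle := pow_add_finrank_le (invariantSpan_le_oddInvariants (K := ℂ) k)
  have hdim := finrank_invariantSpan (K := ℂ) k
  have hdiv : ((2 * k + 1 : ℕ) - 1 : ℤ) * ((2 * k + 1 : ℕ) - 3) / 4 = k * k - k := by
    push_cast
    rw [show (2 * k + 1 - 1 : ℤ) * (2 * k + 1 - 3) = 4 * (k * k - k) by ring,
      Int.mul_ediv_cancel_left _ four_ne_zero]
  rw [hdiv]
  zify at hle hdim
  push_cast at hle ⊢
  linarith
end

section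
/- For n = 4, the complex dimension of the diagonal coinvariant ring R_W of the Weyl group W(B_4) satisfies dim_ℂ R_W ≥ 9^4 + 1. -/
open MvPolynomial

/-!
Let `L` be the irreducible module of dimension `2n + 1` of the rational Cherednik algebra of `ℤ/2`.
On `M = L^{⊗n}` the operators `xᵢ` and `yᵢ` commute up to scalars depending on parity, so the
module generated by a vector has an associated graded module `R / J`, cut out by the leading forms
of the polynomials whose value at that vector drops in filtration degree. The Vandermonde
combination `v` of the basis vectors with odd indices generates `M`, whence `dim R / J = (2n + 1)ⁿ`,
and it is the only antisymmetric vector with odd indices; symmetrizing shows that every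
`W`-invariant `p` of positive degree has `p v ∈ ℂ v` up to lower order, so `I_W ⊆ J`.

For `n = 4` the polynomial `g = ∑ᵢ xᵢ³ ∏_{j ≠ i} yⱼ` lies in `J` as well: the antisymmetrization of
`g v` is supported on the rearrangements of a single point, hence is proportional to that of a
shorter word. But `g ∉ I_W`, since `g` pairs nontrivially with the diagonal harmonic
`∑ᵢ ∏_{j ≠ i} (xᵢ yⱼ - xⱼ yᵢ)`. Thus `dim R / I_W > dim R / J ≥ 9⁴`.
-/

/-! ### Leading forms of polynomials in almost commuting operators -/

section Words

variable {σ K V : Type*} [CommRing K] [AddCommGroup V] [Module K V]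

/-- The vector `T j₁ (T j₂ (⋯ (T jₘ v)))` obtained by applying the word `[j₁, …, jₘ]` in the
operators `T` to `v`. -/
def wordVec (T : σ → Module.End K V) (v : V) (l : List σ) : V := (l.map T).prod v

/-- The filtration by word length of the module generated by `v` under the operators `T`.
The bound is strict: the `d`-th step is spanned by the words with fewer than `d` letters. -/
def wordFiltration (T : σ → Module.End K V) (v : V) (d : ℕ) : Submodule K V :=
  Submodule.span K (wordVec T v '' {l | l.length < d})

/-- The operators `T` raise the filtration `F` by one, and they commute on words applied to `v` up
to terms of lower filtration degree: this is what makes the leading form of an operator polynomial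
independent of the order of its factors. The indexing of `F` is that of `wordFiltration`. -/
structure CommutesModulo (T : σ → Module.End K V) (v : V) (F : ℕ → Submodule K V) : Prop where
  apply_mem : ∀ (j : σ) {d : ℕ} {u : V}, u ∈ F d → T j u ∈ F (d + 1)
  commutator_mem : ∀ (i j : σ) (l : List σ),
    T i (T j (wordVec T v l)) - T j (T i (wordVec T v l)) ∈ F (l.length + 2)

/-- Evaluation of a polynomial at the operators `T` and application to `v`, every monomial being
written as a word in an arbitrarily chosen order since the operators need not commute. -/
noncomputable def orderedEval (T : σ → Module.End K V) (v : V) : MvPolynomial σ K →ₗ[K] V :=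
  (basisMonomials σ K).constr K fun s => wordVec T v s.toMultiset.toList

variable {T : σ → Module.End K V} {v : V}

lemma wordVec_nil : wordVec T v [] = v := rfl

lemma wordVec_cons (j : σ) (l : List σ) : wordVec T v (j :: l) = T j (wordVec T v l) := by
  simp only [wordVec, List.map_cons, List.prod_cons, Module.End.mul_apply]

lemma wordVec_mem_wordFiltration {l : List σ} {d : ℕ} (h : l.length < d) :
    wordVec T v l ∈ wordFiltration T v d :=
  Submodule.subset_span ⟨l, h, rfl⟩

lemma wordFiltration_mono : Monotone (wordFiltration T v) := fun _ _ h =>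
  Submodule.span_mono (Set.image_mono fun _ hl => lt_of_lt_of_le hl h)

lemma apply_mem_wordFiltration (j : σ) {d : ℕ} {u : V} (hu : u ∈ wordFiltration T v d) :
    T j u ∈ wordFiltration T v (d + 1) := by
  induction hu using Submodule.span_induction with
  | mem u hu =>
    obtain ⟨l, hl, rfl⟩ := hu
    rw [← wordVec_cons]
    exact wordVec_mem_wordFiltration (Nat.succ_lt_succ hl)
  | zero => simp only [map_zero, zero_mem]
  | add u w _ _ hu hw => simpa only [map_add] using add_mem hu hw
  | smul c u _ hu => simpa only [map_smul] using (wordFiltration T v _).smul_mem c hu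

lemma apply_mem_span_range_wordVec (j : σ) {u : V}
    (hu : u ∈ Submodule.span K (Set.range (wordVec T v))) :
    T j u ∈ Submodule.span K (Set.range (wordVec T v)) := by
  have hle : Submodule.span K (Set.range (wordVec T v)) ≤
      (Submodule.span K (Set.range (wordVec T v))).comap (T j) := by
    rw [Submodule.span_le]
    rintro _ ⟨l, rfl⟩
    exact Submodule.subset_span ⟨j :: l, wordVec_cons j l⟩
  exact hle hu

lemma orderedEval_monomial_one (s : σ →₀ ℕ) :
    orderedEval T v (monomial s 1) = wordVec T v s.toMultiset.toList := by
  simpa only [orderedEval, coe_basisMonomials] using (basisMonomials σ K).constr_basis K _ s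

lemma map_mem_of_forall_mem_support {L : MvPolynomial σ K →ₗ[K] V} {N : Submodule K V}
    {f : MvPolynomial σ K} (h : ∀ s ∈ f.support, L (monomial s 1) ∈ N) : L f ∈ N := by
  rw [f.as_sum, map_sum]
  refine sum_mem fun s hs => ?_
  have hsmul : monomial s (coeff s f) = coeff s f • monomial s 1 := by
    rw [smul_monomial, smul_eq_mul, mul_one]
  rw [hsmul, map_smul]
  exact N.smul_mem _ (h s hs)

lemma card_toMultiset_of_mem_support {f : MvPolynomial σ K} {d : ℕ} (hf : f.IsHomogeneous d)
    {s : σ →₀ ℕ} (hs : s ∈ f.support) : s.toMultiset.card = d := by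
  rw [Finsupp.card_toMultiset, ← hf (mem_support_iff.1 hs), Finsupp.weight_apply]
  simp [Finsupp.sum]

namespace CommutesModulo

variable {F : ℕ → Submodule K V}

lemma wordVec_sub_mem_of_perm (h : CommutesModulo T v F) {l l' : List σ} (hl : l.Perm l') :
    wordVec T v l - wordVec T v l' ∈ F l.length := by
  induction hl with
  | nil => simp only [sub_self, zero_mem]
  | cons j _ ih => simpa only [wordVec_cons, map_sub, List.length_cons] using h.apply_mem j ih
  | swap i j l => simpa only [wordVec_cons, List.length_cons] using h.commutator_mem j i l
  | trans hl _ ih ih' =>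
    rw [← hl.length_eq] at ih'
    simpa only [sub_add_sub_cancel] using add_mem ih ih'

lemma wordVec_sub_orderedEval_mem (h : CommutesModulo T v F) {l : List σ} {s : σ →₀ ℕ}
    (hl : (l : Multiset σ) = s.toMultiset) :
    wordVec T v l - orderedEval T v (monomial s 1) ∈ F l.length := by
  rw [orderedEval_monomial_one]
  refine h.wordVec_sub_mem_of_perm (Multiset.coe_eq_coe.1 ?_)
  rw [hl, Multiset.coe_toList]

lemma apply_orderedEval_sub_mem (h : CommutesModulo T v F) (j : σ) {d : ℕ}
    {f : MvPolynomial σ K} (hf : f.IsHomogeneous d) :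
    T j (orderedEval T v f) - orderedEval T v (X j * f) ∈ F (d + 1) := by
  refine map_mem_of_forall_mem_support (L := T j ∘ₗ orderedEval T v -
    orderedEval T v ∘ₗ LinearMap.mulLeft K (X j)) fun s hs => ?_
  have hX : X j * monomial s 1 = (monomial (Finsupp.single j 1 + s) 1 : MvPolynomial σ K) := by
    rw [X, monomial_mul, one_mul]
  have hlen := card_toMultiset_of_mem_support hf hs
  have hword := h.wordVec_sub_orderedEval_mem (l := j :: s.toMultiset.toList)
    (s := Finsupp.single j 1 + s) (by
      rw [map_add, Finsupp.toMultiset_single, one_smul, ← Multiset.cons_coe, Multiset.coe_toList,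
        Multiset.singleton_add])
  rw [List.length_cons, Multiset.length_toList, hlen, wordVec_cons,
    ← orderedEval_monomial_one, ← hX] at hword
  exact hword

end CommutesModulo

lemma homogeneousComponent_succ_X_mul (j : σ) (d : ℕ) (f : MvPolynomial σ K) :
    homogeneousComponent (d + 1) (X j * f) = X j * homogeneousComponent d f := by
  classical
  ext s
  simp only [coeff_homogeneousComponent, coeff_X_mul']
  by_cases hj : j ∈ s.support
  · have hs : s = Finsupp.single j 1 + (s - Finsupp.single j 1) := by
      rw [add_tsub_cancel_of_le]
      simpa [Nat.one_le_iff_ne_zero] using hj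
    have hdeg : s.degree = (s - Finsupp.single j 1).degree + 1 := by
      conv_lhs => rw [hs]
      rw [map_add, Finsupp.degree_single, add_comm]
    simp [hj, hdeg]
  · simp [hj]

lemma homogeneousComponent_zero_X_mul (j : σ) (f : MvPolynomial σ K) :
    homogeneousComponent 0 (X j * f) = 0 := by
  rw [homogeneousComponent_zero, ← constantCoeff_eq, map_mul, constantCoeff_X, zero_mul, C_0]

/-- The ideal of polynomials `f` all of whose homogeneous components, evaluated at the operators
`T` and applied to `v`, lie one step lower in the filtration `F` than their degree suggests.
For `F = wordFiltration T v` the quotient by this ideal is the associated graded module of the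
module generated by `v`; for commuting operators and `F = ⊥` the ideal is the largest homogeneous
ideal annihilating `v`. -/
noncomputable def symbolIdeal {F : ℕ → Submodule K V} (h : CommutesModulo T v F) :
    Ideal (MvPolynomial σ K) where
  carrier := {f | ∀ d, orderedEval T v (homogeneousComponent d f) ∈ F d}
  zero_mem' d := by simp only [map_zero, zero_mem]
  add_mem' hf hg d := by simpa only [map_add] using add_mem (hf d) (hg d)
  smul_mem' p f hf := by
    rw [smul_eq_mul]
    induction p using MvPolynomial.induction_on generalizing f with
    | C c =>
      intro d
      simpa only [homogeneousComponent_C_mul, ← smul_eq_C_mul, map_smul] using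
        (F d).smul_mem c (hf d)
    | add p q hp hq =>
      intro d
      simpa only [add_mul, map_add] using add_mem (hp f hf d) (hq f hf d)
    | mul_X p j hp =>
      rw [mul_assoc]
      refine hp _ fun d => ?_
      cases d with
      | zero => simp only [homogeneousComponent_zero_X_mul, map_zero, zero_mem]
      | succ d =>
        rw [homogeneousComponent_succ_X_mul]
        exact ((F (d + 1)).sub_mem_iff_right (h.apply_mem j (hf d))).1
          (h.apply_orderedEval_sub_mem j (homogeneousComponent_isHomogeneous d f))

lemma mem_symbolIdeal_iff_of_isHomogeneous {F : ℕ → Submodule K V} (h : CommutesModulo T v F)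
    {f : MvPolynomial σ K} {d : ℕ} (hf : f.IsHomogeneous d) :
    f ∈ symbolIdeal h ↔ orderedEval T v f ∈ F d := by
  classical
  refine ⟨fun hmem => ?_, fun hmem e => ?_⟩
  · simpa only [homogeneousComponent_eq_self hf] using hmem d
  · rw [homogeneousComponent_of_mem hf]
    split_ifs with he
    · exact he ▸ hmem
    · simp only [map_zero, zero_mem]

end Words

section Dimension

variable {σ K V : Type*} [Field K] [AddCommGroup V] [Module K V] {T : σ → Module.End K V} {v : V}

lemma wordFiltration_le_map_orderedEval (h : CommutesModulo T v (wordFiltration T v))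
    {P : Submodule K (MvPolynomial σ K)}
    (hP : ∀ p ∈ P, ∀ d, homogeneousComponent d p ∈ P)
    (hsup : P ⊔ (symbolIdeal h).restrictScalars K = ⊤) (d : ℕ) :
    wordFiltration T v d ≤ P.map (orderedEval T v) := by
  induction d with
  | zero => simp [wordFiltration]
  | succ d ih =>
    rw [wordFiltration, Submodule.span_le]
    rintro _ ⟨l, hl, rfl⟩
    have hle : wordFiltration T v l.length ≤ P.map (orderedEval T v) :=
      (wordFiltration_mono (Nat.lt_succ_iff.1 hl)).trans ih
    classical
    set s : σ →₀ ℕ := Multiset.toFinsupp (l : Multiset σ)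
    have hs : (l : Multiset σ) = s.toMultiset := (Multiset.toFinsupp_toMultiset _).symm
    have hhom : (monomial s (1 : K)).IsHomogeneous l.length := by
      refine isHomogeneous_monomial 1 ?_
      rw [← Multiset.coe_card, hs, Finsupp.card_toMultiset]
      rfl
    obtain ⟨p, hp, q, hq, hpq⟩ := Submodule.mem_sup.1 (hsup ▸ Submodule.mem_top (x := monomial s 1))
    have hsplit : wordVec T v l = orderedEval T v (homogeneousComponent l.length p) +
        (orderedEval T v (homogeneousComponent l.length q) +
          (wordVec T v l - orderedEval T v (monomial s 1))) := by
      rw [← homogeneousComponent_eq_self hhom, ← hpq, map_add, map_add]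
      abel
    rw [SetLike.mem_coe, hsplit]
    exact add_mem (Submodule.mem_map_of_mem (hP p hp _))
      (hle (add_mem (hq l.length) (h.wordVec_sub_orderedEval_mem hs)))

lemma homogeneousComponent_mem_span_monomial {κ : Type*} (a : κ → σ →₀ ℕ) (d : ℕ)
    {p : MvPolynomial σ K}
    (hp : p ∈ Submodule.span K (Set.range fun i => monomial (a i) (1 : K))) :
    homogeneousComponent d p ∈ Submodule.span K (Set.range fun i => monomial (a i) (1 : K)) := by
  induction hp using Submodule.span_induction with
  | mem p hp =>
    obtain ⟨i, rfl⟩ := hp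
    rw [homogeneousComponent_of_mem (isHomogeneous_monomial 1 rfl)]
    split_ifs
    · exact Submodule.subset_span ⟨i, rfl⟩
    · exact zero_mem _
  | zero => simp only [map_zero, zero_mem]
  | add p q _ _ hp hq => simpa only [map_add] using add_mem hp hq
  | smul c p _ hp => simpa only [map_smul] using Submodule.smul_mem _ c hp

lemma exists_span_monomial_sup_eq_top (J : Ideal (MvPolynomial σ K))
    [Module.Finite K (MvPolynomial σ K ⧸ J)] :
    ∃ a : Fin (Module.finrank K (MvPolynomial σ K ⧸ J)) → σ →₀ ℕ,
      Submodule.span K (Set.range fun i => monomial (a i) (1 : K)) ⊔ J.restrictScalars K = ⊤ := by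
  let π := (Ideal.Quotient.mkₐ K J).toLinearMap
  have hπ : LinearMap.range π = ⊤ := LinearMap.range_eq_top.2 Ideal.Quotient.mk_surjective
  have hker : LinearMap.ker π = J.restrictScalars K := by
    ext f
    exact Ideal.Quotient.eq_zero_iff_mem
  have hspan : Submodule.span K (Set.range fun s => π (monomial s 1)) = ⊤ := by
    rw [Set.range_comp', ← Submodule.map_span, ← coe_basisMonomials, (basisMonomials σ K).span_eq,
      Submodule.map_top, hπ]
  have hfun := Submodule.exists_fun_fin_finrank_span_eq K (Set.range fun s => π (monomial s 1))
  rw [hspan, finrank_top] at hfun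
  obtain ⟨f, hf, hfspan, -⟩ := hfun
  choose a ha using hf
  refine ⟨a, ?_⟩
  rw [← hker, ← Submodule.comap_map_eq, Submodule.map_span, ← Set.range_comp,
    show π ∘ (fun i => monomial (a i) 1) = f from funext ha, hfspan, Submodule.comap_top]

theorem card_le_finrank_quotient_symbolIdeal (h : CommutesModulo T v (wordFiltration T v))
    [Module.Finite K (MvPolynomial σ K ⧸ symbolIdeal h)] {ι : Type*} [Fintype ι] {w : ι → V}
    (hw : LinearIndependent K w)
    (hspan : ∀ i, w i ∈ Submodule.span K (Set.range (wordVec T v))) :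
    Fintype.card ι ≤ Module.finrank K (MvPolynomial σ K ⧸ symbolIdeal h) := by
  obtain ⟨a, ha⟩ := exists_span_monomial_sup_eq_top (symbolIdeal h)
  let N := Submodule.span K (Set.range fun i => orderedEval T v (monomial (a i) 1))
  have hN : Submodule.span K (Set.range (wordVec T v)) ≤ N := by
    rw [Submodule.span_le]
    rintro _ ⟨l, rfl⟩
    have hl := wordFiltration_le_map_orderedEval h
      (fun p hp d => homogeneousComponent_mem_span_monomial a d hp) ha _
      (wordVec_mem_wordFiltration l.length.lt_succ_self)
    rwa [Submodule.map_span, ← Set.range_comp] at hl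
  have : FiniteDimensional K N := FiniteDimensional.span_of_finite K (Set.finite_range _)
  have hwN : LinearIndependent K fun i => (⟨w i, hN (hspan i)⟩ : N) :=
    LinearIndependent.of_comp N.subtype hw
  calc Fintype.card ι ≤ Module.finrank K N := hwN.fintype_card_le_finrank
    _ ≤ Fintype.card (Fin (Module.finrank K (MvPolynomial σ K ⧸ symbolIdeal h))) :=
      finrank_range_le_card _
    _ = Module.finrank K (MvPolynomial σ K ⧸ symbolIdeal h) := Fintype.card_fin _

lemma finrank_quotient_lt {A : Type*} [CommRing A] [Algebra K A] {I J : Ideal A}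
    [Module.Finite K (A ⧸ I)] (hIJ : I < J) :
    Module.finrank K (A ⧸ J) < Module.finrank K (A ⧸ I) := by
  obtain ⟨hle, g, hgJ, hgI⟩ := SetLike.lt_iff_le_and_exists.1 hIJ
  let π := (Ideal.Quotient.factorₐ K hle).toLinearMap
  have hrange : LinearMap.range π = ⊤ :=
    LinearMap.range_eq_top.2 (Ideal.Quotient.factor_surjective hle)
  have hker : 0 < Module.finrank K (LinearMap.ker π) := by
    refine Module.finrank_pos_iff_exists_ne_zero.2
      ⟨⟨Ideal.Quotient.mk I g, Ideal.Quotient.eq_zero_iff_mem.2 hgJ⟩, fun h => hgI ?_⟩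
    exact Ideal.Quotient.eq_zero_iff_mem.1 (congrArg Subtype.val h)
  have hsum := LinearMap.finrank_range_add_finrank_ker π
  rw [hrange, finrank_top] at hsum
  omega

end Dimension

section Equivariance

variable {σ K V : Type*} [CommRing K] [AddCommGroup V] [Module K V] {T : σ → Module.End K V} {v : V}
  {F : ℕ → Submodule K V}

lemma map_wordVec_of_equivariant {S : V →ₗ[K] V} {e : σ → σ}
    (hST : ∀ j u, S (T j u) = T (e j) (S u)) (hSv : S v = v) (l : List σ) :
    S (wordVec T v l) = wordVec T v (l.map e) := by
  induction l with
  | nil => simpa only [List.map_nil, wordVec_nil] using hSv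
  | cons j l ih => rw [wordVec_cons, hST, ih, List.map_cons, wordVec_cons]

lemma CommutesModulo.map_orderedEval_sub_mem (h : CommutesModulo T v F) {S : V →ₗ[K] V}
    {e : σ → σ} (hST : ∀ j u, S (T j u) = T (e j) (S u)) (hSv : S v = v) {d : ℕ}
    {f : MvPolynomial σ K} (hf : f.IsHomogeneous d) :
    S (orderedEval T v f) - orderedEval T v (rename e f) ∈ F d := by
  refine map_mem_of_forall_mem_support (L := S ∘ₗ orderedEval T v -
    orderedEval T v ∘ₗ (rename e).toLinearMap) fun s hs => ?_
  have hword := h.wordVec_sub_orderedEval_mem (l := s.toMultiset.toList.map e)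
    (s := s.mapDomain e) (by
      rw [← Multiset.map_coe, Multiset.coe_toList, Finsupp.toMultiset_map])
  rw [List.length_map, Multiset.length_toList, card_toMultiset_of_mem_support hf hs,
    ← map_wordVec_of_equivariant hST hSv, ← orderedEval_monomial_one, ← rename_monomial] at hword
  exact hword

end Equivariance

lemma CommutesModulo.orderedEval_mem_of_sum_mem {σ K V : Type*} [Field K] [CharZero K]
    [AddCommGroup V] [Module K V] {T : σ → Module.End K V} {v : V} {F : ℕ → Submodule K V}
    (h : CommutesModulo T v F) {G : Type*} [Fintype G] [Nonempty G] {S : G → V →ₗ[K] V}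
    {e : G → σ → σ} (hST : ∀ g j u, S g (T j u) = T (e g j) (S g u)) (hSv : ∀ g, S g v = v)
    {d : ℕ} {f : MvPolynomial σ K} (hf : f.IsHomogeneous d) (hfix : ∀ g, rename (e g) f = f)
    (hsum : ∑ g, S g (orderedEval T v f) ∈ F d) : orderedEval T v f ∈ F d := by
  have hdiff : ∑ g, (S g (orderedEval T v f) - orderedEval T v f) ∈ F d := sum_mem fun g _ => by
    simpa only [hfix g] using h.map_orderedEval_sub_mem (hST g) (hSv g) hf
  rw [Finset.sum_sub_distrib, (F d).sub_mem_iff_right hsum, Finset.sum_const, Finset.card_univ,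
    ← Nat.cast_smul_eq_nsmul K] at hdiff
  exact (Submodule.smul_mem_iff _ (Nat.cast_ne_zero.2 Fintype.card_ne_zero)).1 hdiff

/-! ### The tensor power of the rank-one Cherednik module -/

section Model

/-- The coefficient with which the generator `x` of the rank-one rational Cherednik algebra of
`ℤ/2` maps the basis vector with index `j - 1` to the one with index `j`, in the irreducible module
with basis indexed by `0, …, 2n`. It vanishes at `j = 2n + 1`, so that `x` kills the last vector. -/
def raiseCoeff (n : ℕ) (j : ℤ) : ℤ := if Even j then 1 else j - (2 * n + 1)

/-- The coefficient with which the generator `y` of the rank-one rational Cherednik algebra of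
`ℤ/2` maps the basis vector with index `j + 1` to the one with index `j`. It vanishes at `j = -1`,
so that `y` kills the first vector. -/
def lowerCoeff (j : ℤ) : ℤ := if Even j then 1 else j + 1

variable {n : ℕ}

/-- The index `i` of a variable `xᵢ` or `yᵢ`. -/
abbrev varIndex : Fin n ⊕ Fin n → Fin n := Sum.elim id id

/-- The coefficients of the operators `dunklOp`, at the target index `k`. -/
def dunklCoeff (k : Fin n → ℤ) : Fin n ⊕ Fin n → ℤ :=
  Sum.elim (fun i => raiseCoeff n (k i)) (fun i => lowerCoeff (k i))

/-- The steps by which the operators `dunklOp` move the index of a basis vector. -/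
def dunklShift : Fin n ⊕ Fin n → Fin n → ℤ :=
  Sum.elim (fun i => Pi.single i 1) (fun i => -Pi.single i 1)

/-- The operators by which `xᵢ` (as `Sum.inl i`) and `yᵢ` (as `Sum.inr i`) act on the `n`-fold
tensor power of the `(2n+1)`-dimensional irreducible module of the rational Cherednik algebra of
`ℤ/2`. A function of `k` stands for its family of coordinates in the tensor basis; the indices range
over all of `ℤⁿ`, and the tensor power is the subspace of functions supported in `[0, 2n]ⁿ`. -/
def dunklOp (j : Fin n ⊕ Fin n) : Module.End ℂ ((Fin n → ℤ) → ℂ) where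
  toFun f k := dunklCoeff k j * f (k - dunklShift j)
  map_add' f g := by ext k; simp only [Pi.add_apply, mul_add]
  map_smul' c f := by ext k; simp only [Pi.smul_apply, smul_eq_mul, RingHom.id_apply]; ring

/-- The Vandermonde product on the points of `[0, 2n]ⁿ` with odd coordinates, extended by zero. It
is kept integer-valued so that sums of its values can be decided. -/
def oddVandermonde (n : ℕ) (k : Fin n → ℤ) : ℤ :=
  if ∀ i, Odd (k i) ∧ 0 < k i ∧ k i < 2 * n then (Matrix.vandermonde k).det else 0

/-- The antisymmetric vector with odd indices, unique up to scalars, that generates the tensor power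
under the operators `dunklOp`. -/
def cyclicVec (n : ℕ) (k : Fin n → ℤ) : ℂ := oddVandermonde n k

/-- The total step by which a word in the operators `dunklOp` moves the index. -/
def displacement (l : List (Fin n ⊕ Fin n)) : Fin n → ℤ := (l.map dunklShift).sum

lemma dunklOp_apply (j : Fin n ⊕ Fin n) (f : (Fin n → ℤ) → ℂ) (k : Fin n → ℤ) :
    dunklOp j f k = dunklCoeff k j * f (k - dunklShift j) := rfl

lemma odd_of_cyclicVec_ne_zero {k : Fin n → ℤ} (h : cyclicVec n k ≠ 0) (i : Fin n) :
    Odd (k i) ∧ 0 < k i ∧ k i < 2 * n := by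
  rw [cyclicVec, Int.cast_ne_zero, oddVandermonde] at h
  exact of_not_not fun hi => h (if_neg fun hk => hi (hk i))

lemma displacement_cons (j : Fin n ⊕ Fin n) (l : List (Fin n ⊕ Fin n)) :
    displacement (j :: l) = dunklShift j + displacement l := by
  simp only [displacement, List.map_cons, List.sum_cons]

lemma displacement_apply (l : List (Fin n ⊕ Fin n)) (i : Fin n) :
    displacement l i =
      (l : Multiset (Fin n ⊕ Fin n)).count (Sum.inl i) -
        (l : Multiset (Fin n ⊕ Fin n)).count (Sum.inr i) := by
  induction l with
  | nil => simp [displacement]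
  | cons j l ih =>
    rw [displacement_cons, Pi.add_apply, ih, ← Multiset.cons_coe, Multiset.count_cons,
      Multiset.count_cons]
    rcases j with j | j <;> by_cases h : i = j <;>
      simp only [dunklShift, h, Sum.elim_inl, Sum.elim_inr, Pi.neg_apply, Pi.single_eq_same, ne_eq,
        not_false_eq_true, Pi.single_eq_of_ne, Multiset.coe_count, Sum.inl.injEq, Sum.inr.injEq,
        reduceCtorEq, if_true, if_false, Nat.cast_add, Nat.cast_one] <;>
      ring

lemma mem_box_of_wordVec_ne_zero {l : List (Fin n ⊕ Fin n)} {k : Fin n → ℤ}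
    (h : wordVec dunklOp (cyclicVec n) l k ≠ 0) (i : Fin n) : 0 ≤ k i ∧ k i ≤ 2 * n := by
  induction l generalizing k with
  | nil =>
    have hk := odd_of_cyclicVec_ne_zero h i
    exact ⟨hk.2.1.le, hk.2.2.le⟩
  | cons j l ih =>
    rw [wordVec_cons, dunklOp_apply] at h
    have hbox := ih (right_ne_zero_of_mul h)
    have hcoeff := left_ne_zero_of_mul h
    rcases j with j | j <;> by_cases hij : i = j
    · subst hij
      have hne : k i ≠ 2 * n + 1 := by
        intro hk
        refine hcoeff ?_
        simp [dunklCoeff, raiseCoeff, hk]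
      simp only [dunklShift, Sum.elim_inl, Pi.sub_apply, Pi.single_eq_same] at hbox
      omega
    · simpa [dunklShift, hij] using hbox
    · subst hij
      have hne : k i ≠ -1 := by
        intro hk
        refine hcoeff ?_
        simp [dunklCoeff, lowerCoeff, hk]
      simp only [dunklShift, Sum.elim_inr, Pi.sub_apply, Pi.neg_apply, Pi.single_eq_same] at hbox
      omega
    · simpa [dunklShift, hij] using hbox

lemma cyclicVec_ne_zero_of_wordVec_ne_zero {l : List (Fin n ⊕ Fin n)} {k : Fin n → ℤ}
    (h : wordVec dunklOp (cyclicVec n) l k ≠ 0) :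
    cyclicVec n (k - displacement l) ≠ 0 := by
  induction l generalizing k with
  | nil => simpa only [displacement, List.map_nil, List.sum_nil, sub_zero, wordVec_nil] using h
  | cons j l ih =>
    rw [wordVec_cons, dunklOp_apply] at h
    rw [displacement_cons, ← sub_sub]
    exact ih (right_ne_zero_of_mul h)

lemma dunklOp_commutator (i : Fin n) (f : (Fin n → ℤ) → ℂ) (k : Fin n → ℤ) :
    dunklOp (Sum.inr i) (dunklOp (Sum.inl i) f) k - dunklOp (Sum.inl i) (dunklOp (Sum.inr i) f) k =
      (if Even (k i) then -(2 * n) else 2 * n + 2 : ℂ) * f k := by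
  by_cases hk : Even (k i)
  · have h1 : ¬ Even (k i + 1) := by simpa [Int.even_add_one] using hk
    have h2 : ¬ Even (k i - 1) := by simpa [Int.even_sub_one] using hk
    simp only [dunklOp_apply, dunklCoeff, dunklShift, raiseCoeff, lowerCoeff, Sum.elim_inl,
      Sum.elim_inr, Pi.add_apply, Pi.sub_apply, Pi.single_eq_same, sub_neg_eq_add,
      add_sub_cancel_right, sub_add_cancel, hk, h1, h2, if_true, if_false]
    push_cast
    ring
  · have h1 : Even (k i + 1) := by simpa [Int.even_add_one] using hk
    have h2 : Even (k i - 1) := by simpa [Int.even_sub_one] using hk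
    simp only [dunklOp_apply, dunklCoeff, dunklShift, raiseCoeff, lowerCoeff, Sum.elim_inl,
      Sum.elim_inr, Pi.add_apply, Pi.sub_apply, Pi.single_eq_same, sub_neg_eq_add,
      add_sub_cancel_right, sub_add_cancel, hk, h1, h2, if_true, if_false]
    push_cast
    ring

lemma dunklCoeff_sub_dunklShift_of_ne {a b : Fin n ⊕ Fin n} (h : varIndex a ≠ varIndex b)
    (k : Fin n → ℤ) : dunklCoeff (k - dunklShift a) b = dunklCoeff k b := by
  rcases a with a | a <;> rcases b with b | b <;>
    simp_all [dunklCoeff, dunklShift, varIndex, Pi.single_apply, eq_comm]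

lemma dunklOp_comm_of_ne {a b : Fin n ⊕ Fin n} (h : varIndex a ≠ varIndex b)
    (f : (Fin n → ℤ) → ℂ) : dunklOp a (dunklOp b f) = dunklOp b (dunklOp a f) := by
  ext k
  simp only [dunklOp_apply, dunklCoeff_sub_dunklShift_of_ne h,
    dunklCoeff_sub_dunklShift_of_ne h.symm, sub_right_comm]
  ring

lemma commutator_wordVec_mem (i : Fin n) (l : List (Fin n ⊕ Fin n)) :
    dunklOp (Sum.inr i) (dunklOp (Sum.inl i) (wordVec dunklOp (cyclicVec n) l)) -
      dunklOp (Sum.inl i) (dunklOp (Sum.inr i) (wordVec dunklOp (cyclicVec n) l)) ∈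
      wordFiltration dunklOp (cyclicVec n) (l.length + 2) := by
  have hsmul : dunklOp (Sum.inr i) (dunklOp (Sum.inl i) (wordVec dunklOp (cyclicVec n) l)) -
      dunklOp (Sum.inl i) (dunklOp (Sum.inr i) (wordVec dunklOp (cyclicVec n) l)) =
      (if Even (displacement l i + 1) then -(2 * n) else 2 * n + 2 : ℂ) •
        wordVec dunklOp (cyclicVec n) l := by
    ext k
    rw [Pi.sub_apply, dunklOp_commutator, Pi.smul_apply, smul_eq_mul]
    by_cases h0 : wordVec dunklOp (cyclicVec n) l k = 0
    · rw [h0, mul_zero, mul_zero]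
    · have hodd := (odd_of_cyclicVec_ne_zero (cyclicVec_ne_zero_of_wordVec_ne_zero h0) i).1
      have hiff : Even (k i) ↔ Even (displacement l i + 1) := by
        rw [Pi.sub_apply, Int.odd_sub] at hodd
        rw [Int.even_add_one, Int.not_even_iff_odd, ← Int.not_odd_iff_even, hodd]
        simp
      simp only [hiff]
  rw [hsmul]
  exact Submodule.smul_mem _ _ (wordVec_mem_wordFiltration (by omega))

theorem commutesModulo_dunklOp :
    CommutesModulo dunklOp (cyclicVec n) (wordFiltration dunklOp (cyclicVec n)) where
  apply_mem := apply_mem_wordFiltration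
  commutator_mem a b l := by
    by_cases h : varIndex a = varIndex b
    · rcases a with a | a <;> rcases b with b | b <;>
        obtain rfl : a = b := h
      · simp only [sub_self, zero_mem]
      · rw [← neg_sub, neg_mem_iff]
        exact commutator_wordVec_mem a l
      · exact commutator_wordVec_mem a l
      · simp only [sub_self, zero_mem]
    · simp only [dunklOp_comm_of_ne h, sub_self, zero_mem]

end Model

/-! ### Antisymmetrization -/

section Antisymmetrization

variable {n : ℕ}

lemma exists_perm_of_forall_mem_range {ι α : Type*} [Finite ι] {k k₀ : ι → α}
    (hk : Function.Injective k) (h : ∀ i, k i ∈ Set.range k₀) :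
    ∃ τ : Equiv.Perm ι, k = k₀ ∘ τ := by
  choose τ hτ using h
  have hinj : Function.Injective τ := fun i j hij => hk (by rw [← hτ, hij, hτ])
  exact ⟨Equiv.ofBijective τ (Finite.injective_iff_bijective.1 hinj), funext fun i => (hτ i).symm⟩

lemma intCast_sign_mul_self (τ : Equiv.Perm (Fin n)) : ((τ.sign : ℤ) : ℂ) * (τ.sign : ℤ) = 1 := by
  rw [← Int.cast_mul, Int.units_coe_mul_self, Int.cast_one]

/-- The action of a permutation on functions of `n` integers, twisted by the sign so that
`cyclicVec` is fixed. -/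
noncomputable def signedPerm (τ : Equiv.Perm (Fin n)) : Module.End ℂ ((Fin n → ℤ) → ℂ) :=
  ((τ.sign : ℤ) : ℂ) • LinearMap.funLeft ℂ ℂ fun k => k ∘ τ

/-- The antisymmetrization operator: a function goes to the sum of its images under `signedPerm`,
without division by `n!`. -/
noncomputable def antisymmetrize : Module.End ℂ ((Fin n → ℤ) → ℂ) := ∑ τ, signedPerm τ

lemma signedPerm_apply (τ : Equiv.Perm (Fin n)) (f : (Fin n → ℤ) → ℂ) (k : Fin n → ℤ) :
    signedPerm τ f k = ((τ.sign : ℤ) : ℂ) * f (k ∘ τ) := rfl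

lemma antisymmetrize_apply (f : (Fin n → ℤ) → ℂ) (k : Fin n → ℤ) :
    antisymmetrize f k = ∑ τ : Equiv.Perm (Fin n), ((τ.sign : ℤ) : ℂ) * f (k ∘ τ) := by
  simp only [antisymmetrize, LinearMap.sum_apply, Finset.sum_apply, signedPerm_apply]

lemma signedPerm_dunklOp (τ : Equiv.Perm (Fin n)) (j : Fin n ⊕ Fin n) (f : (Fin n → ℤ) → ℂ) :
    signedPerm τ (dunklOp j f) = dunklOp (Sum.map τ τ j) (signedPerm τ f) := by
  ext k
  have hcoeff : dunklCoeff (k ∘ τ) j = dunklCoeff k (Sum.map τ τ j) := by cases j <;> rfl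
  have hshift : k ∘ τ - dunklShift j = (k - dunklShift (Sum.map τ τ j)) ∘ τ := by
    ext i
    rcases j with j | j <;> simp [dunklShift, Pi.single_apply]
  rw [signedPerm_apply, dunklOp_apply, dunklOp_apply, signedPerm_apply, hcoeff, hshift]
  ring

lemma signedPerm_cyclicVec (τ : Equiv.Perm (Fin n)) : signedPerm τ (cyclicVec n) = cyclicVec n := by
  ext k
  have hsupp : (∀ i, Odd (k (τ i)) ∧ 0 < k (τ i) ∧ k (τ i) < 2 * n) ↔
      ∀ i, Odd (k i) ∧ 0 < k i ∧ k i < 2 * n :=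
    τ.forall_congr_left (p := fun i => Odd (k (τ i)) ∧ 0 < k (τ i) ∧ k (τ i) < 2 * n) |>.trans
      (by simp)
  have hdet : (Matrix.vandermonde (k ∘ τ)).det = τ.sign * (Matrix.vandermonde k).det :=
    Matrix.det_permute τ (Matrix.vandermonde k)
  rw [signedPerm_apply, cyclicVec, cyclicVec, oddVandermonde, oddVandermonde, hdet]
  simp only [Function.comp_apply, hsupp]
  split_ifs
  · rw [Int.cast_mul, ← mul_assoc, intCast_sign_mul_self, one_mul]
  · rw [Int.cast_zero, mul_zero]

lemma antisymmetrize_comp (f : (Fin n → ℤ) → ℂ) (k : Fin n → ℤ) (τ : Equiv.Perm (Fin n)) :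
    antisymmetrize f (k ∘ τ) = ((τ.sign : ℤ) : ℂ) * antisymmetrize f k := by
  rw [antisymmetrize_apply, antisymmetrize_apply, Finset.mul_sum,
    ← Equiv.sum_comp (Equiv.mulLeft τ) fun π => _ * (_ * f (k ∘ π))]
  refine Finset.sum_congr rfl fun π _ => ?_
  rw [Equiv.coe_mulLeft, Equiv.Perm.sign_mul, Equiv.Perm.coe_mul, Function.comp_assoc,
    Units.val_mul, Int.cast_mul, mul_assoc, ← mul_assoc, intCast_sign_mul_self, one_mul]

lemma injective_of_antisymmetrize_ne_zero {f : (Fin n → ℤ) → ℂ} {k : Fin n → ℤ}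
    (h : antisymmetrize f k ≠ 0) : Function.Injective k := by
  intro i j hij
  by_contra hne
  have hswap : k ∘ Equiv.swap i j = k := by
    ext m
    rw [Function.comp_apply, Equiv.apply_swap_eq_self hij]
  have hneg := antisymmetrize_comp f k (Equiv.swap i j)
  rw [hswap, Equiv.Perm.sign_swap hne] at hneg
  refine h (self_eq_neg.1 ?_)
  simpa only [Units.val_neg, Units.val_one, Int.cast_neg, Int.cast_one, neg_one_mul] using hneg

lemma exists_perm_ne_zero_of_antisymmetrize_ne_zero {f : (Fin n → ℤ) → ℂ} {k : Fin n → ℤ}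
    (h : antisymmetrize f k ≠ 0) : ∃ τ : Equiv.Perm (Fin n), f (k ∘ τ) ≠ 0 := by
  rw [antisymmetrize_apply] at h
  obtain ⟨τ, -, hτ⟩ := Finset.exists_ne_zero_of_sum_ne_zero h
  exact ⟨τ, right_ne_zero_of_mul hτ⟩

lemma antisymmetrize_eq_smul {f g : (Fin n → ℤ) → ℂ} {k₀ : Fin n → ℤ}
    (hf : ∀ k, antisymmetrize f k ≠ 0 → ∃ τ : Equiv.Perm (Fin n), k = k₀ ∘ τ)
    (hg : ∀ k, antisymmetrize g k ≠ 0 → ∃ τ : Equiv.Perm (Fin n), k = k₀ ∘ τ)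
    (h₀ : antisymmetrize g k₀ ≠ 0) :
    antisymmetrize f = (antisymmetrize f k₀ / antisymmetrize g k₀) • antisymmetrize g := by
  ext k
  rw [Pi.smul_apply, smul_eq_mul]
  by_cases hk : ∃ τ : Equiv.Perm (Fin n), k = k₀ ∘ τ
  · obtain ⟨τ, rfl⟩ := hk
    rw [antisymmetrize_comp, antisymmetrize_comp]
    field_simp
  · rw [not_not.1 (mt (hf k) hk), not_not.1 (mt (hg k) hk), mul_zero]

lemma antisymmetrize_wordVec_mem (l : List (Fin n ⊕ Fin n)) {d : ℕ} (hl : l.length < d) :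
    antisymmetrize (wordVec dunklOp (cyclicVec n) l) ∈ wordFiltration dunklOp (cyclicVec n) d := by
  rw [antisymmetrize, LinearMap.sum_apply]
  refine sum_mem fun τ _ => ?_
  rw [map_wordVec_of_equivariant (signedPerm_dunklOp τ) (signedPerm_cyclicVec τ)]
  exact wordVec_mem_wordFiltration (by rwa [List.length_map])

lemma exists_mem_support_of_orderedEval_ne_zero {f : MvPolynomial (Fin n ⊕ Fin n) ℂ}
    {k : Fin n → ℤ} (h : orderedEval dunklOp (cyclicVec n) f k ≠ 0) :
    ∃ s ∈ f.support, wordVec dunklOp (cyclicVec n) s.toMultiset.toList k ≠ 0 := by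
  by_contra! hzero
  refine h (map_mem_of_forall_mem_support (L := orderedEval dunklOp (cyclicVec n))
    (N := LinearMap.ker (LinearMap.proj k)) fun s hs => ?_)
  rw [orderedEval_monomial_one]
  exact hzero s hs

theorem orderedEval_mem_of_antisymmetrize_support {f : MvPolynomial (Fin n ⊕ Fin n) ℂ} {d : ℕ}
    (hf : f.IsHomogeneous d)
    (hinv : ∀ τ : Equiv.Perm (Fin n), rename (Sum.map τ τ) f = f)
    {l : List (Fin n ⊕ Fin n)} (hl : l.length < d) {k₀ : Fin n → ℤ}
    (hfk : ∀ k, antisymmetrize (orderedEval dunklOp (cyclicVec n) f) k ≠ 0 →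
      ∃ τ : Equiv.Perm (Fin n), k = k₀ ∘ τ)
    (hlk : ∀ k, antisymmetrize (wordVec dunklOp (cyclicVec n) l) k ≠ 0 →
      ∃ τ : Equiv.Perm (Fin n), k = k₀ ∘ τ)
    (h₀ : antisymmetrize (wordVec dunklOp (cyclicVec n) l) k₀ ≠ 0) :
    orderedEval dunklOp (cyclicVec n) f ∈ wordFiltration dunklOp (cyclicVec n) d := by
  refine commutesModulo_dunklOp.orderedEval_mem_of_sum_mem (S := signedPerm)
    (e := fun τ => Sum.map τ τ) signedPerm_dunklOp signedPerm_cyclicVec hf hinv ?_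
  rw [← LinearMap.sum_apply, ← antisymmetrize, antisymmetrize_eq_smul hfk hlk h₀]
  exact Submodule.smul_mem _ _ (antisymmetrize_wordVec_mem l hl)

end Antisymmetrization

/-! ### Invariants of the hyperoctahedral group -/

section Invariants

variable {n : ℕ}

lemma bAct_one_eq_rename (τ : Equiv.Perm (Fin n)) :
    bAct n 1 τ = rename (Sum.map τ τ) := by
  ext j
  rcases j with j | j <;> simp [bAct]

lemma isHomogeneous_bAct (ε : Fin n → ℤˣ) (τ : Equiv.Perm (Fin n))
    {f : MvPolynomial (Fin n ⊕ Fin n) ℂ} {d : ℕ} (hf : f.IsHomogeneous d) :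
    (bAct n ε τ f).IsHomogeneous d := by
  rw [← one_mul d]
  refine hf.aeval _ fun j => ?_
  rcases j with j | j <;> exact (homogeneousSubmodule _ ℂ 1).smul_mem _ (isHomogeneous_X ℂ _)

lemma homogeneousComponent_bAct (ε : Fin n → ℤˣ) (τ : Equiv.Perm (Fin n)) (d : ℕ)
    (f : MvPolynomial (Fin n ⊕ Fin n) ℂ) :
    homogeneousComponent d (bAct n ε τ f) = bAct n ε τ (homogeneousComponent d f) := by
  induction f using MvPolynomial.induction_on' with
  | monomial s c =>
    have hs : (monomial s c).IsHomogeneous s.degree := isHomogeneous_monomial c rfl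
    rw [homogeneousComponent_of_mem hs, homogeneousComponent_of_mem (isHomogeneous_bAct ε τ hs)]
    split_ifs
    · rfl
    · rw [map_zero]
  | add p q hp hq => simp only [map_add, hp, hq]

theorem diagIdeal_le_symbolIdeal_of_forall_invariant {V : Type*} [AddCommGroup V] [Module ℂ V]
    {T : Fin n ⊕ Fin n → Module.End ℂ V} {v : V} {F : ℕ → Submodule ℂ V}
    (h : CommutesModulo T v F)
    (hinv : ∀ (d : ℕ) (p : MvPolynomial (Fin n ⊕ Fin n) ℂ), p.IsHomogeneous (d + 1) →
      (∀ ε τ, bAct n ε τ p = p) → orderedEval T v p ∈ F (d + 1)) :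
    diagIdeal n ≤ symbolIdeal h := by
  refine Ideal.span_le.2 fun f ⟨hf, hf₀⟩ d => ?_
  cases d with
  | zero =>
    rw [homogeneousComponent_zero, ← constantCoeff_eq, hf₀, C_0, map_zero]
    exact zero_mem _
  | succ d =>
    refine hinv d _ (homogeneousComponent_isHomogeneous _ f) fun ε τ => ?_
    rw [← homogeneousComponent_bAct, hf]

lemma coeff_bAct_perm_one (ε : Fin n → ℤˣ) (f : MvPolynomial (Fin n ⊕ Fin n) ℂ)
    (s : Fin n ⊕ Fin n →₀ ℕ) :
    coeff s (bAct n ε 1 f) =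
      (∏ i, ((ε i : ℤ) : ℂ) ^ (s (Sum.inl i) + s (Sum.inr i))) * coeff s f := by
  induction f using MvPolynomial.induction_on' with
  | monomial t c =>
    have hmon : bAct n ε 1 (monomial t c) =
        monomial t ((∏ i, ((ε i : ℤ) : ℂ) ^ (t (Sum.inl i) + t (Sum.inr i))) * c) := by
      rw [bAct, aeval_monomial, monomial_eq, Finsupp.prod_fintype _ _ (by simp),
        Finsupp.prod_fintype _ _ (by simp), Fintype.prod_sum_type, Fintype.prod_sum_type]
      simp only [Sum.elim_inl, Sum.elim_inr, mul_pow, Equiv.Perm.coe_one, id_eq, smul_eq_C_mul,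
        Finset.prod_mul_distrib, algebraMap_eq, pow_add, C_mul, map_prod, C_pow]
      ring
    rw [hmon, coeff_monomial, coeff_monomial]
    split_ifs with hts
    · rw [hts]
    · rw [mul_zero]
  | add p q hp hq => rw [map_add, coeff_add, coeff_add, hp, hq, mul_add]

lemma even_of_forall_bAct_eq {p : MvPolynomial (Fin n ⊕ Fin n) ℂ}
    (hp : ∀ ε τ, bAct n ε τ p = p) {s : Fin n ⊕ Fin n →₀ ℕ} (hs : s ∈ p.support) (i : Fin n) :
    Even (s (Sum.inl i) + s (Sum.inr i)) := by
  by_contra hodd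
  have hcoeff := coeff_bAct_perm_one (Function.update 1 i (-1)) p s
  rw [hp, Finset.prod_eq_single i
    (fun j _ hj => by rw [Function.update_of_ne hj, Pi.one_apply, Units.val_one, Int.cast_one,
      one_pow]) (fun hi => absurd (Finset.mem_univ i) hi), Function.update_self, Units.val_neg,
    Units.val_one, Int.cast_neg, Int.cast_one, (Nat.not_even_iff_odd.1 hodd).neg_one_pow,
    neg_one_mul] at hcoeff
  exact mem_support_iff.1 hs (self_eq_neg.1 hcoeff)

/-- The point `(1, 3, …, 2n - 1)`; `cyclicVec n` is supported on its rearrangements. -/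
def oddPoint (n : ℕ) (i : Fin n) : ℤ := 2 * i + 1

lemma exists_perm_of_antisymmetrize_odd {f : (Fin n → ℤ) → ℂ} {k : Fin n → ℤ}
    (hodd : ∀ k, f k ≠ 0 → ∀ i, Odd (k i) ∧ 0 < k i ∧ k i < 2 * n)
    (hk : antisymmetrize f k ≠ 0) :
    ∃ τ : Equiv.Perm (Fin n), k = oddPoint n ∘ τ := by
  refine exists_perm_of_forall_mem_range (injective_of_antisymmetrize_ne_zero hk) fun i => ?_
  obtain ⟨τ, hτ⟩ := exists_perm_ne_zero_of_antisymmetrize_ne_zero hk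
  obtain ⟨⟨m, hm⟩, hpos, hlt⟩ := hodd _ hτ (τ.symm i)
  rw [Function.comp_apply, Equiv.apply_symm_apply] at hm hpos hlt
  exact ⟨⟨m.toNat, by omega⟩, by simp only [oddPoint]; omega⟩

lemma odd_of_even_displacement {l : List (Fin n ⊕ Fin n)} (heven : ∀ i, Even (displacement l i))
    {k : Fin n → ℤ} (hk : wordVec dunklOp (cyclicVec n) l k ≠ 0) (i : Fin n) :
    Odd (k i) ∧ 0 < k i ∧ k i < 2 * n := by
  have hodd := (odd_of_cyclicVec_ne_zero (cyclicVec_ne_zero_of_wordVec_ne_zero hk) i).1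
  rw [Pi.sub_apply, Int.odd_sub, iff_true_right (heven i)] at hodd
  obtain ⟨m, hm⟩ := hodd
  have := mem_box_of_wordVec_ne_zero hk i
  exact ⟨⟨m, hm⟩, by omega, by omega⟩

lemma cyclicVec_oddPoint_ne_zero : cyclicVec n (oddPoint n) ≠ 0 := by
  have hodd : ∀ i, Odd (oddPoint n i) ∧ 0 < oddPoint n i ∧ oddPoint n i < 2 * n :=
    fun i => ⟨⟨i, rfl⟩, by rw [oddPoint]; omega, by rw [oddPoint]; omega⟩
  rw [cyclicVec, oddVandermonde, if_pos hodd, Int.cast_ne_zero, Matrix.det_vandermonde_ne_zero_iff]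
  intro i j hij
  rw [oddPoint, oddPoint] at hij
  omega

lemma antisymmetrize_cyclicVec :
    antisymmetrize (cyclicVec n) = (n.factorial : ℂ) • cyclicVec n := by
  simp only [antisymmetrize, LinearMap.sum_apply, signedPerm_cyclicVec, Finset.sum_const,
    Finset.card_univ, Fintype.card_perm, Fintype.card_fin, Nat.cast_smul_eq_nsmul]

theorem diagIdeal_le_symbolIdeal_dunklOp :
    diagIdeal n ≤ symbolIdeal (commutesModulo_dunklOp (n := n)) := by
  refine diagIdeal_le_symbolIdeal_of_forall_invariant _ fun d p hp hinv => ?_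
  have hodd : ∀ k, orderedEval dunklOp (cyclicVec n) p k ≠ 0 →
      ∀ i, Odd (k i) ∧ 0 < k i ∧ k i < 2 * n := by
    intro k hk
    obtain ⟨s, hs, hsk⟩ := exists_mem_support_of_orderedEval_ne_zero hk
    refine odd_of_even_displacement (fun i => ?_) hsk
    rw [displacement_apply, Multiset.coe_toList, Finsupp.count_toMultiset,
      Finsupp.count_toMultiset, Int.even_sub, ← Int.even_add]
    exact_mod_cast even_of_forall_bAct_eq hinv hs i
  refine orderedEval_mem_of_antisymmetrize_support hp (fun τ => ?_) (l := []) d.succ_pos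
    (fun k => exists_perm_of_antisymmetrize_odd hodd)
    (fun k => exists_perm_of_antisymmetrize_odd fun k => odd_of_cyclicVec_ne_zero) ?_
  · rw [← bAct_one_eq_rename, hinv]
  · rw [wordVec_nil, antisymmetrize_cyclicVec, Pi.smul_apply, smul_eq_mul]
    exact mul_ne_zero (Nat.cast_ne_zero.2 n.factorial_ne_zero) cyclicVec_oddPoint_ne_zero

end Invariants

/-! ### Cyclicity of the Vandermonde vector -/

section Cyclicity

variable {n : ℕ}

lemma raiseCoeff_ne_zero {j : ℤ} (hj : j ≤ 2 * n) : raiseCoeff n j ≠ 0 := by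
  rw [raiseCoeff]
  split_ifs <;> omega

lemma lowerCoeff_ne_zero {j : ℤ} (hj : 0 ≤ j) : lowerCoeff j ≠ 0 := by
  rw [lowerCoeff]
  split_ifs <;> omega

lemma wordVec_ne_zero_of_raising {l : List (Fin n ⊕ Fin n)} (hl : ∀ j ∈ l, j.isLeft)
    {k : Fin n → ℤ} (hk : ∀ i, k i ≤ 2 * n) (hv : cyclicVec n (k - displacement l) ≠ 0) :
    wordVec dunklOp (cyclicVec n) l k ≠ 0 := by
  induction l generalizing k with
  | nil => simpa only [displacement, List.map_nil, List.sum_nil, sub_zero, wordVec_nil] using hv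
  | cons j l ih =>
    obtain ⟨i, rfl⟩ := Sum.isLeft_iff.1 (hl j List.mem_cons_self)
    rw [displacement_cons, ← sub_sub] at hv
    rw [wordVec_cons, dunklOp_apply]
    refine mul_ne_zero (Int.cast_ne_zero.2 (raiseCoeff_ne_zero (hk i)))
      (ih (fun j hj => hl j (List.mem_cons_of_mem _ hj)) (fun m => ?_) hv)
    refine le_trans (sub_le_self _ ?_) (hk m)
    simp only [dunklShift, Sum.elim_inl, Pi.single_apply]
    split_ifs <;> norm_num

lemma exists_perm_of_cyclicVec_ne_zero {k : Fin n → ℤ} (hk : cyclicVec n k ≠ 0) :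
    ∃ τ : Equiv.Perm (Fin n), k = oddPoint n ∘ τ :=
  exists_perm_of_antisymmetrize_odd (fun _ => odd_of_cyclicVec_ne_zero) (by
    rw [antisymmetrize_cyclicVec, Pi.smul_apply, smul_eq_mul]
    exact mul_ne_zero (Nat.cast_ne_zero.2 n.factorial_ne_zero) hk)

lemma eq_top_of_wordVec_ne_zero {l : List (Fin n ⊕ Fin n)}
    (hl : displacement l = (fun _ => 2 * (n : ℤ)) - oddPoint n) {k : Fin n → ℤ}
    (hk : wordVec dunklOp (cyclicVec n) l k ≠ 0) : k = fun _ => 2 * (n : ℤ) := by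
  obtain ⟨τ, hτ⟩ := exists_perm_of_cyclicVec_ne_zero (cyclicVec_ne_zero_of_wordVec_ne_zero hk)
  have hsum : ∑ i, k i = ∑ _i : Fin n, 2 * (n : ℤ) := by
    rw [← sub_add_cancel k (displacement l), hτ, hl]
    simp only [Pi.add_apply, Pi.sub_apply, Finset.sum_add_distrib, Finset.sum_sub_distrib,
      Function.comp_apply, Equiv.sum_comp τ (oddPoint n), add_sub_cancel]
  ext i
  exact (Finset.sum_eq_sum_iff_of_le fun i _ => (mem_box_of_wordVec_ne_zero hk i).2).1 hsum i
    (Finset.mem_univ i)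

lemma exists_raising_word (n : ℕ) :
    ∃ l : List (Fin n ⊕ Fin n), (∀ j ∈ l, j.isLeft) ∧
      displacement l = (fun _ => 2 * (n : ℤ)) - oddPoint n := by
  let s : Fin n ⊕ Fin n →₀ ℕ :=
    Finsupp.equivFunOnFinite.symm (Sum.elim (fun i => 2 * n - (2 * i + 1)) 0)
  refine ⟨s.toMultiset.toList, fun j hj => ?_, ?_⟩
  · rw [Multiset.mem_toList, Finsupp.mem_toMultiset, Finsupp.mem_support_iff] at hj
    rcases j with j | j
    · rfl
    · exact absurd rfl hj
  · ext i
    rw [displacement_apply, Multiset.coe_toList, Finsupp.count_toMultiset, Finsupp.count_toMultiset]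
    have hle : 2 * (i : ℕ) + 1 ≤ 2 * n := by omega
    simp [s, oddPoint, Nat.cast_sub hle]

lemma single_top_mem :
    Pi.single (fun _ => 2 * (n : ℤ)) 1 ∈
      Submodule.span ℂ (Set.range (wordVec dunklOp (cyclicVec n))) := by
  obtain ⟨l, hleft, hdisp⟩ := exists_raising_word n
  have htop : wordVec dunklOp (cyclicVec n) l (fun _ => 2 * (n : ℤ)) ≠ 0 :=
    wordVec_ne_zero_of_raising hleft (fun _ => le_rfl)
      (by rw [hdisp, sub_sub_cancel]; exact cyclicVec_oddPoint_ne_zero)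
  have hsingle : Pi.single (fun _ => 2 * (n : ℤ)) 1 =
      (wordVec dunklOp (cyclicVec n) l fun _ => 2 * (n : ℤ))⁻¹ •
        wordVec dunklOp (cyclicVec n) l := by
    ext k
    rw [Pi.smul_apply, smul_eq_mul]
    by_cases hk : k = fun _ => 2 * (n : ℤ)
    · rw [hk, Pi.single_eq_same, inv_mul_cancel₀ htop]
    · rw [Pi.single_eq_of_ne hk, not_not.1 (mt (eq_top_of_wordVec_ne_zero hdisp) hk), mul_zero]
  rw [hsingle]
  exact Submodule.smul_mem _ _ (Submodule.subset_span ⟨l, rfl⟩)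

lemma dunklOp_inr_single (i : Fin n) (k : Fin n → ℤ) :
    dunklOp (Sum.inr i) (Pi.single k 1) =
      (lowerCoeff (k i - 1) : ℂ) • Pi.single (k - Pi.single i 1) 1 := by
  ext k'
  rw [dunklOp_apply, Pi.smul_apply, smul_eq_mul]
  by_cases h : k' = k - Pi.single i 1
  · simp [h, dunklShift, dunklCoeff]
  · have h' : k' - dunklShift (Sum.inr i) ≠ k := by
      rintro rfl
      simp [dunklShift] at h
    rw [Pi.single_eq_of_ne h, Pi.single_eq_of_ne h', mul_zero, mul_zero]

lemma single_sub_count_mem (m : Multiset (Fin n)) (hm : ∀ i, m.count i ≤ 2 * n) :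
    Pi.single (fun i => 2 * (n : ℤ) - m.count i) 1 ∈
      Submodule.span ℂ (Set.range (wordVec dunklOp (cyclicVec n))) := by
  induction m using Multiset.induction_on with
  | empty => simpa using single_top_mem
  | cons i m ih =>
    have hmi : m.count i + 1 ≤ 2 * n := by simpa only [Multiset.count_cons_self] using hm i
    have hmem := apply_mem_span_range_wordVec (Sum.inr i)
      (ih fun j => (Multiset.count_le_count_cons j i m).trans (hm j))
    have hne : (lowerCoeff (2 * n - m.count i - 1) : ℂ) ≠ 0 :=
      Int.cast_ne_zero.2 (lowerCoeff_ne_zero (by omega))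
    have hk : (fun j => 2 * (n : ℤ) - m.count j) - Pi.single i 1 =
        fun j => 2 * (n : ℤ) - (i ::ₘ m).count j := by
      ext j
      by_cases hj : j = i
      · subst hj; simp [sub_sub]
      · simp [hj]
    rw [dunklOp_inr_single, Submodule.smul_mem_iff _ hne, hk] at hmem
    exact hmem

theorem pow_le_finrank_quotient_symbolIdeal_dunklOp
    [Module.Finite ℂ (MvPolynomial (Fin n ⊕ Fin n) ℂ ⧸
      symbolIdeal (commutesModulo_dunklOp (n := n)))] :
    (2 * n + 1) ^ n ≤ Module.finrank ℂ (MvPolynomial (Fin n ⊕ Fin n) ℂ ⧸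
      symbolIdeal (commutesModulo_dunklOp (n := n))) := by
  have hinj : Function.Injective
      fun (a : Fin n → Fin (2 * n + 1)) i => 2 * (n : ℤ) - (a i : ℕ) := by
    intro a b hab
    ext i
    have := congrFun hab i
    simp only at this
    omega
  have hli := (Pi.linearIndependent_single_one (Fin n → ℤ) ℂ).comp _ hinj
  have hcard := card_le_finrank_quotient_symbolIdeal commutesModulo_dunklOp hli fun a => by
    have hmem := single_sub_count_mem
      (Finsupp.equivFunOnFinite.symm fun i => (a i : ℕ)).toMultiset fun i => by
        rw [Finsupp.count_toMultiset]
        exact Nat.lt_succ_iff.1 (a i).is_lt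
    simp only [Finsupp.count_toMultiset] at hmem
    exact hmem
  simpa only [Fintype.card_pi, Fintype.card_fin, Finset.prod_const, Finset.card_univ] using hcard

end Cyclicity

/-! ### An extra element of the leading form ideal -/

section Witness

/-- The exponent of `xᵢ³ ∏_{j ≠ i} yⱼ`. -/
noncomputable def cubicExponent (n : ℕ) (i : Fin n) : Fin n ⊕ Fin n →₀ ℕ :=
  Finsupp.equivFunOnFinite.symm
    (Sum.elim (fun j => if j = i then 3 else 0) (fun j => if j = i then 0 else 1))

/-- The polynomial `∑ᵢ xᵢ³ ∏_{j ≠ i} yⱼ`; for `n = 4` it accounts for the extra dimension. -/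
noncomputable def cubicPoly (n : ℕ) : MvPolynomial (Fin n ⊕ Fin n) ℂ :=
  ∑ i, monomial (cubicExponent n i) 1

lemma isHomogeneous_cubicPoly {n : ℕ} : (cubicPoly n).IsHomogeneous (n + 2) := by
  refine IsHomogeneous.sum _ _ _ fun i _ => isHomogeneous_monomial 1 ?_
  have hcard : ∑ j, (if j = i then 0 else 1) = n - 1 := by
    simp only [Finset.sum_ite, Finset.sum_const_zero, zero_add, Finset.sum_const, smul_eq_mul,
      mul_one, Finset.filter_ne', Finset.card_erase_of_mem (Finset.mem_univ i), Finset.card_fin]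
  rw [Finsupp.degree_eq_sum, Fintype.sum_sum_type]
  simp only [cubicExponent, Finsupp.equivFunOnFinite_symm_apply_apply, Sum.elim_inl, Sum.elim_inr,
    Finset.sum_ite_eq', Finset.mem_univ, if_true, hcard]
  have := i.pos
  omega

lemma rename_cubicPoly {n : ℕ} (τ : Equiv.Perm (Fin n)) :
    rename (Sum.map τ τ) (cubicPoly n) = cubicPoly n := by
  rw [cubicPoly, map_sum, ← Equiv.sum_comp τ fun i => monomial (cubicExponent n i) (1 : ℂ)]
  refine Finset.sum_congr rfl fun i _ => ?_
  rw [rename_monomial]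
  refine congrArg (monomial · 1) (Finsupp.ext fun j => ?_)
  change (cubicExponent n i).mapDomain (Equiv.sumCongr τ τ) j = cubicExponent n (τ i) j
  rw [← Finsupp.equivMapDomain_eq_mapDomain]
  rcases j with j | j <;> simp [cubicExponent, Equiv.symm_apply_eq]

lemma exists_eq_cubicExponent {n : ℕ} {s : Fin n ⊕ Fin n →₀ ℕ} (hs : s ∈ (cubicPoly n).support) :
    ∃ i, s = cubicExponent n i := by
  classical
  rw [mem_support_iff, cubicPoly, coeff_sum] at hs
  obtain ⟨i, -, hi⟩ := Finset.exists_ne_zero_of_sum_ne_zero hs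
  rw [coeff_monomial] at hi
  exact ⟨i, (of_not_not fun h => hi (if_neg h)).symm⟩

lemma ne_two_of_injective_of_sum_eq_eight :
    ∀ m : Fin 4 → Fin 5, Function.Injective m → ∑ i, (m i : ℕ) = 8 → ∀ i, m i ≠ 2 := by
  decide +kernel

lemma sum_oddPoint_four : ∑ i, oddPoint 4 i = 16 := by decide

lemma wordVec_of_nodup_of_even {n : ℕ} {l : List (Fin n ⊕ Fin n)} (hl : (l.map varIndex).Nodup)
    {k : Fin n → ℤ} (hk : ∀ j ∈ l, Even (k (varIndex j))) :
    wordVec dunklOp (cyclicVec n) l k = cyclicVec n (k - displacement l) := by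
  induction l generalizing k with
  | nil => simp only [displacement, List.map_nil, List.sum_nil, sub_zero, wordVec_nil]
  | cons j l ih =>
    rw [List.map_cons, List.nodup_cons] at hl
    have hcoeff : dunklCoeff k j = 1 := by
      rcases j with j | j <;>
        exact if_pos (hk _ List.mem_cons_self)
    rw [wordVec_cons, dunklOp_apply, hcoeff, Int.cast_one, one_mul, displacement_cons, ← sub_sub]
    refine ih hl.2 fun a ha => ?_
    have hne : varIndex a ≠ varIndex j := fun h => hl.1 (h ▸ List.mem_map_of_mem ha)
    have hshift : dunklShift j (varIndex a) = 0 := by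
      rcases j with j | j <;> simp_all [dunklShift, varIndex]
    rw [Pi.sub_apply, hshift, sub_zero]
    exact hk a (List.mem_cons_of_mem _ ha)

/-- The point `(0, 2, 6, 8)`, whose rearrangements are the only points of `[0, 8]⁴` with distinct
even coordinates of sum `16`. -/
def evenPoint : Fin 4 → ℤ := ![0, 2, 6, 8]

lemma even_and_sum_eq_of_wordVec_ne_zero {l : List (Fin 4 ⊕ Fin 4)}
    (hodd : ∀ i, Odd (displacement l i)) (hsum : ∑ i, displacement l i = 0) {k : Fin 4 → ℤ}
    (hk : wordVec dunklOp (cyclicVec 4) l k ≠ 0) : (∀ i, Even (k i)) ∧ ∑ i, k i = 16 := by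
  obtain ⟨τ, hτ⟩ := exists_perm_of_cyclicVec_ne_zero (cyclicVec_ne_zero_of_wordVec_ne_zero hk)
  have hk' : k = oddPoint 4 ∘ τ + displacement l := by rw [← hτ, sub_add_cancel]
  refine ⟨fun i => ?_, ?_⟩
  · rw [hk', Pi.add_apply]
    exact Odd.add_odd ⟨_, rfl⟩ (hodd i)
  · simp only [hk', Pi.add_apply, Finset.sum_add_distrib, hsum, add_zero, Function.comp_apply,
      Equiv.sum_comp τ (oddPoint 4), sum_oddPoint_four]

lemma exists_perm_evenPoint {k : Fin 4 → ℤ} (hinj : Function.Injective k)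
    (heven : ∀ i, Even (k i)) (hbox : ∀ i, 0 ≤ k i ∧ k i ≤ 8) (hsum : ∑ i, k i = 16) :
    ∃ τ : Equiv.Perm (Fin 4), k = evenPoint ∘ τ := by
  have hm : ∀ i, ∃ m : Fin 5, k i = 2 * (m : ℕ) := fun i => by
    obtain ⟨m, hm⟩ := heven i
    have := hbox i
    exact ⟨⟨m.toNat, by omega⟩, by simp only; omega⟩
  choose m hm using hm
  have hm_inj : Function.Injective m := fun i j hij => hinj (by rw [hm, hm, hij])
  have hm_sum : ∑ i, (m i : ℕ) = 8 := by
    simp only [hm, ← Finset.mul_sum] at hsum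
    norm_cast at hsum
    omega
  refine exists_perm_of_forall_mem_range hinj fun i => ?_
  have hne := ne_two_of_injective_of_sum_eq_eight m hm_inj hm_sum i
  rw [hm]
  generalize m i = a at hne ⊢
  revert a
  decide

lemma exists_perm_of_antisymmetrize_even {f : (Fin 4 → ℤ) → ℂ}
    (hf : ∀ k, f k ≠ 0 → ∃ l, (∀ i, Odd (displacement l i)) ∧ ∑ i, displacement l i = 0 ∧
      wordVec dunklOp (cyclicVec 4) l k ≠ 0)
    {k : Fin 4 → ℤ} (hk : antisymmetrize f k ≠ 0) :
    ∃ τ : Equiv.Perm (Fin 4), k = evenPoint ∘ τ := by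
  obtain ⟨τ, hτ⟩ := exists_perm_ne_zero_of_antisymmetrize_ne_zero hk
  obtain ⟨l, hodd, hsum, hl⟩ := hf _ hτ
  obtain ⟨heven, hk_sum⟩ := even_and_sum_eq_of_wordVec_ne_zero hodd hsum hl
  obtain ⟨π, hπ⟩ := exists_perm_evenPoint
    ((injective_of_antisymmetrize_ne_zero hk).comp τ.injective) heven
    (mem_box_of_wordVec_ne_zero hl) hk_sum
  exact ⟨τ.symm.trans π, by rw [Equiv.coe_trans, ← Function.comp_assoc, ← hπ, Function.comp_assoc,
    Equiv.self_comp_symm, Function.comp_id]⟩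

/-- The word `y₀ y₁ x₂ x₃`: it is shorter than those of `cubicPoly 4`, and like them it moves odd
indices to even ones without changing their sum. -/
def mixedWord : List (Fin 4 ⊕ Fin 4) := [Sum.inr 0, Sum.inr 1, Sum.inl 2, Sum.inl 3]

lemma displacement_mixedWord : displacement mixedWord = ![-1, -1, 1, 1] := by decide

lemma antisymmetrize_mixedWord_ne_zero :
    antisymmetrize (wordVec dunklOp (cyclicVec 4) mixedWord) evenPoint ≠ 0 := by
  have hint : ∑ τ : Equiv.Perm (Fin 4),
      (τ.sign : ℤ) * oddVandermonde 4 (evenPoint ∘ τ - ![-1, -1, 1, 1]) ≠ 0 := by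
    simp only [oddVandermonde, Matrix.det_vandermonde]
    decide +kernel
  have hword : ∀ τ : Equiv.Perm (Fin 4), wordVec dunklOp (cyclicVec 4) mixedWord (evenPoint ∘ τ) =
      oddVandermonde 4 (evenPoint ∘ τ - ![-1, -1, 1, 1]) := fun τ => by
    rw [wordVec_of_nodup_of_even (by decide) fun j _ => ?_, displacement_mixedWord, cyclicVec]
    exact (by decide : ∀ i, Even (evenPoint i)) _
  rw [antisymmetrize_apply]
  simp only [hword]
  exact_mod_cast hint

lemma exists_word_of_orderedEval_cubicPoly_ne_zero {k : Fin 4 → ℤ}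
    (hk : orderedEval dunklOp (cyclicVec 4) (cubicPoly 4) k ≠ 0) :
    ∃ l, (∀ i, Odd (displacement l i)) ∧ ∑ i, displacement l i = 0 ∧
      wordVec dunklOp (cyclicVec 4) l k ≠ 0 := by
  obtain ⟨s, hs, hsk⟩ := exists_mem_support_of_orderedEval_ne_zero hk
  obtain ⟨i, rfl⟩ := exists_eq_cubicExponent hs
  have hdisp : displacement (cubicExponent 4 i).toMultiset.toList =
      fun j => if j = i then 3 else -1 := by
    ext j
    rw [displacement_apply, Multiset.coe_toList, Finsupp.count_toMultiset,
      Finsupp.count_toMultiset]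
    by_cases hj : j = i <;> simp [cubicExponent, hj]
  refine ⟨_, ?_, ?_, hsk⟩ <;>
  · rw [hdisp]
    clear hs hsk hdisp
    decide +revert

theorem cubicPoly_mem_symbolIdeal :
    cubicPoly 4 ∈ symbolIdeal (commutesModulo_dunklOp (n := 4)) := by
  rw [mem_symbolIdeal_iff_of_isHomogeneous _ isHomogeneous_cubicPoly]
  refine orderedEval_mem_of_antisymmetrize_support isHomogeneous_cubicPoly rename_cubicPoly
    (l := mixedWord) (by decide)
    (fun k => exists_perm_of_antisymmetrize_even fun k =>
      exists_word_of_orderedEval_cubicPoly_ne_zero)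
    (fun k => exists_perm_of_antisymmetrize_even fun k hk => ⟨mixedWord, ?_, ?_, hk⟩)
    antisymmetrize_mixedWord_ne_zero <;>
  · rw [displacement_mixedWord]
    decide

end Witness

/-! ### A diagonal harmonic of degree six -/

section Derivatives

/-- The partial derivatives, as linear endomorphisms: the operators of an inverse system. -/
noncomputable def pderivEnd {σ K : Type*} [CommRing K] (j : σ) : Module.End K (MvPolynomial σ K) :=
  (pderiv j).toLinearMap

lemma pderivEnd_apply {σ K : Type*} [CommRing K] (j : σ) (q : MvPolynomial σ K) :
    pderivEnd j q = pderiv j q := rfl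

lemma exists_coeff_wordVec_pderivEnd {σ K : Type*} [DecidableEq σ] [CommRing K]
    (q : MvPolynomial σ K) (l : List σ) (t : σ →₀ ℕ) :
    ∃ c : ℕ, 0 < c ∧
      coeff t (wordVec pderivEnd q l) = c * coeff (t + Multiset.toFinsupp (l : Multiset σ)) q := by
  induction l generalizing t with
  | nil => exact ⟨1, one_pos, by simp [wordVec_nil]⟩
  | cons j l ih =>
    obtain ⟨c, hc, hcoeff⟩ := ih (t + Finsupp.single j 1)
    refine ⟨c * (t j + 1), by positivity, ?_⟩
    rw [wordVec_cons, pderivEnd_apply, coeff_pderiv, hcoeff, ← Multiset.cons_coe,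
      ← Multiset.singleton_add, map_add, Multiset.toFinsupp_singleton, ← add_assoc]
    push_cast
    ring

lemma pderiv_comm {σ K : Type*} [CommRing K] (i j : σ) (q : MvPolynomial σ K) :
    pderiv i (pderiv j q) = pderiv j (pderiv i q) := by
  classical
  let D (k : σ) : Derivation K (MvPolynomial σ K) (MvPolynomial σ K) := pderiv k
  have hbracket : ⁅D i, D j⁆ = 0 := by
    refine derivation_ext fun m => ?_
    simp only [D, Derivation.commutator_apply, pderiv_X, Pi.single_apply, apply_ite (pderiv _),
      Derivation.map_one_eq_zero, map_zero, ite_self, sub_zero, Derivation.zero_apply]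
  rw [← sub_eq_zero]
  exact (Derivation.commutator_apply ..).symm.trans (DFunLike.congr_fun hbracket q)

lemma commutesModulo_pderivEnd {σ K : Type*} [CommRing K] (q : MvPolynomial σ K) :
    CommutesModulo pderivEnd q ⊥ where
  apply_mem j d u hu := by
    rw [Pi.bot_apply, Submodule.mem_bot] at hu
    rw [hu, map_zero]
    exact zero_mem _
  commutator_mem i j l := by
    rw [pderivEnd_apply, pderivEnd_apply, pderivEnd_apply, pderivEnd_apply, pderiv_comm, sub_self]
    exact zero_mem _

end Derivatives

section Harmonic

variable {n : ℕ}

/-- The product `∏_{j ≠ i} (xᵢ yⱼ - xⱼ yᵢ)`, a summand of `harmonicPoly`. -/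
noncomputable def minorProd (i : Fin n) : MvPolynomial (Fin n ⊕ Fin n) ℂ :=
  ∏ j ∈ Finset.univ.erase i, (X (Sum.inl i) * X (Sum.inr j) - X (Sum.inl j) * X (Sum.inr i))

/-- The polynomial `∑ᵢ ∏_{j ≠ i} (xᵢ yⱼ - xⱼ yᵢ)`; for `n = 4` it is a diagonal harmonic, killed by
every `W`-invariant differential operator of positive order, which pairs nontrivially with
`cubicPoly 4`. -/
noncomputable def harmonicPoly (n : ℕ) : MvPolynomial (Fin n ⊕ Fin n) ℂ := ∑ i : Fin n, minorProd i

lemma rename_harmonicPoly (τ : Equiv.Perm (Fin n)) :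
    rename (Sum.map τ τ) (harmonicPoly n) = harmonicPoly n := by
  rw [harmonicPoly, map_sum, ← Equiv.sum_comp τ minorProd]
  refine Finset.sum_congr rfl fun i _ => ?_
  rw [minorProd, minorProd, map_prod]
  refine Finset.prod_equiv τ (by simp) fun j _ => ?_
  simp only [map_sub, map_mul, rename_X, Sum.map_inl, Sum.map_inr]

lemma add_eq_of_coeff_minorProd_ne_zero {i : Fin n} {s : Fin n ⊕ Fin n →₀ ℕ}
    (hs : coeff s (minorProd i) ≠ 0) (k : Fin n) :
    s (Sum.inl k) + s (Sum.inr k) = if k = i then n - 1 else 1 := by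
  let w : Fin n ⊕ Fin n → ℕ := fun j => if varIndex j = k then 1 else 0
  have hX (a b : Fin n) : IsWeightedHomogeneous w
      (X (Sum.inl a) * X (Sum.inr b) : MvPolynomial (Fin n ⊕ Fin n) ℂ)
      ((if a = k then 1 else 0) + if b = k then 1 else 0) :=
    (isWeightedHomogeneous_X ℂ w _).mul (isWeightedHomogeneous_X ℂ w _)
  have hprod := IsWeightedHomogeneous.prod (Finset.univ.erase i) _ _ fun j _ =>
    (hX i j).sub (add_comm (ite (i = k) 1 0) (ite (j = k) 1 0) ▸ hX j i)
  have hs_weight : Finsupp.weight w s = s (Sum.inl k) + s (Sum.inr k) := by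
    rw [Finsupp.weight_apply, Finsupp.sum_fintype _ _ (by simp), Fintype.sum_sum_type]
    simp only [w, varIndex, Sum.elim_inl, Sum.elim_inr, id_eq, smul_eq_mul]
    rw [Finset.sum_eq_single k, Finset.sum_eq_single k] <;> simp +contextual
  rw [← hs_weight, hprod hs]
  rcases eq_or_ne k i with rfl | hk
  · simp [Finset.sum_add_distrib]
  · simp [hk, hk.symm]

lemma exists_of_coeff_harmonicPoly_ne_zero {s : Fin n ⊕ Fin n →₀ ℕ}
    (hs : coeff s (harmonicPoly n) ≠ 0) :
    ∃ i, ∀ k, s (Sum.inl k) + s (Sum.inr k) = if k = i then n - 1 else 1 := by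
  rw [harmonicPoly, coeff_sum] at hs
  obtain ⟨i, -, hi⟩ := Finset.exists_ne_zero_of_sum_ne_zero hs
  exact ⟨i, add_eq_of_coeff_minorProd_ne_zero hi⟩

lemma monomial_cubicExponent (i : Fin n) : (monomial (cubicExponent n i) 1 :
    MvPolynomial (Fin n ⊕ Fin n) ℂ) =
      X (Sum.inl i) ^ 3 * ∏ j ∈ Finset.univ.erase i, X (Sum.inr j) := by
  rw [monomial_eq, Finsupp.prod_fintype _ _ (by simp), Fintype.prod_sum_type, C_1, one_mul,
    ← Finset.mul_prod_erase Finset.univ (fun j => X (Sum.inr j) ^ _) (Finset.mem_univ i),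
    Fintype.prod_eq_single i fun j hj => by simp [cubicExponent, hj]]
  simp only [cubicExponent, Finsupp.equivFunOnFinite_symm_apply_apply, Sum.elim_inl, Sum.elim_inr,
    if_true, pow_zero, one_mul]
  refine congrArg _ (Finset.prod_congr rfl fun j hj => ?_)
  rw [if_neg (Finset.ne_of_mem_erase hj), pow_one]

lemma coeff_cubicExponent_minorProd (i k : Fin 4) :
    coeff (cubicExponent 4 i) (minorProd k) = if k = i then 1 else 0 := by
  split_ifs with hk
  · subst hk
    have hmod : minorProd k - monomial (cubicExponent 4 k) 1 ∈
        Ideal.span {(X (Sum.inr k) : MvPolynomial (Fin 4 ⊕ Fin 4) ℂ)} := by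
      have hcard : (Finset.univ.erase k).card = 3 := by
        rw [Finset.card_erase_of_mem (Finset.mem_univ k)]
        rfl
      have hX : Ideal.Quotient.mk (Ideal.span {(X (Sum.inr k) : MvPolynomial (Fin 4 ⊕ Fin 4) ℂ)})
          (X (Sum.inr k)) = 0 :=
        Ideal.Quotient.eq_zero_iff_mem.2 (Ideal.mem_span_singleton_self _)
      rw [← Ideal.Quotient.eq, monomial_cubicExponent, minorProd, map_prod]
      simp only [map_sub, map_mul, hX, mul_zero, sub_zero, Finset.prod_mul_distrib,
        Finset.prod_const, hcard, map_pow, map_prod]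
    obtain ⟨r, hr⟩ := Ideal.mem_span_singleton.1 hmod
    rw [sub_eq_iff_eq_add.1 hr, coeff_add, coeff_monomial, if_pos rfl, coeff_X_mul', if_neg,
      zero_add]
    simp [cubicExponent]
  · by_contra hne
    have := add_eq_of_coeff_minorProd_ne_zero hne i
    simp [cubicExponent, Ne.symm hk] at this

/-- The cyclic rotation of the indices of the variables by `c`. Averaging over these four
permutations, instead of all of them, is enough to control the derivatives of `harmonicPoly 4`. -/
def rotate (c : Fin 4) : Fin 4 ⊕ Fin 4 → Fin 4 ⊕ Fin 4 :=
  Sum.map (Equiv.addRight c) (Equiv.addRight c)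

lemma sum_pderiv_pderiv_harmonicPoly {a b : Fin 4 ⊕ Fin 4} (h : varIndex a = varIndex b) :
    ∑ c, pderiv (rotate c a) (pderiv (rotate c b) (harmonicPoly 4)) = 0 := by
  have h0 : Finset.univ.erase (0 : Fin 4) = {1, 2, 3} := by decide
  have h1 : Finset.univ.erase (1 : Fin 4) = {0, 2, 3} := by decide
  have h2 : Finset.univ.erase (2 : Fin 4) = {0, 1, 3} := by decide
  have h3 : Finset.univ.erase (3 : Fin 4) = {0, 1, 2} := by decide
  rcases a with i | i <;> rcases b with j | j <;> obtain rfl : i = j := h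
  all_goals
    rw [← Equiv.sum_comp (Equiv.subRight i)]
    simp only [rotate, harmonicPoly, minorProd, Fin.sum_univ_four, h0, h1, h2, h3,
      Equiv.subRight_apply, Equiv.coe_addRight, Sum.map_inl, Sum.map_inr, add_sub_cancel,
      Finset.mem_insert, Finset.mem_singleton, Finset.prod_insert, Finset.prod_singleton,
      Fin.reduceEq, zero_ne_one, one_ne_zero, or_self, not_false_eq_true, map_add, map_sub,
      map_zero, Derivation.leibniz, Derivation.map_one_eq_zero, pderiv_X, Pi.single_apply,
      Sum.inl.injEq, Sum.inr.injEq, reduceCtorEq, if_true, if_false, smul_eq_mul]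
    ring

lemma eq_pair_of_coeff_harmonicPoly_ne_zero {d : ℕ} {s t : Fin 4 ⊕ Fin 4 →₀ ℕ}
    (hdeg : s.toMultiset.card = d + 1) (heven : ∀ i, Even (s (Sum.inl i) + s (Sum.inr i)))
    (hcoeff : coeff (t + s) (harmonicPoly 4) ≠ 0) :
    ∃ a b, s.toMultiset.toList = [a, b] ∧ varIndex a = varIndex b := by
  obtain ⟨i, hi⟩ := exists_of_coeff_harmonicPoly_ne_zero hcoeff
  have hle : ∀ k, s (Sum.inl k) + s (Sum.inr k) ≤ if k = i then 2 else 0 := fun k => by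
    obtain ⟨m, hm⟩ := heven k
    have := hi k
    simp only [Finsupp.add_apply] at this
    split_ifs at this ⊢ <;> omega
  have hcard : s.toMultiset.card = s (Sum.inl i) + s (Sum.inr i) := by
    rw [Finsupp.card_toMultiset, Finsupp.sum_fintype _ _ (by simp), Fintype.sum_sum_type,
      ← Finset.sum_add_distrib]
    exact Fintype.sum_eq_single i fun k hk => by simpa [hk] using hle k
  have hlen : s.toMultiset.toList.length = 2 := by
    have := hle i
    obtain ⟨m, hm⟩ := heven i
    rw [if_pos rfl] at this
    rw [Multiset.length_toList]
    omega
  have hindex : ∀ a ∈ s.toMultiset.toList, varIndex a = i := fun a ha => by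
    rw [Multiset.mem_toList, Finsupp.mem_toMultiset, Finsupp.mem_support_iff] at ha
    by_contra hne
    have := hle (varIndex a)
    rw [if_neg hne] at this
    rcases a with a | a <;> simp_all [varIndex]
  obtain ⟨a, b, hab⟩ := List.length_eq_two.1 hlen
  rw [hab] at hindex
  exact ⟨a, b, hab, by rw [hindex a (by simp), hindex b (by simp)]⟩

theorem diagIdeal_le_symbolIdeal_pderivEnd :
    diagIdeal 4 ≤ symbolIdeal (commutesModulo_pderivEnd (harmonicPoly 4)) := by
  have hequiv (c : Fin 4) (j : Fin 4 ⊕ Fin 4) (q : MvPolynomial (Fin 4 ⊕ Fin 4) ℂ) :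
      (rename (rotate c)).toLinearMap (pderivEnd j q) =
        pderivEnd (rotate c j) ((rename (rotate c)).toLinearMap q) :=
    (pderiv_rename (Sum.map_injective.2
      ⟨(Equiv.addRight c).injective, (Equiv.addRight c).injective⟩) j q).symm
  refine diagIdeal_le_symbolIdeal_of_forall_invariant _ fun d p hp hinv => ?_
  refine (commutesModulo_pderivEnd _).orderedEval_mem_of_sum_mem hequiv
    (fun c => rename_harmonicPoly (Equiv.addRight c)) hp
    (fun c => by rw [rotate, ← bAct_one_eq_rename, hinv]) ?_
  rw [← LinearMap.sum_apply]
  refine map_mem_of_forall_mem_support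
    (L := ∑ c, (rename (rotate c)).toLinearMap ∘ₗ orderedEval pderivEnd (harmonicPoly 4))
    fun s hs => ?_
  simp only [LinearMap.sum_apply, LinearMap.comp_apply, AlgHom.toLinearMap_apply,
    orderedEval_monomial_one, Pi.bot_apply, Submodule.mem_bot]
  by_cases hzero : wordVec pderivEnd (harmonicPoly 4) s.toMultiset.toList = 0
  · simp only [hzero, map_zero, Finset.sum_const_zero]
  obtain ⟨t, ht⟩ := ne_zero_iff.1 hzero
  obtain ⟨c, -, hcoeff⟩ := exists_coeff_wordVec_pderivEnd (harmonicPoly 4) s.toMultiset.toList t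
  rw [hcoeff, Multiset.coe_toList, Finsupp.toMultiset_toFinsupp] at ht
  obtain ⟨a, b, hab, hindex⟩ := eq_pair_of_coeff_harmonicPoly_ne_zero
    (card_toMultiset_of_mem_support hp hs) (even_of_forall_bAct_eq hinv hs)
    (right_ne_zero_of_mul ht)
  rw [hab, ← sum_pderiv_pderiv_harmonicPoly hindex]
  refine Finset.sum_congr rfl fun c _ => ?_
  exact map_wordVec_of_equivariant (hequiv c) (rename_harmonicPoly _) [a, b]

theorem cubicPoly_notMem_symbolIdeal_pderivEnd :
    cubicPoly 4 ∉ symbolIdeal (commutesModulo_pderivEnd (harmonicPoly 4)) := by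
  rw [mem_symbolIdeal_iff_of_isHomogeneous _ isHomogeneous_cubicPoly, Pi.bot_apply,
    Submodule.mem_bot]
  have hcoeff (i : Fin 4) : ∃ c : ℕ, 0 < c ∧
      coeff 0 (orderedEval pderivEnd (harmonicPoly 4) (monomial (cubicExponent 4 i) 1)) = c := by
    obtain ⟨c, hc, hcoeff⟩ := exists_coeff_wordVec_pderivEnd (harmonicPoly 4)
      (cubicExponent 4 i).toMultiset.toList 0
    refine ⟨c, hc, ?_⟩
    rw [orderedEval_monomial_one, hcoeff, Multiset.coe_toList, Finsupp.toMultiset_toFinsupp,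
      zero_add, harmonicPoly, coeff_sum]
    simp only [coeff_cubicExponent_minorProd, Finset.sum_ite_eq', Finset.mem_univ, if_true, mul_one]
  choose c hc hcoeff using hcoeff
  intro hzero
  have hsum := congrArg (coeff 0) hzero
  rw [cubicPoly, map_sum, coeff_sum, coeff_zero, Finset.sum_congr rfl fun i _ => hcoeff i] at hsum
  have hpos : 0 < ∑ i, c i := Finset.sum_pos (fun i _ => hc i) Finset.univ_nonempty
  exact hpos.ne' (by exact_mod_cast hsum)

end Harmonic

/-! ### Finiteness of the coinvariant ring -/

section Finite

variable {n : ℕ}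

lemma sub_C_constantCoeff_mem_diagIdeal {f : MvPolynomial (Fin n ⊕ Fin n) ℂ}
    (hf : ∀ ε τ, bAct n ε τ f = f) : f - C (constantCoeff f) ∈ diagIdeal n :=
  Ideal.subset_span ⟨fun ε τ => by rw [map_sub, hf, algHom_C, algebraMap_eq], by
    rw [map_sub, constantCoeff_C, sub_self]⟩

/-- The polynomial `∏ⱼ (T - zⱼ²)` in an auxiliary variable `T`, where `zⱼ` is the variable `u j`. It
has invariant coefficients, whence the relation `zⱼ²ⁿ = 0` in the coinvariant ring. -/
noncomputable def squareRootsPoly (u : Fin n → Fin n ⊕ Fin n) :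
    Polynomial (MvPolynomial (Fin n ⊕ Fin n) ℂ) :=
  ∏ j, (Polynomial.X - Polynomial.C (X (u j) ^ 2))

lemma map_bAct_squareRootsPoly {u : Fin n → Fin n ⊕ Fin n}
    (hu : ∀ ε τ j, bAct n ε τ (X (u j)) = ((ε j : ℤ) : ℂ) • X (u (τ j)))
    (ε : Fin n → ℤˣ) (τ : Equiv.Perm (Fin n)) :
    (squareRootsPoly u).map (bAct n ε τ).toRingHom = squareRootsPoly u := by
  have hsq (j : Fin n) : bAct n ε τ (X (u j) ^ 2) = X (u (τ j)) ^ 2 := by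
    rw [map_pow, hu, smul_pow, ← Int.cast_pow, ← Units.val_pow_eq_pow_val, Int.units_sq,
      Units.val_one, Int.cast_one, one_smul]
  simp only [squareRootsPoly, Polynomial.map_prod, Polynomial.map_sub, Polynomial.map_X,
    Polynomial.map_C, AlgHom.toRingHom_eq_coe, RingHom.coe_coe, hsq]
  exact Equiv.prod_comp τ fun j => Polynomial.X - Polynomial.C (X (u j) ^ 2)

lemma map_constantCoeff_squareRootsPoly (u : Fin n → Fin n ⊕ Fin n) :
    (squareRootsPoly u).map constantCoeff = Polynomial.X ^ n := by
  simp [squareRootsPoly, Polynomial.map_prod]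

lemma X_pow_mem_diagIdeal {u : Fin n → Fin n ⊕ Fin n}
    (hu : ∀ ε τ j, bAct n ε τ (X (u j)) = ((ε j : ℤ) : ℂ) • X (u (τ j))) (i : Fin n) :
    X (u i) ^ (2 * n) ∈ diagIdeal n := by
  let π := Ideal.Quotient.mk (diagIdeal n)
  have hmap : (squareRootsPoly u).map π = Polynomial.X ^ n := by
    have hcoeff : (squareRootsPoly u).map π =
        ((squareRootsPoly u).map constantCoeff).map (π.comp C) := by
      rw [Polynomial.map_map]
      ext m
      rw [Polynomial.coeff_map, Polynomial.coeff_map, RingHom.comp_apply, RingHom.comp_apply]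
      refine Ideal.Quotient.eq.2 (sub_C_constantCoeff_mem_diagIdeal fun ε τ => ?_)
      exact (Polynomial.coeff_map _ _).symm.trans
        (congrArg (Polynomial.coeff · m) (map_bAct_squareRootsPoly hu ε τ))
    rw [hcoeff, map_constantCoeff_squareRootsPoly, Polynomial.map_pow, Polynomial.map_X]
  have heval : (squareRootsPoly u).eval (X (u i) ^ 2) = 0 := by
    rw [squareRootsPoly, Polynomial.eval_prod]
    exact Finset.prod_eq_zero (Finset.mem_univ i) (by simp)
  have hπ := Polynomial.eval_map_apply π (X (u i) ^ 2) (p := squareRootsPoly u)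
  rw [hmap, heval, map_zero, Polynomial.eval_pow, Polynomial.eval_X, ← map_pow, ← pow_mul] at hπ
  exact Ideal.Quotient.eq_zero_iff_mem.1 hπ

lemma finite_quotient_of_forall_X_pow_mem {σ K : Type*} [Finite σ] [Field K]
    {I : Ideal (MvPolynomial σ K)} {m : ℕ} (hm : m ≠ 0)
    (hI : ∀ j, X j ^ m ∈ I) : Module.Finite K (MvPolynomial σ K ⧸ I) := by
  have hintegral : Algebra.IsIntegral K (MvPolynomial σ K ⧸ I) := by
    refine ⟨fun x => ?_⟩
    obtain ⟨f, rfl⟩ := Ideal.Quotient.mk_surjective x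
    induction f using MvPolynomial.induction_on with
    | C a => exact isIntegral_algebraMap (R := K) (A := MvPolynomial σ K ⧸ I) (x := a)
    | add p q hp hq => simpa only [map_add] using hp.add hq
    | mul_X p j hp =>
      rw [map_mul]
      refine hp.mul (IsIntegral.of_pow hm.bot_lt ?_)
      rw [← map_pow, Ideal.Quotient.eq_zero_iff_mem.2 (hI j)]
      exact isIntegral_zero
  exact Algebra.IsIntegral.finite

instance finite_quotient_diagIdeal (n : ℕ) :
    Module.Finite ℂ (MvPolynomial (Fin n ⊕ Fin n) ℂ ⧸ diagIdeal n) := by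
  have hmem : ∀ j : Fin n ⊕ Fin n, X j ^ (2 * n + 1) ∈ diagIdeal n := by
    rintro (i | i) <;> refine Ideal.mul_mem_right _ _ ?_
    · exact X_pow_mem_diagIdeal (u := Sum.inl) (fun ε τ j => by simp [bAct]) i
    · exact X_pow_mem_diagIdeal (u := Sum.inr) (fun ε τ j => by simp [bAct]) i
  exact finite_quotient_of_forall_X_pow_mem (Nat.succ_ne_zero _) hmem

end Finite

/-- For `n = 4`, `dim_ℂ R_W ≥ 9⁴ + 1` for the diagonal coinvariant ring of `W(B₄)`. -/
theorem dim_diag_coinv_B4 :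
    9 ^ 4 + 1 ≤ Module.finrank ℂ (MvPolynomial (Fin 4 ⊕ Fin 4) ℂ ⧸ diagIdeal 4) := by
  have hle := diagIdeal_le_symbolIdeal_dunklOp (n := 4)
  have hnotMem : cubicPoly 4 ∉ diagIdeal 4 := fun h =>
    cubicPoly_notMem_symbolIdeal_pderivEnd (diagIdeal_le_symbolIdeal_pderivEnd h)
  have hlt : diagIdeal 4 < symbolIdeal (commutesModulo_dunklOp (n := 4)) :=
    SetLike.lt_iff_le_and_exists.2 ⟨hle, cubicPoly 4, cubicPoly_mem_symbolIdeal, hnotMem⟩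
  have : Module.Finite ℂ
      (MvPolynomial (Fin 4 ⊕ Fin 4) ℂ ⧸ symbolIdeal (commutesModulo_dunklOp (n := 4))) :=
    Module.Finite.of_surjective (Ideal.Quotient.factorₐ ℂ hle).toLinearMap
      (Ideal.Quotient.factor_surjective hle)
  calc 9 ^ 4 + 1 ≤ Module.finrank ℂ (MvPolynomial (Fin 4 ⊕ Fin 4) ℂ ⧸
        symbolIdeal (commutesModulo_dunklOp (n := 4))) + 1 :=
      Nat.succ_le_succ (pow_le_finrank_quotient_symbolIdeal_dunklOp (n := 4))
    _ ≤ Module.finrank ℂ (MvPolynomial (Fin 4 ⊕ Fin 4) ℂ ⧸ diagIdeal 4) :=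
      Nat.succ_le_of_lt (finrank_quotient_lt hlt)
end
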